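/- arXiv:0902.4589 — 3 statements merged into one kernel-verified Lean document; each statement's English description precedes it below -/
import Mathlib

section
/- Let m, n be positive integers with 3 ≤ n ≤ m, let K ∈ P(m,n), and let A be a K-primitive matrix. Then γ(A) ≤ (n−1)(m−1) + 1. -/
open Matrix Set Real

noncomputable section

/-- A proper cone in `ℝ^n`: a closed convex cone that is pointed and full. -/
def IsProperCone {n : ℕ} (K : Set (Fin n → ℝ)) : Prop :=
  IsClosed K ∧ (∀ x ∈ K, ∀ y ∈ K, x + y ∈ K) ∧
    (∀ (c : ℝ), 0 ≤ c → ∀ x ∈ K, c • x ∈ K) ∧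
    K ∩ (-K) = {0} ∧ (interior K).Nonempty

/-- The positive hull (cone generated by) finitely many vectors. -/
def ConeGen {n m : ℕ} (y : Fin m → Fin n → ℝ) : Set (Fin n → ℝ) :=
  {x | ∃ c : Fin m → ℝ, (∀ j, 0 ≤ c j) ∧ x = ∑ j, c j • y j}

/-- A polyhedral cone: a proper cone that is the positive hull of finitely many vectors. -/
def IsPolyhedralCone {n : ℕ} (K : Set (Fin n → ℝ)) : Prop :=
  IsProperCone K ∧ ∃ (m : ℕ) (y : Fin m → Fin n → ℝ), K = ConeGen y

/-- `A` is `K`-nonnegative: `A K ⊆ K`. -/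
def KNonneg {n : ℕ} (K : Set (Fin n → ℝ)) (A : Matrix (Fin n) (Fin n) ℝ) : Prop :=
  ∀ x ∈ K, A.mulVec x ∈ K

/-- `A` is `K`-positive: `A` maps `K \ {0}` into the interior of `K`. -/
def KPositive {n : ℕ} (K : Set (Fin n → ℝ)) (A : Matrix (Fin n) (Fin n) ℝ) : Prop :=
  ∀ x ∈ K, x ≠ 0 → A.mulVec x ∈ interior K

/-- `A` is `K`-primitive: `A` is `K`-nonnegative and some power of `A` is `K`-positive. -/
def KPrimitive {n : ℕ} (K : Set (Fin n → ℝ)) (A : Matrix (Fin n) (Fin n) ℝ) : Prop :=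
  KNonneg K A ∧ ∃ k : ℕ, 0 < k ∧ KPositive K (A ^ k)

/-- The exponent `γ(A)` of a `K`-primitive matrix: the least `k ≥ 1` with `A^k` `K`-positive. -/
def expnt {n : ℕ} (K : Set (Fin n → ℝ)) (A : Matrix (Fin n) (Fin n) ℝ) : ℕ :=
  sInf {k : ℕ | 0 < k ∧ KPositive K (A ^ k)}

/-- `x` is an extreme vector of `K`. -/
def IsExtremeVec {n : ℕ} (K : Set (Fin n → ℝ)) (x : Fin n → ℝ) : Prop :=
  x ∈ K ∧ x ≠ 0 ∧ ∀ y ∈ K, ∀ z ∈ K, x = y + z →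
    (∃ a : ℝ, 0 ≤ a ∧ y = a • x) ∧ (∃ b : ℝ, 0 ≤ b ∧ z = b • x)

/-- The set of extreme rays of `K`. -/
def ExtremeRays {n : ℕ} (K : Set (Fin n → ℝ)) : Set (Set (Fin n → ℝ)) :=
  {R | ∃ x, IsExtremeVec K x ∧ R = {y | ∃ c : ℝ, 0 ≤ c ∧ y = c • x}}

/-- `K ∈ P(m,n)`: an `n`-dimensional polyhedral cone in `ℝ^n` with exactly `m` extreme rays.
(A proper cone in `ℝ^n` has nonempty interior, hence is automatically `n`-dimensional.) -/
def MemP {n : ℕ} (m : ℕ) (K : Set (Fin n → ℝ)) : Prop :=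
  IsPolyhedralCone K ∧ (ExtremeRays K).ncard = m

/-- A face of a cone `K`. -/
def IsFace {n : ℕ} (K F : Set (Fin n → ℝ)) : Prop :=
  0 ∈ F ∧ F ⊆ K ∧ (∀ x ∈ F, ∀ y ∈ F, x + y ∈ F) ∧
    (∀ (c : ℝ), 0 ≤ c → ∀ x ∈ F, c • x ∈ F) ∧
    ∀ x ∈ F, ∀ y ∈ K, x - y ∈ K → y ∈ F

/-- `A` is `K`-irreducible: `A` is `K`-nonnegative and leaves invariant no nontrivial face. -/
def KIrreducible {n : ℕ} (K : Set (Fin n → ℝ)) (A : Matrix (Fin n) (Fin n) ℝ) : Prop :=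
  KNonneg K A ∧ ∀ F : Set (Fin n → ℝ), IsFace K F → (∀ x ∈ F, A.mulVec x ∈ F) →
    F = ({0} : Set (Fin n → ℝ)) ∨ F = K

/-! Say that `x` dominates `y` if `y ≤ e x` for some `e ≥ 0` in the order of the cone. Each image
`f v` of a generator dominates some generator `g v`. Unless every nonzero vector of the cone is
interior, the choice can be made so that the self-map `g` of the `m` generators is not injective.
Hence from any generator `g` reaches, after `t` steps, a cycle of length `s` with `s ≤ m - 1` and
`t + s ≤ m`. On that cycle sits a generator `x` dominated by `f ^ s x`; then the spans of the faces
generated by `x, f ^ s x, f ^ (2 * s) x, …` grow strictly until an interior vector is reached, which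
takes at most `n - 1` steps in dimension `n`. So `f ^ (s * (n - 1) + t)` maps that first generator
into the interior, and `s * (n - 1) + t ≤ (n - 1) * (m - 1) + 1`. -/

section Combinatorics

variable {V : Type*}

theorem exists_not_injective_selector [Finite V] {R : V → V → Prop} (total : ∀ v, ∃ w, R v w)
    {v w w' : V} (hne : w ≠ w') (hw : R v w) (hw' : R v w') :
    ∃ g : V → V, ¬ Function.Injective g ∧ ∀ u, R u (g u) := by
  classical
  choose g hg using total
  have hupdate : ∀ x, R v x → ∀ u, R u (Function.update g v x u) := by
    intro x hx u
    rcases eq_or_ne u v with rfl | huv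
    · simpa only [Function.update_self] using hx
    · simpa only [Function.update_of_ne huv] using hg u
  by_contra! hinj
  have hinj_of : ∀ x, R v x → Function.Injective (Function.update g v x) := fun x hx ↦ by
    by_contra hni
    obtain ⟨u, hu⟩ := hinj _ hni
    exact hu (hupdate x hx u)
  obtain ⟨u, hu⟩ := Finite.surjective_of_injective (hinj_of w hw) w'
  have huv : u ≠ v := by
    rintro rfl
    exact hne (by simpa only [Function.update_self] using hu)
  refine huv (hinj_of w' hw' ?_)
  rwa [Function.update_self, Function.update_of_ne huv, ← Function.update_of_ne huv w g]

/- Pigeonhole is applied to the iterates `h^[1] j, …, h^[card V] j`, which all lie in the range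
of `h`: omitting `j` itself is what makes the period smaller than `card V`. -/
theorem exists_isPeriodicPt_iterate_of_not_injective [Fintype V] {h : V → V}
    (hh : ¬ Function.Injective h) (j : V) :
    ∃ t s : ℕ, 0 < s ∧ s < Fintype.card V ∧ t + s ≤ Fintype.card V ∧
      Function.IsPeriodicPt h s (h^[t] j) := by
  classical
  have hcard : (Finset.univ.image h).card < (Finset.range (Fintype.card V)).card := by
    rw [Finset.card_range]
    refine lt_of_le_of_ne Finset.card_image_le fun heq ↦ hh ?_
    simpa only [Finset.coe_univ, Set.injOn_univ] using Finset.card_image_iff.1 heq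
  have hmaps : ∀ i ∈ Finset.range (Fintype.card V), h^[i + 1] j ∈ Finset.univ.image h :=
    fun i _ ↦ by simp [Function.iterate_succ_apply']
  obtain ⟨a, ha, b, hb, hab, heq⟩ := Finset.exists_ne_map_eq_of_card_lt_of_maps_to hcard hmaps
  wlog hlt : a < b generalizing a b
  · exact this b hb a ha hab.symm heq.symm (by omega)
  rw [Finset.mem_range] at ha hb
  refine ⟨a + 1, b - a, by omega, by omega, by omega, ?_⟩
  rw [Function.IsPeriodicPt, Function.IsFixedPt, ← Function.iterate_add_apply,
    show b - a + (a + 1) = b + 1 by omega, heq]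

end Combinatorics

theorem exists_subset_span_eq_and_forall_notMem_span_diff {R M : Type*} [Semiring R]
    [AddCommMonoid M] [Module R M] (S : Finset M) :
    ∃ T ⊆ S, Submodule.span R (T : Set M) = Submodule.span R (S : Set M) ∧
      ∀ y ∈ T, y ∉ Submodule.span R ((T : Set M) \ {y}) := by
  classical
  obtain ⟨T, hTS, hT⟩ := exists_minimal_le_of_wellFoundedLT
    (fun T : Finset M ↦ Submodule.span R (T : Set M) = Submodule.span R (S : Set M)) S rfl
  refine ⟨T, hTS, hT.prop, fun y hy hyspan ↦ ?_⟩
  refine hT.not_prop_of_lt (Finset.erase_ssubset hy) ?_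
  rw [Finset.coe_erase, ← Submodule.span_insert_eq_span hyspan, Set.insert_sdiff_singleton,
    Set.insert_eq_of_mem (Finset.mem_coe.2 hy), hT.prop]

section Domination

variable {E : Type*} [AddCommGroup E] [Module ℝ E] {C : PointedCone ℝ E} {x y : E}

/-- The vectors `u` dominated by `x`, that is, with `u ≤ e x` for some `e ≥ 0` in the order
defined by `C`. If `x ∈ C`, its elements lying in `C` form the face of `C` generated by `x`, and
its lineality space is the linear span of that face. -/
def dominatedCone (C : PointedCone ℝ E) (x : E) : PointedCone ℝ E where
  carrier := {u | ∃ e : ℝ, 0 ≤ e ∧ e • x - u ∈ C}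
  zero_mem' := ⟨0, le_rfl, by simp⟩
  add_mem' := by
    rintro u v ⟨a, ha, hu⟩ ⟨b, hb, hv⟩
    refine ⟨a + b, add_nonneg ha hb, ?_⟩
    convert C.add_mem hu hv using 1
    module
  smul_mem' := by
    rintro c u ⟨a, ha, hu⟩
    refine ⟨c * a, mul_nonneg c.2 ha, ?_⟩
    rw [mul_smul]
    convert C.smul_mem c.2 hu using 1
    exact (smul_sub (c : ℝ) (a • x) u).symm

theorem mem_dominatedCone_of_sub_mem (h : x - y ∈ C) : y ∈ dominatedCone C x :=
  ⟨1, zero_le_one, by rwa [one_smul]⟩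

theorem self_mem_dominatedCone : x ∈ dominatedCone C x :=
  mem_dominatedCone_of_sub_mem (by simp)

theorem neg_mem_dominatedCone (hy : y ∈ C) : -y ∈ dominatedCone C x :=
  ⟨0, le_rfl, by simpa using hy⟩

theorem dominatedCone_le_dominatedCone (h : y ∈ dominatedCone C x) :
    dominatedCone C y ≤ dominatedCone C x := by
  rintro u ⟨b, hb, hu⟩
  obtain ⟨a, ha, hy⟩ := h
  refine ⟨b * a, mul_nonneg hb ha, ?_⟩
  convert C.add_mem (C.smul_mem hb hy) hu using 1
  module

theorem hull_singleton_le_dominatedCone : PointedCone.hull ℝ {x} ≤ dominatedCone C x :=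
  Submodule.span_le.2 (Set.singleton_subset_iff.2 self_mem_dominatedCone)

theorem self_mem_lineal_dominatedCone (hx : x ∈ C) : x ∈ (dominatedCone C x).lineal :=
  PointedCone.mem_lineal.2 ⟨self_mem_dominatedCone, neg_mem_dominatedCone hx⟩

theorem lineal_dominatedCone_le (h : y ∈ dominatedCone C x) :
    (dominatedCone C y).lineal ≤ (dominatedCone C x).lineal :=
  fun _ hu ↦ ⟨dominatedCone_le_dominatedCone h hu.1, dominatedCone_le_dominatedCone h hu.2⟩

theorem one_le_finrank_lineal_dominatedCone [FiniteDimensional ℝ E] (hx : x ∈ C) (hx0 : x ≠ 0) :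
    1 ≤ Module.finrank ℝ (dominatedCone C x).lineal :=
  Submodule.one_le_finrank_iff.2
    ((Submodule.ne_bot_iff _).2 ⟨x, self_mem_lineal_dominatedCone hx, hx0⟩)

variable {f : Module.End ℝ E}

theorem mapsTo_pow (hf : MapsTo f C C) (k : ℕ) : MapsTo (f ^ k) C C := by
  rw [Module.End.coe_pow]
  exact hf.iterate k

theorem map_mem_dominatedCone (hf : MapsTo f C C) (h : y ∈ dominatedCone C x) :
    f y ∈ dominatedCone C (f x) := by
  obtain ⟨e, he, hxy⟩ := h
  refine ⟨e, he, ?_⟩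
  rw [← map_smul, ← map_sub]
  exact hf hxy

section Iterate

variable {ι : Type*} {u : ι → E} {g : ι → ι}

theorem iterate_mem_dominatedCone_pow (hf : MapsTo f C C)
    (hg : ∀ i, u (g i) ∈ dominatedCone C (f (u i))) (k : ℕ) (i : ι) :
    u (g^[k] i) ∈ dominatedCone C ((f ^ k) (u i)) := by
  induction k with
  | zero => exact self_mem_dominatedCone
  | succ k ih =>
    rw [Function.iterate_succ_apply', pow_succ', Module.End.mul_apply]
    exact dominatedCone_le_dominatedCone (map_mem_dominatedCone hf ih) (hg _)

theorem pow_mem_dominatedCone_iterate (hf : MapsTo f C C)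
    (hg : ∀ i, f (u i) ∈ dominatedCone C (u (g i))) (k : ℕ) (i : ι) :
    (f ^ k) (u i) ∈ dominatedCone C (u (g^[k] i)) := by
  induction k with
  | zero => exact self_mem_dominatedCone
  | succ k ih =>
    rw [Function.iterate_succ_apply', pow_succ', Module.End.mul_apply]
    exact dominatedCone_le_dominatedCone (hg _) (map_mem_dominatedCone hf ih)

end Iterate

variable {S : Set E}

theorem mem_hull_inter_dominatedCone (hx : x ∈ PointedCone.hull ℝ S) :
    x ∈ PointedCone.hull ℝ (S ∩ dominatedCone (PointedCone.hull ℝ S) x) := by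
  set C := PointedCone.hull ℝ S
  have hull_mono : ∀ {a b : E}, b ∈ dominatedCone C a →
      PointedCone.hull ℝ (S ∩ dominatedCone C b) ≤ PointedCone.hull ℝ (S ∩ dominatedCone C a) :=
    fun h ↦ Submodule.span_mono
      (Set.inter_subset_inter_right S (dominatedCone_le_dominatedCone h))
  induction hx using Submodule.span_induction with
  | mem x hx => exact Submodule.subset_span ⟨hx, self_mem_dominatedCone⟩
  | zero => exact Submodule.zero_mem _
  | add a b ha hb iha ihb =>
    exact Submodule.add_mem _
      (hull_mono (mem_dominatedCone_of_sub_mem (by rwa [add_sub_cancel_left])) iha)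
      (hull_mono (mem_dominatedCone_of_sub_mem (by rwa [add_sub_cancel_right])) ihb)
  | smul c a _ iha =>
    rcases eq_or_ne c 0 with rfl | hc
    · rw [zero_smul]
      exact Submodule.zero_mem _
    · refine Submodule.smul_mem _ c (hull_mono ?_ iha)
      have := Submodule.smul_mem _ c⁻¹ (self_mem_dominatedCone (C := C) (x := c • a))
      rwa [inv_smul_smul₀ hc] at this

theorem exists_mem_dominatedCone_of_mem_hull (hx : x ∈ PointedCone.hull ℝ S) (hx0 : x ≠ 0) :
    ∃ y ∈ S, y ∈ dominatedCone (PointedCone.hull ℝ S) x := by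
  by_contra! hnone
  have hempty : S ∩ dominatedCone (PointedCone.hull ℝ S) x = ∅ :=
    Set.eq_empty_of_forall_notMem fun y hy ↦ hnone y hy.1 hy.2
  have hmem := mem_hull_inter_dominatedCone hx
  rw [hempty, PointedCone.hull, Submodule.span_empty, Submodule.mem_bot] at hmem
  exact hx0 hmem

theorem exists_eq_smul_of_add_eq_of_notMem_hull_diff
    (hsal : (PointedCone.hull ℝ S).toConvexCone.Salient)
    (hy : y ∈ S) (hirr : y ∉ PointedCone.hull ℝ (S \ {y})) {u w : E}
    (hu : u ∈ PointedCone.hull ℝ S) (hw : w ∈ PointedCone.hull ℝ S) (hyuw : y = u + w) :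
    ∃ a : ℝ, 0 ≤ a ∧ u = a • y := by
  rw [← Set.insert_eq_of_mem hy, ← Set.insert_sdiff_singleton, Submodule.mem_span_insert] at hu hw
  obtain ⟨⟨a, ha⟩, z, hz, rfl⟩ := hu
  obtain ⟨⟨b, hb⟩, z', hz', rfl⟩ := hw
  simp only [Nonneg.mk_smul] at hyuw ⊢
  have hle : PointedCone.hull ℝ (S \ {y}) ≤ PointedCone.hull ℝ S :=
    Submodule.span_mono Set.sdiff_subset
  have hzz' : z + z' = (1 - (a + b)) • y := by
    linear_combination (norm := module) -hyuw
  rcases lt_or_ge (a + b) 1 with hab | hab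
  · refine absurd ?_ hirr
    have hmem := PointedCone.smul_mem _ (inv_nonneg.2 (sub_pos.2 hab).le)
      (Submodule.add_mem _ hz hz')
    rwa [hzz', inv_smul_smul₀ (sub_pos.2 hab).ne'] at hmem
  · have hneg : -z ∈ PointedCone.hull ℝ S := by
      have : -z = (a + b - 1) • y + z' := by
        linear_combination (norm := module) -hzz'
      rw [this]
      exact Submodule.add_mem _ (PointedCone.smul_mem _ (sub_nonneg.2 hab)
        (Submodule.subset_span hy)) (hle hz')
    have hz0 : z = 0 := by
      by_contra hz0
      exact hsal z (hle hz) hz0 hneg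
    exact ⟨a, ha, by rw [hz0, add_zero]⟩

theorem injOn_hull_singleton (hirr : ∀ y ∈ S, y ∉ PointedCone.hull ℝ (S \ {y})) :
    Set.InjOn (fun x ↦ (PointedCone.hull ℝ {x} : Set E)) S := by
  intro x hx y hy hxy
  by_contra hne
  have hxray : x ∈ (PointedCone.hull ℝ {y} : Set E) :=
    hxy.le (Submodule.mem_span_singleton_self x)
  exact hirr x hx (Submodule.span_mono
    (Set.singleton_subset_iff.2 (show y ∈ S \ {x} from ⟨hy, Ne.symm hne⟩)) hxray)

end Domination

section Interior

variable {E : Type*} [AddCommGroup E] [Module ℝ E] [TopologicalSpace E] {C : PointedCone ℝ E}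
  {x y : E} {f : Module.End ℝ E}

/-- `f` maps the nonzero vectors of the cone `C` into its interior: the coordinate-free form of
`K`-positivity. -/
def ConePositive (C : PointedCone ℝ E) (f : Module.End ℝ E) : Prop :=
  ∀ x ∈ C, x ≠ 0 → f x ∈ interior (C : Set E)

/-- `f` preserves the cone `C` and some positive power of it is `C`-positive: the coordinate-free
form of `K`-primitivity. -/
structure ConePrimitive (C : PointedCone ℝ E) (f : Module.End ℝ E) : Prop where
  mapsTo : MapsTo f C C
  exists_pow : ∃ p : ℕ, 0 < p ∧ ConePositive C (f ^ p)

section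

variable [IsTopologicalAddGroup E]

theorem dominatedCone_eq_top [ContinuousSMul ℝ E] (hx : x ∈ interior (C : Set E)) :
    dominatedCone C x = ⊤ := by
  refine eq_top_iff.2 fun u _ ↦ ?_
  have hlim : Filter.Tendsto (fun c : ℝ ↦ x - c • u) (nhdsWithin 0 (Ioi 0)) (nhds x) := by
    refine tendsto_nhdsWithin_of_tendsto_nhds ?_
    exact Continuous.tendsto' (by fun_prop) 0 x (by simp)
  obtain ⟨c, hcx, hc⟩ :=
    ((hlim.eventually_mem (isOpen_interior.mem_nhds hx)).and self_mem_nhdsWithin).exists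
  refine ⟨c⁻¹, inv_nonneg.2 (le_of_lt hc), ?_⟩
  have hmem := C.smul_mem (inv_nonneg.2 (le_of_lt hc)) (interior_subset hcx)
  rwa [smul_sub, inv_smul_smul₀ (ne_of_gt hc)] at hmem

variable [ContinuousConstSMul ℝ E]

open scoped Pointwise in
theorem mem_interior_of_mem_dominatedCone (hx : x ∈ C) (hy : y ∈ interior (C : Set E))
    (h : y ∈ dominatedCone C x) : x ∈ interior (C : Set E) := by
  obtain ⟨e, he, hxy⟩ := h
  have he' : 0 < e + 1 := by positivity
  have hadd : (C : Set E) + C ⊆ C := Set.add_subset_iff.2 fun _ ha _ hb ↦ C.add_mem ha hb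
  have hsmul : (e + 1)⁻¹ • (C : Set E) ⊆ C := by
    rintro _ ⟨a, ha, rfl⟩
    exact C.smul_mem (inv_nonneg.2 he'.le) ha
  have hmem : y + (e • x - y + x) ∈ interior (C : Set E) :=
    interior_mono hadd (subset_interior_add_left (Set.add_mem_add hy (C.add_mem hxy hx)))
  rw [show y + (e • x - y + x) = (e + 1) • x by module] at hmem
  apply interior_mono hsmul
  rw [interior_smul₀ (inv_ne_zero he'.ne')]
  exact ⟨_, hmem, inv_smul_smul₀ he'.ne' x⟩

theorem zero_notMem_interior_of_notMem_interior (hx : x ∈ C) (hxi : x ∉ interior (C : Set E)) :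
    (0 : E) ∉ interior (C : Set E) :=
  fun h0 ↦ hxi (mem_interior_of_mem_dominatedCone hx h0 (Submodule.zero_mem _))

theorem one_lt_finrank_of_notMem_interior [FiniteDimensional ℝ E]
    (hC : (interior (C : Set E)).Nonempty) (hx : x ∈ C) (hx0 : x ≠ 0)
    (hxi : x ∉ interior (C : Set E)) : 1 < Module.finrank ℝ E := by
  refine (one_le_finrank_lineal_dominatedCone hx hx0).trans_lt (Submodule.finrank_lt fun htop ↦ ?_)
  obtain ⟨z, hz⟩ := hC
  have hzL : z ∈ (dominatedCone C x).lineal := htop ▸ Submodule.mem_top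
  exact hxi (mem_interior_of_mem_dominatedCone hx hz (PointedCone.lineal_le _ hzL))

theorem ConePositive.of_forall_generator {S : Set E}
    (hf : MapsTo f (PointedCone.hull ℝ S) (PointedCone.hull ℝ S))
    (hS : ∀ y ∈ S, f y ∈ interior (PointedCone.hull ℝ S : Set E)) :
    ConePositive (PointedCone.hull ℝ S) f := by
  intro x hx hx0
  obtain ⟨y, hyS, hy⟩ := exists_mem_dominatedCone_of_mem_hull hx hx0
  exact mem_interior_of_mem_dominatedCone (hf hx) (hS y hyS) (map_mem_dominatedCone hf hy)

end

namespace ConePrimitive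

theorem map_ne_zero (hf : ConePrimitive C f) (h0 : (0 : E) ∉ interior (C : Set E)) (hx : x ∈ C)
    (hx0 : x ≠ 0) : f x ≠ 0 := by
  intro hfx
  obtain ⟨p, hp, hpos⟩ := hf.exists_pow
  have hmem := hpos x hx hx0
  rw [← Nat.sub_add_cancel hp, pow_add, pow_one, Module.End.mul_apply, hfx, map_zero] at hmem
  exact h0 hmem

variable {S : Set E}

theorem exists_generator_mem_dominatedCone (hf : ConePrimitive (PointedCone.hull ℝ S) f)
    (h0 : (0 : E) ∉ S) (h0i : (0 : E) ∉ interior (PointedCone.hull ℝ S : Set E)) (v : S) :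
    ∃ w : S, (w : E) ∈ dominatedCone (PointedCone.hull ℝ S) (f v) := by
  have hv : (v : E) ∈ PointedCone.hull ℝ S := Submodule.subset_span v.2
  obtain ⟨w, hwS, hw⟩ := exists_mem_dominatedCone_of_mem_hull (hf.mapsTo hv)
    (hf.map_ne_zero h0i hv (ne_of_mem_of_not_mem v.2 h0))
  exact ⟨⟨w, hwS⟩, hw⟩

variable [IsTopologicalAddGroup E] [ContinuousSMul ℝ E]

theorem map_mem_interior (hf : ConePrimitive C f) (hx : x ∈ interior (C : Set E)) :
    f x ∈ interior (C : Set E) := by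
  rcases eq_or_ne x 0 with rfl | hx0
  · rwa [map_zero]
  obtain ⟨p, hp, hpos⟩ := hf.exists_pow
  have hxC := interior_subset hx
  refine mem_interior_of_mem_dominatedCone (hf.mapsTo hxC) (hpos x hxC hx0) ?_
  rw [← Nat.sub_add_cancel hp, pow_succ', Module.End.mul_apply]
  apply map_mem_dominatedCone hf.mapsTo
  rw [dominatedCone_eq_top hx]
  exact Submodule.mem_top

theorem pow_mem_interior_of_le (hf : ConePrimitive C f) {j k : ℕ} (hjk : j ≤ k)
    (hx : (f ^ j) x ∈ interior (C : Set E)) : (f ^ k) x ∈ interior (C : Set E) := by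
  induction k, hjk using Nat.le_induction with
  | base => exact hx
  | succ k _ ih =>
    rw [pow_succ', Module.End.mul_apply]
    exact hf.map_mem_interior ih

theorem pow (hf : ConePrimitive C f) {s : ℕ} (hs : 0 < s) : ConePrimitive C (f ^ s) := by
  obtain ⟨p, hp, hpos⟩ := hf.exists_pow
  refine ⟨mapsTo_pow hf.mapsTo s, p, hp, fun x hx hx0 ↦ ?_⟩
  rw [← pow_mul]
  exact hf.pow_mem_interior_of_le (Nat.le_mul_of_pos_left p hs) (hpos x hx hx0)

/- If `f ^ (k + 1) x` were dominated by `f ^ k x`, so would be all later iterates, some of which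
are interior. -/
theorem pow_succ_notMem_dominatedCone (hf : ConePrimitive C f) (hx : x ∈ C) (hx0 : x ≠ 0)
    {k : ℕ} (hk : (f ^ k) x ∉ interior (C : Set E)) :
    (f ^ (k + 1)) x ∉ dominatedCone C ((f ^ k) x) := by
  intro hdom
  rw [pow_succ', Module.End.mul_apply] at hdom
  obtain ⟨p, -, hpos⟩ := hf.exists_pow
  have hpk : (f ^ p) ((f ^ k) x) ∈ interior (C : Set E) := by
    rw [← Module.End.mul_apply, ← pow_add]
    exact hf.pow_mem_interior_of_le (Nat.le_add_right p k) (hpos x hx hx0)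
  exact hk (mem_interior_of_mem_dominatedCone (mapsTo_pow hf.mapsTo k hx) hpk
    (pow_mem_dominatedCone_iterate (g := id) (u := fun _ : Unit ↦ (f ^ k) x) hf.mapsTo
      (fun _ ↦ hdom) p ()))

theorem lineal_dominatedCone_pow_lt (hf : ConePrimitive C f) (hx : x ∈ C) (hx0 : x ≠ 0)
    (hdom : x ∈ dominatedCone C (f x)) {k : ℕ} (hk : (f ^ k) x ∉ interior (C : Set E)) :
    (dominatedCone C ((f ^ k) x)).lineal < (dominatedCone C ((f ^ (k + 1)) x)).lineal := by
  have hstep : (f ^ k) x ∈ dominatedCone C ((f ^ (k + 1)) x) := by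
    rw [pow_succ, Module.End.mul_apply]
    exact map_mem_dominatedCone (mapsTo_pow hf.mapsTo k) hdom
  refine lt_of_le_not_ge (lineal_dominatedCone_le hstep) fun hge ↦ ?_
  exact hf.pow_succ_notMem_dominatedCone hx hx0 hk (PointedCone.lineal_le _
    (hge (self_mem_lineal_dominatedCone (mapsTo_pow hf.mapsTo (k + 1) hx))))

theorem pow_finrank_sub_one_mem_interior [FiniteDimensional ℝ E] (hf : ConePrimitive C f)
    (hx : x ∈ C) (hx0 : x ≠ 0) (hdom : x ∈ dominatedCone C (f x)) :
    (f ^ (Module.finrank ℝ E - 1)) x ∈ interior (C : Set E) := by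
  by_contra hlast
  have hrank : ∀ k ≤ Module.finrank ℝ E,
      k + 1 ≤ Module.finrank ℝ (dominatedCone C ((f ^ k) x)).lineal := by
    intro k hk
    induction k with
    | zero => exact one_le_finrank_lineal_dominatedCone hx hx0
    | succ k ih =>
      have hkint : (f ^ k) x ∉ interior (C : Set E) :=
        fun h ↦ hlast (hf.pow_mem_interior_of_le (Nat.le_sub_one_of_lt hk) h)
      have := Submodule.finrank_lt_finrank_of_lt (hf.lineal_dominatedCone_pow_lt hx hx0 hdom hkint)
      have := ih (Nat.le_of_succ_le hk)
      omega
  exact absurd (hrank _ le_rfl) (by simpa using Submodule.finrank_le _)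

/- Otherwise every generator is mapped into the ray of a single generator. A `C`-positive power
then maps generators into rays of generators, so some `f v` is interior and dominates every
generator; hence there is only one generator, and it is interior. -/
theorem exists_generator_dominating_two (hf : ConePrimitive (PointedCone.hull ℝ S) f)
    (h0 : (0 : E) ∉ S) (hx : x ∈ PointedCone.hull ℝ S) (hx0 : x ≠ 0)
    (hxi : x ∉ interior (PointedCone.hull ℝ S : Set E)) :
    ∃ v w w' : S, w ≠ w' ∧ (w : E) ∈ dominatedCone (PointedCone.hull ℝ S) (f v) ∧
      (w' : E) ∈ dominatedCone (PointedCone.hull ℝ S) (f v) := by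
  by_contra! hunique
  replace hunique : ∀ v w w' : S, (w : E) ∈ dominatedCone (PointedCone.hull ℝ S) (f v) →
      (w' : E) ∈ dominatedCone (PointedCone.hull ℝ S) (f v) → w = w' :=
    fun v w w' hw hw' ↦ by_contra fun hne ↦ hunique v w w' hne hw hw'
  choose g hg using hf.exists_generator_mem_dominatedCone h0
    (zero_notMem_interior_of_notMem_interior hx hxi)
  have hray (v : S) : f v ∈ dominatedCone (PointedCone.hull ℝ S) (g v : E) := by
    have hsub : S ∩ dominatedCone (PointedCone.hull ℝ S) (f v) ⊆ {(g v : E)} :=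
      fun w hw ↦ congrArg Subtype.val (hunique v ⟨w, hw.1⟩ (g v) hw.2 (hg v))
    exact hull_singleton_le_dominatedCone (Submodule.span_mono hsub
      (mem_hull_inter_dominatedCone (hf.mapsTo (Submodule.subset_span v.2))))
  obtain ⟨y, hyS, hyx⟩ := exists_mem_dominatedCone_of_mem_hull hx hx0
  obtain ⟨p, hp, hpos⟩ := hf.exists_pow
  set v := g^[p - 1] ⟨y, hyS⟩
  have hgv : (g v : E) ∈ interior (PointedCone.hull ℝ S : Set E) := by
    refine mem_interior_of_mem_dominatedCone (Submodule.subset_span (g v).2)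
      (hpos y (Submodule.subset_span hyS) (ne_of_mem_of_not_mem hyS h0)) ?_
    have := pow_mem_dominatedCone_iterate (u := Subtype.val) hf.mapsTo hray p ⟨y, hyS⟩
    rwa [← Nat.sub_add_cancel hp, Function.iterate_succ_apply', Nat.sub_add_cancel hp] at this
  have hfv : f v ∈ interior (PointedCone.hull ℝ S : Set E) :=
    mem_interior_of_mem_dominatedCone (hf.mapsTo (Submodule.subset_span v.2)) hgv (hg v)
  have hgv_eq : g v = ⟨y, hyS⟩ := hunique v (g v) ⟨y, hyS⟩ (hg v) (by
    rw [dominatedCone_eq_top hfv]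
    exact Submodule.mem_top)
  rw [hgv_eq] at hgv
  exact hxi (mem_interior_of_mem_dominatedCone hx hgv hyx)

end ConePrimitive

theorem mul_add_le_of_lt_of_add_le {d M s t : ℕ} (hd : 1 < d) (hs : s < M) (hts : t + s ≤ M) :
    s * (d - 1) + t ≤ (d - 1) * (M - 1) + 1 := by
  obtain ⟨k, rfl⟩ := Nat.exists_eq_add_of_lt hd
  obtain ⟨l, rfl⟩ := Nat.exists_eq_add_of_lt hs
  simp only [show 1 + k + 1 - 1 = k + 1 by omega, Nat.add_sub_cancel]
  nlinarith [Nat.zero_le (k * l)]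

variable [IsTopologicalAddGroup E] [ContinuousSMul ℝ E] [FiniteDimensional ℝ E] {S : Finset E}

/- A self-map `g` choosing a dominated generator for each image `f v` is eventually periodic. If
`g` is not injective, the period `s` reached from `v` after `t` steps satisfies `s < #S` and
`t + s ≤ #S`; apply the bound for `f ^ s` to the periodic generator. -/
theorem ConePrimitive.pow_generator_mem_interior
    (hf : ConePrimitive (PointedCone.hull ℝ (S : Set E)) f) (h0 : (0 : E) ∉ S)
    (hx : x ∈ PointedCone.hull ℝ (S : Set E)) (hx0 : x ≠ 0)
    (hxi : x ∉ interior (PointedCone.hull ℝ (S : Set E) : Set E)) (v : S) :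
    (f ^ ((Module.finrank ℝ E - 1) * (S.card - 1) + 1)) v ∈
      interior (PointedCone.hull ℝ (S : Set E) : Set E) := by
  have hmem (w : S) : (w : E) ∈ PointedCone.hull ℝ (S : Set E) := Submodule.subset_span w.2
  have hne (w : S) : (w : E) ≠ 0 := ne_of_mem_of_not_mem w.2 h0
  obtain ⟨v₀, w, w', hww', hw, hw'⟩ := hf.exists_generator_dominating_two h0 hx hx0 hxi
  obtain ⟨g, hg_not_inj, hg⟩ := exists_not_injective_selector
    (hf.exists_generator_mem_dominatedCone h0 (zero_notMem_interior_of_notMem_interior hx hxi))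
    hww' hw hw'
  obtain ⟨t, s, hs, hsM, htsM, hper⟩ := exists_isPeriodicPt_iterate_of_not_injective hg_not_inj v
  simp only [Finset.coe_sort_coe, Fintype.card_coe] at hsM htsM
  set u : S := g^[t] v
  have hreach : (u : E) ∈ dominatedCone (PointedCone.hull ℝ (S : Set E)) ((f ^ t) v) :=
    iterate_mem_dominatedCone_pow (u := Subtype.val) hf.mapsTo hg t v
  have hreturn : (u : E) ∈ dominatedCone (PointedCone.hull ℝ (S : Set E)) ((f ^ s) u) := by
    have := iterate_mem_dominatedCone_pow (u := Subtype.val) hf.mapsTo hg s u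
    rwa [hper.eq] at this
  have hu : ((f ^ s) ^ (Module.finrank ℝ E - 1)) (u : E) ∈
      interior (PointedCone.hull ℝ (S : Set E) : Set E) :=
    (hf.pow hs).pow_finrank_sub_one_mem_interior (hmem u) (hne u) hreturn
  obtain ⟨p, -, hpos⟩ := hf.exists_pow
  have hd := one_lt_finrank_of_notMem_interior ⟨_, hpos x hx hx0⟩ hx hx0 hxi
  refine hf.pow_mem_interior_of_le (mul_add_le_of_lt_of_add_le hd hsM htsM) ?_
  refine mem_interior_of_mem_dominatedCone (mapsTo_pow hf.mapsTo _ (hmem v)) hu ?_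
  rw [pow_add, pow_mul, Module.End.mul_apply]
  exact map_mem_dominatedCone (mapsTo_pow (hf.pow hs).mapsTo _) hreach

theorem stmt_2_general (hf : ConePrimitive (PointedCone.hull ℝ (S : Set E)) f)
    (h0 : (0 : E) ∉ S) :
    ConePositive (PointedCone.hull ℝ (S : Set E))
      (f ^ ((Module.finrank ℝ E - 1) * (S.card - 1) + 1)) := by
  by_cases hbd : ∃ x ∈ PointedCone.hull ℝ (S : Set E),
      x ≠ 0 ∧ x ∉ interior (PointedCone.hull ℝ (S : Set E) : Set E)
  · obtain ⟨x, hx, hx0, hxi⟩ := hbd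
    exact .of_forall_generator (mapsTo_pow hf.mapsTo _)
      fun v hv ↦ hf.pow_generator_mem_interior h0 hx hx0 hxi ⟨v, hv⟩
  · push Not at hbd
    exact fun x hx hx0 ↦ hf.pow_mem_interior_of_le (Nat.zero_le _) (hbd x hx hx0)

end Interior

section Polyhedral

variable {n : ℕ} {S : Set (Fin n → ℝ)}

theorem coneGen_eq_hull {m : ℕ} (y : Fin m → Fin n → ℝ) :
    ConeGen y = PointedCone.hull ℝ (Set.range y) := by
  ext x
  simp only [ConeGen, Set.mem_ofPred_eq, SetLike.mem_coe, Submodule.mem_span_range_iff_exists_fun]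
  exact ⟨fun ⟨c, hc, hx⟩ ↦ ⟨fun j ↦ ⟨c j, hc j⟩, hx.symm⟩,
    fun ⟨c, hx⟩ ↦ ⟨fun j ↦ c j, fun j ↦ (c j).2, hx.symm⟩⟩

theorem IsProperCone.salient {C : PointedCone ℝ (Fin n → ℝ)}
    (hC : IsProperCone (C : Set (Fin n → ℝ))) : C.toConvexCone.Salient :=
  C.salient_iff_inter_neg_eq_singleton.2 hC.2.2.2.1

theorem extremeRays_eq_image (K : Set (Fin n → ℝ)) :
    ExtremeRays K =
      (fun x ↦ (PointedCone.hull ℝ {x} : Set (Fin n → ℝ))) '' {x | IsExtremeVec K x} := by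
  have hray (x : Fin n → ℝ) :
      (PointedCone.hull ℝ {x} : Set (Fin n → ℝ)) = {y | ∃ c : ℝ, 0 ≤ c ∧ y = c • x} := by
    ext y
    simp only [SetLike.mem_coe, Submodule.mem_span_singleton, Set.mem_ofPred_eq]
    exact ⟨fun ⟨c, hc⟩ ↦ ⟨c, c.2, hc.symm⟩, fun ⟨c, hc, hy⟩ ↦ ⟨⟨c, hc⟩, hy.symm⟩⟩
  ext R
  simp only [ExtremeRays, hray, Set.mem_ofPred_eq, Set.mem_image, eq_comm]

theorem isExtremeVec_of_notMem_hull_diff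
    (hsal : (PointedCone.hull ℝ S).toConvexCone.Salient) {y : Fin n → ℝ} (hy : y ∈ S)
    (hirr : y ∉ PointedCone.hull ℝ (S \ {y})) : IsExtremeVec (PointedCone.hull ℝ S) y := by
  refine ⟨Submodule.subset_span hy, ?_, fun u hu w hw hyuw ↦ ⟨?_, ?_⟩⟩
  · rintro rfl
    exact hirr (Submodule.zero_mem _)
  · exact exists_eq_smul_of_add_eq_of_notMem_hull_diff hsal hy hirr hu hw hyuw
  · exact exists_eq_smul_of_add_eq_of_notMem_hull_diff hsal hy hirr hw hu (by rwa [add_comm])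

theorem IsExtremeVec.exists_hull_singleton_eq {x : Fin n → ℝ}
    (hsal : (PointedCone.hull ℝ S).toConvexCone.Salient) (h0 : 0 ∉ S)
    (hx : IsExtremeVec (PointedCone.hull ℝ S) x) :
    ∃ y ∈ S, PointedCone.hull ℝ {y} = PointedCone.hull ℝ {x} := by
  obtain ⟨hxC, hx0, hext⟩ := hx
  obtain ⟨y, hyS, e, he, hxy⟩ := exists_mem_dominatedCone_of_mem_hull hxC hx0
  have hyC : y ∈ PointedCone.hull ℝ S := Submodule.subset_span hyS
  have hy0 : y ≠ 0 := ne_of_mem_of_not_mem hyS h0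
  have he0 : e ≠ 0 := by
    rintro rfl
    exact hsal y hyC hy0 (by simpa using hxy)
  obtain ⟨⟨a, ha, hya⟩, -⟩ := hext (e⁻¹ • y) (PointedCone.smul_mem _ (inv_nonneg.2 he) hyC)
    (e⁻¹ • (e • x - y)) (PointedCone.smul_mem _ (inv_nonneg.2 he) hxy)
    (by rw [← smul_add, add_sub_cancel, inv_smul_smul₀ he0])
  have hyx : y = (e * a) • x := by rw [mul_smul, ← hya, smul_inv_smul₀ he0]
  have hea : e * a ≠ 0 := fun h ↦ hy0 (by rw [hyx, h, zero_smul])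
  have hxy' : x = (e * a)⁻¹ • y := by rw [hyx, inv_smul_smul₀ hea]
  have hea_nonneg : 0 ≤ e * a := mul_nonneg he ha
  refine ⟨y, hyS, le_antisymm (Submodule.span_le.2 (Set.singleton_subset_iff.2 ?_))
    (Submodule.span_le.2 (Set.singleton_subset_iff.2 ?_))⟩
  · rw [hyx]
    exact PointedCone.smul_mem _ hea_nonneg (Submodule.mem_span_singleton_self x)
  · rw [hxy']
    exact PointedCone.smul_mem _ (inv_nonneg.2 hea_nonneg) (Submodule.mem_span_singleton_self y)

theorem extremeRays_hull (hsal : (PointedCone.hull ℝ S).toConvexCone.Salient)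
    (hirr : ∀ y ∈ S, y ∉ PointedCone.hull ℝ (S \ {y})) :
    ExtremeRays (PointedCone.hull ℝ S : Set (Fin n → ℝ)) =
      (fun x ↦ (PointedCone.hull ℝ {x} : Set (Fin n → ℝ))) '' S := by
  have h0 : 0 ∉ S := fun h ↦ hirr 0 h (Submodule.zero_mem _)
  rw [extremeRays_eq_image]
  refine Set.Subset.antisymm ?_
    (Set.image_mono fun y hy ↦ isExtremeVec_of_notMem_hull_diff hsal hy (hirr y hy))
  rintro _ ⟨x, hx, rfl⟩
  obtain ⟨y, hyS, hyx⟩ := hx.exists_hull_singleton_eq hsal h0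
  exact ⟨y, hyS, congrArg SetLike.coe hyx⟩

theorem MemP.exists_generators {m : ℕ} {K : Set (Fin n → ℝ)} (hK : MemP m K) :
    ∃ S : Finset (Fin n → ℝ), 0 ∉ S ∧ S.card = m ∧
      (PointedCone.hull ℝ (S : Set (Fin n → ℝ)) : Set (Fin n → ℝ)) = K := by
  classical
  obtain ⟨⟨hproper, l, y, rfl⟩, rfl⟩ := hK
  obtain ⟨S, -, hS, hirr⟩ := exists_subset_span_eq_and_forall_notMem_span_diff
    (R := {c : ℝ // 0 ≤ c}) (Finset.univ.image y)
  rw [Finset.coe_image, Finset.coe_univ, Set.image_univ] at hS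
  have hK : (PointedCone.hull ℝ (S : Set (Fin n → ℝ)) : Set (Fin n → ℝ)) = ConeGen y := by
    rw [coneGen_eq_hull, PointedCone.hull, hS]
  rw [← hK] at hproper ⊢
  refine ⟨S, fun h ↦ hirr 0 h (Submodule.zero_mem _), ?_, rfl⟩
  rw [extremeRays_hull hproper.salient hirr, (injOn_hull_singleton hirr).ncard_image,
    Set.ncard_coe_finset]

theorem kPositive_iff_conePositive {C : PointedCone ℝ (Fin n → ℝ)}
    {A : Matrix (Fin n) (Fin n) ℝ} :
    KPositive (C : Set (Fin n → ℝ)) A ↔ ConePositive C (Matrix.toLin' A) :=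
  Iff.rfl

theorem KPrimitive.conePrimitive {C : PointedCone ℝ (Fin n → ℝ)} {A : Matrix (Fin n) (Fin n) ℝ}
    (hA : KPrimitive (C : Set (Fin n → ℝ)) A) : ConePrimitive C (Matrix.toLin' A) := by
  obtain ⟨hmaps, p, hp, hpos⟩ := hA
  refine ⟨hmaps, p, hp, ?_⟩
  rwa [← Matrix.toLin'_pow, ← kPositive_iff_conePositive]

end Polyhedral

/-- For `K ∈ P(m,n)` with `3 ≤ n ≤ m` and `A` `K`-primitive, `γ(A) ≤ (n-1)(m-1)+1`. -/
theorem stmt_2 (m n : ℕ) (hn : 3 ≤ n) (hnm : n ≤ m)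
    (K : Set (Fin n → ℝ)) (A : Matrix (Fin n) (Fin n) ℝ)
    (hK : MemP m K) (hA : KPrimitive K A) :
    expnt K A ≤ (n - 1) * (m - 1) + 1 := by
  obtain ⟨S, h0, rfl, rfl⟩ := hK.exists_generators
  have hpos := stmt_2_general hA.conePrimitive h0
  rw [Module.finrank_fin_fun, ← Matrix.toLin'_pow, ← kPositive_iff_conePositive] at hpos
  exact Nat.sInf_le ⟨Nat.succ_pos _, hpos⟩
end
end

section
/- For every positive integer m ≥ 3: (a) for every polyhedral cone K (of any dimension) with exactly m extreme rays and every K-primitive matrix A, γ(A) ≤ m² − 2m + 2; and (b) there exist a polyhedral cone K with exactly m extreme rays and a K-primitive matrix A with γ(A) = m² − 2m + 2 (for instance K = ℝ^m₊). Hence the maximum of γ(K) over all polyhedral cones with m extreme rays equals m² − 2m + 2. -/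
open Matrix Set Real

noncomputable section

/-!
Let `K` be a polyhedral cone with `m` extreme rays, spanned by vectors `S` chosen one on each
extreme ray, and let `A` be `K`-primitive. Draw an arc from `s` to `l` in `S` when `l` lies in the
face of `K` generated by `A s`; a walk of length `k` from `s` to `l` then puts `l` in the face
generated by `A ^ k s`. If `m ≥ 2`, some selection of one successor for each vertex is not
injective, since otherwise `A` would permute the extreme rays. Following this selection from any
vertex reaches, after `t` steps, a vertex on a closed walk of length `p`, where `p ≤ m - 1` and
`p + t ≤ m`. Along the powers of `A ^ p` the face generated by that vertex increases, and it is
spanned by a subset of `S`, so that it equals `K` after at most `m - 1` steps. Altogether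
`t + p (m - 1) ≤ (m - 1) ^ 2 + 1` steps suffice.

Equality holds for Wielandt's matrix on the nonnegative orthant: its digraph has just two simple
cycles, of lengths `m` and `m - 1`, and a closed walk at `0` of length `(m - 1) ^ 2` would represent
`m (m - 1)` as a combination of `m` and `m - 1` with positive coefficients.
-/

section GeneratedFace

variable {𝕜 E F : Type*} [Field 𝕜] [LinearOrder 𝕜] [IsStrictOrderedRing 𝕜]
  [AddCommGroup E] [Module 𝕜 E] [AddCommGroup F] [Module 𝕜 F]
  {C : PointedCone 𝕜 E} {D : PointedCone 𝕜 F} {x y : E}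

/-- The smallest face of the cone `C` containing a point `y` of `C`: the points of `C` that are
dominated by a multiple of `y` in the order defined by `C`. -/
def generatedFace (C : PointedCone 𝕜 E) (y : E) : PointedCone 𝕜 E where
  carrier := {x | x ∈ C ∧ ∃ c : 𝕜, 0 ≤ c ∧ c • y - x ∈ C}
  zero_mem' := ⟨C.zero_mem, 0, le_rfl, by simp⟩
  add_mem' := by
    rintro x x' ⟨hx, c, hc, hcx⟩ ⟨hx', c', hc', hcx'⟩
    refine ⟨C.add_mem hx hx', c + c', add_nonneg hc hc', ?_⟩
    rw [add_smul, add_sub_add_comm]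
    exact C.add_mem hcx hcx'
  smul_mem' := by
    rintro ⟨a, ha⟩ x ⟨hx, c, hc, hcx⟩
    refine ⟨PointedCone.smul_mem C ha hx, a * c, mul_nonneg ha hc, ?_⟩
    rw [mul_smul, Nonneg.mk_smul, ← smul_sub]
    exact PointedCone.smul_mem C ha hcx

lemma self_mem_generatedFace (hx : x ∈ C) : x ∈ generatedFace C x :=
  ⟨hx, 1, zero_le_one, by simp⟩

lemma generatedFace_isFaceOf (C : PointedCone 𝕜 E) (y : E) : (generatedFace C y).IsFaceOf C := by
  refine .of_mem_of_add_mem_left (fun _ hx ↦ hx.1) ?_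
  rintro x z hx hz ⟨-, c, hc, hcxz⟩
  refine ⟨hx, c, hc, ?_⟩
  rw [← sub_sub] at hcxz
  simpa using C.add_mem hcxz hz

lemma generatedFace_le {G : PointedCone 𝕜 E} (hG : G.IsFaceOf C) (hy : y ∈ G) :
    generatedFace C y ≤ G := by
  rintro x ⟨hx, c, hc, hcx⟩
  refine hG.mem_of_add_mem_left hx hcx ?_
  simpa using PointedCone.smul_mem G hc hy

lemma map_mem_generatedFace {T : E →ₗ[𝕜] F} (hT : MapsTo T C D) (hx : x ∈ generatedFace C y) :
    T x ∈ generatedFace D (T y) := by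
  obtain ⟨hxC, c, hc, hcx⟩ := hx
  exact ⟨hT hxC, c, hc, by simpa using hT hcx⟩

lemma generatedFace_map_le {T : E →ₗ[𝕜] F} (hT : MapsTo T C D) (hx : x ∈ C)
    (hxy : generatedFace C x ≤ generatedFace C y) :
    generatedFace D (T x) ≤ generatedFace D (T y) :=
  generatedFace_le (generatedFace_isFaceOf D (T y))
    (map_mem_generatedFace hT (hxy (self_mem_generatedFace hx)))

end GeneratedFace

section ConicIndependent

variable {𝕜 E : Type*} [Field 𝕜] [LinearOrder 𝕜] [IsStrictOrderedRing 𝕜]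
  [AddCommGroup E] [Module 𝕜 E] {C : PointedCone 𝕜 E} {S : Set E} {s x : E}

open PointedCone

lemma eq_zero_of_mem_of_neg_mem (hC : (C : ConvexCone 𝕜 E).Salient) (hx : x ∈ C)
    (hneg : -x ∈ C) : x = 0 :=
  by_contra fun h ↦ hC x hx h hneg

lemma eq_hull_inter_of_isFaceOf {G : PointedCone 𝕜 E} (hG : G.IsFaceOf (hull 𝕜 S)) :
    G = hull 𝕜 (S ∩ G) := by
  refine le_antisymm (fun x hx ↦ ?_) (Submodule.span_le.2 inter_subset_right)
  induction hG.le hx using Submodule.span_induction with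
  | mem s hs => exact subset_hull ⟨hs, hx⟩
  | zero => exact zero_mem _
  | add y z hy hz ihy ihz =>
    exact add_mem (ihy (hG.mem_of_add_mem_left hy hz hx)) (ihz (hG.mem_of_add_mem_right hy hz hx))
  | smul a y hy ih =>
    obtain rfl | ha := eq_or_ne a 0
    · simp
    · have ha' : (0 : 𝕜) < a := lt_of_le_of_ne a.2 fun h ↦ ha (Subtype.ext h.symm)
      have hx' : (a : 𝕜) • y + 0 ∈ G := (add_zero (a • y)).symm ▸ hx
      exact Submodule.smul_mem _ a (ih (hG.mem_of_smul_add_mem hy (zero_mem _) ha' hx'))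

lemma exists_mem_of_isFaceOf_hull {G : PointedCone 𝕜 E} (hG : G.IsFaceOf (hull 𝕜 S)) (hx : x ∈ G)
    (hx0 : x ≠ 0) : ∃ s ∈ S, s ∈ G := by
  by_contra! h
  have hempty : S ∩ G = ∅ := Set.eq_empty_of_forall_notMem fun s hs ↦ h s hs.1 hs.2
  rw [eq_hull_inter_of_isFaceOf hG, hempty] at hx
  exact hx0 (by simpa using hx)

lemma hull_singleton_eq_of_mem (hs : s ∈ hull 𝕜 {x}) (hs0 : s ≠ 0) : hull 𝕜 {s} = hull 𝕜 {x} := by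
  refine le_antisymm (Submodule.span_le.2 (singleton_subset_iff.2 hs)) ?_
  obtain ⟨a, rfl⟩ := Submodule.mem_span_singleton.1 hs
  have ha : a ≠ 0 := by
    rintro rfl
    exact hs0 (zero_smul _ x)
  refine Submodule.span_le.2 (singleton_subset_iff.2 (Submodule.mem_span_singleton.2 ⟨a⁻¹, ?_⟩))
  rw [inv_smul_smul₀ ha]

variable (𝕜) in
/-- No vector of `S` is a nonnegative combination of the others. A conically independent set that
generates a salient cone consists of one vector on each extreme ray of that cone. -/
def ConicIndependent (S : Set E) : Prop :=
  ∀ s ∈ S, s ∉ hull 𝕜 (S \ {s})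

lemma conicIndependent_of_linearIndepOn (hS : LinearIndepOn 𝕜 id S) : ConicIndependent 𝕜 S := by
  intro s hs hmem
  refine hS.notMem_span hs ?_
  rw [image_id]
  exact hull_le_span (R := 𝕜) _ hmem

lemma conicIndependent_generators (hC : C.FG) : ConicIndependent 𝕜 C.generators := by
  intro s hs hmem
  have hspan : Submodule.span {c : 𝕜 // 0 ≤ c} (C.generators \ {s}) = C := by
    conv_rhs => rw [← C.span_generators, ← insert_sdiff_self_of_mem hs]
    simpa using (Submodule.span_insert_eq_span hmem).symm
  have hle := Submodule.spanFinrank_span_le_ncard_of_finite (R := {c : 𝕜 // 0 ≤ c})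
    (hC.finite_generators.subset (sdiff_subset (t := {s})))
  rw [hspan, ← hC.generators_ncard] at hle
  exact hle.not_gt (ncard_sdiff_singleton_lt_of_mem hs hC.finite_generators)

namespace ConicIndependent

lemma ne_zero (hS : ConicIndependent 𝕜 S) (hs : s ∈ S) : s ≠ 0 := by
  rintro rfl
  exact hS 0 hs (zero_mem _)

lemma isFaceOf_hull_singleton (hS : ConicIndependent 𝕜 S)
    (hC : (hull 𝕜 S : ConvexCone 𝕜 E).Salient) (hs : s ∈ S) :
    (hull 𝕜 {s}).IsFaceOf (hull 𝕜 S) := by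
  have hle : hull 𝕜 {s} ≤ hull 𝕜 S := Submodule.span_mono (singleton_subset_iff.2 hs)
  have hrest : hull 𝕜 (S \ {s}) ≤ hull 𝕜 S := Submodule.span_mono sdiff_subset
  refine .of_mem_of_add_mem_left hle fun {x y} hx hy hxy ↦ ?_
  rw [← insert_sdiff_self_of_mem hs] at hx hy
  obtain ⟨a, u, hu, rfl⟩ := Submodule.mem_span_insert.1 hx
  obtain ⟨b, v, hv, rfl⟩ := Submodule.mem_span_insert.1 hy
  obtain ⟨c, hc⟩ := Submodule.mem_span_singleton.1 hxy
  have huv : u + v = (c - (a + b) : 𝕜) • s := by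
    have hc' : (c : 𝕜) • s = (a : 𝕜) • s + u + ((b : 𝕜) • s + v) := hc
    rw [sub_smul, add_smul, hc']
    abel
  have hcoef : (c - (a + b) : 𝕜) ≤ 0 := by
    by_contra! hpos
    have hmem : (c - (a + b) : 𝕜)⁻¹ • (u + v) ∈ hull 𝕜 (S \ {s}) :=
      smul_mem _ (inv_nonneg.2 hpos.le) (add_mem hu hv)
    rw [huv, inv_smul_smul₀ hpos.ne'] at hmem
    exact hS s hs hmem
  have huv0 : u + v = 0 := by
    refine eq_zero_of_mem_of_neg_mem hC (hrest (add_mem hu hv)) ?_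
    rw [huv, ← neg_smul]
    exact smul_mem _ (neg_nonneg.2 hcoef) (subset_hull hs)
  have hu0 : u = 0 :=
    eq_zero_of_mem_of_neg_mem hC (hrest hu) (neg_eq_of_add_eq_zero_right huv0 ▸ hrest hv)
  rw [hu0, add_zero]
  exact Submodule.mem_span_singleton.2 ⟨a, rfl⟩

lemma injOn_hull_singleton (hS : ConicIndependent 𝕜 S) : InjOn (fun s ↦ hull 𝕜 {s}) S := by
  intro s hs t ht hst
  by_contra hne
  have hmem : s ∈ hull 𝕜 {t} := hst.le (Submodule.mem_span_singleton_self s)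
  have hsub : {t} ⊆ S \ {s} := singleton_subset_iff.2 ⟨ht, Ne.symm hne⟩
  exact hS s hs (Submodule.span_mono hsub hmem)

end ConicIndependent

end ConicIndependent

lemma mapsTo_pow_s3 {R E : Type*} [Semiring R] [AddCommMonoid E] [Module R E] {T : Module.End R E}
    {M : Set E} (hT : MapsTo T M M) (k : ℕ) : MapsTo (T ^ k) M M := by
  rw [Module.End.coe_pow]
  exact hT.iterate k

section FaceChain

variable {𝕜 E : Type*} [Field 𝕜] [LinearOrder 𝕜] [IsStrictOrderedRing 𝕜]
  [AddCommGroup E] [Module 𝕜 E] {C : PointedCone 𝕜 E} {T : Module.End 𝕜 E} {S : Set E} {x : E}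

lemma iterate_mem_generatedFace (hS : S ⊆ C) (hT : MapsTo T C C) {f : S → S}
    (hf : ∀ s : S, (f s : E) ∈ generatedFace C (T s)) (k : ℕ) (s : S) :
    (f^[k] s : E) ∈ generatedFace C ((T ^ k) s) := by
  induction k with
  | zero => exact self_mem_generatedFace (hS s.2)
  | succ k ih =>
    rw [Function.iterate_succ_apply', pow_succ', Module.End.mul_apply]
    exact generatedFace_le (generatedFace_isFaceOf _ _) (map_mem_generatedFace hT ih) (hf _)

lemma monotone_generatedFace_pow (hT : MapsTo T C C) (hx : x ∈ generatedFace C (T x)) :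
    Monotone fun k ↦ generatedFace C ((T ^ k) x) := by
  refine monotone_nat_of_le_succ fun k ↦ generatedFace_le (generatedFace_isFaceOf _ _) ?_
  rw [pow_succ, Module.End.mul_apply]
  exact map_mem_generatedFace (mapsTo_pow_s3 hT k) hx

lemma generatedFace_pow_eq (hfin : S.Finite) (hS : PointedCone.hull 𝕜 S = C) (hT : MapsTo T C C)
    (hx : x ∈ generatedFace C (T x)) (hx0 : x ≠ 0) {k : ℕ} (hk : S.ncard - 1 ≤ k) :
    generatedFace C ((T ^ k) x) = generatedFace C ((T ^ (S.ncard - 1)) x) := by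
  let G : ℕ → PointedCone 𝕜 E := fun k ↦ generatedFace C ((T ^ k) x)
  have hmono : Monotone G := monotone_generatedFace_pow hT hx
  have hfinG (k : ℕ) : (S ∩ G k).Finite := hfin.subset inter_subset_left
  have hhull (k : ℕ) : G k = PointedCone.hull 𝕜 (S ∩ G k) :=
    eq_hull_inter_of_isFaceOf (hS ▸ generatedFace_isFaceOf C _)
  have hpos (k : ℕ) : 0 < (S ∩ G k).ncard := by
    obtain ⟨s, hs, hsG⟩ := exists_mem_of_isFaceOf_hull
      (hS ▸ generatedFace_isFaceOf C ((T ^ k) x) : (G k).IsFaceOf (PointedCone.hull 𝕜 S))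
      (hmono k.zero_le (self_mem_generatedFace hx.1)) hx0
    exact (ncard_pos (hfinG k)).2 ⟨s, hs, hsG⟩
  have heq {i j : ℕ} (hij : i ≤ j) (hcard : (S ∩ G i).ncard = (S ∩ G j).ncard) : G i = G j := by
    rw [hhull i, hhull j, eq_of_subset_of_ncard_le (inter_subset_inter_right S (hmono hij))
      hcard.ge (hfinG j)]
  have hstep (k : ℕ) (h : G k = G (k + 1)) : G (k + 1) = G (k + 2) := by
    refine le_antisymm (hmono (k + 1).le_succ) ?_
    have := generatedFace_map_le hT (mapsTo_pow_s3 hT (k + 1) hx.1) h.ge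
    simpa only [← Module.End.mul_apply, ← pow_succ'] using this
  have hcard := Nat.stabilises_of_monotone (f := fun k ↦ (S ∩ G k).ncard - 1) (b := S.ncard - 1)
    (fun i j hij ↦ Nat.sub_le_sub_right
      (ncard_le_ncard (inter_subset_inter_right S (hmono hij)) (hfinG j)) 1)
    (fun k ↦ Nat.sub_le_sub_right (ncard_le_ncard inter_subset_left hfin) 1)
    (fun k h ↦ by
      have := hpos k
      have := hpos (k + 1)
      simp only [hstep k (heq k.le_succ (by lia))])
    hk
  have := hpos k
  have := hpos (S.ncard - 1)
  exact (heq hk (by lia)).symm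

end FaceChain

section ExtremeRays

variable {n : ℕ} {C : PointedCone ℝ (Fin n → ℝ)} {S : Set (Fin n → ℝ)} {x : Fin n → ℝ}

open PointedCone

lemma setOf_nonneg_smul_eq_hull_singleton {E : Type*} [AddCommGroup E] [Module ℝ E] (x : E) :
    {y | ∃ c : ℝ, 0 ≤ c ∧ y = c • x} = hull ℝ {x} := by
  ext y
  simp only [mem_ofPred_eq, SetLike.mem_coe, Submodule.mem_span_singleton, Subtype.exists]
  exact exists_congr fun c ↦ ⟨fun ⟨hc, h⟩ ↦ ⟨hc, h.symm⟩, fun ⟨hc, h⟩ ↦ ⟨hc, h.symm⟩⟩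

lemma isExtremeVec_iff (hC : (C : ConvexCone ℝ (Fin n → ℝ)).Salient) :
    IsExtremeVec (C : Set (Fin n → ℝ)) x ↔ x ≠ 0 ∧ (hull ℝ {x}).IsFaceOf C := by
  have hray (y : Fin n → ℝ) : (∃ c : ℝ, 0 ≤ c ∧ y = c • x) ↔ y ∈ hull ℝ {x} :=
    Set.ext_iff.1 (setOf_nonneg_smul_eq_hull_singleton x) y
  simp only [IsExtremeVec, hray, SetLike.mem_coe]
  constructor
  · rintro ⟨hx, hx0, hext⟩
    refine ⟨hx0, .of_mem_of_add_mem_left (Submodule.span_le.2 (singleton_subset_iff.2 hx)) ?_⟩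
    intro u v hu hv huv
    obtain ⟨c, hc0, hc⟩ := (hray (u + v)).2 huv
    obtain rfl | hcpos := hc0.eq_or_lt
    · have hu0 : u = 0 := eq_zero_of_mem_of_neg_mem hC hu
        (neg_eq_of_add_eq_zero_right (hc.trans (zero_smul ℝ x)) ▸ hv)
      exact hu0 ▸ zero_mem _
    · have hcu : c⁻¹ • u ∈ hull ℝ {x} := by
        refine (hext _ (smul_mem C (inv_nonneg.2 hc0) hu) _ (smul_mem C (inv_nonneg.2 hc0) hv) ?_).1
        rw [← smul_add, hc, inv_smul_smul₀ hcpos.ne']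
      simpa [smul_inv_smul₀ hcpos.ne'] using smul_mem _ hc0 hcu
  · rintro ⟨hx0, hface⟩
    have hx := Submodule.mem_span_singleton_self (R := {c : ℝ // 0 ≤ c}) x
    refine ⟨hface.le hx, hx0, fun y hy z hz hyz ↦ ?_⟩
    have hyzx : y + z ∈ hull ℝ {x} := by rwa [← hyz]
    exact ⟨hface.mem_of_add_mem_left hy hz hyzx, hface.mem_of_add_mem_right hy hz hyzx⟩

lemma extremeRays_eq_image_s3 (hS : ConicIndependent ℝ S)
    (hC : (hull ℝ S : ConvexCone ℝ (Fin n → ℝ)).Salient) :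
    ExtremeRays (hull ℝ S : Set (Fin n → ℝ)) = (fun s ↦ (hull ℝ {s} : Set (Fin n → ℝ))) '' S := by
  ext R
  simp only [ExtremeRays, setOf_nonneg_smul_eq_hull_singleton, isExtremeVec_iff hC, mem_ofPred_eq,
    mem_image]
  constructor
  · rintro ⟨x, ⟨hx0, hface⟩, rfl⟩
    obtain ⟨s, hs, hsx⟩ := exists_mem_of_isFaceOf_hull hface
      (Submodule.mem_span_singleton_self x) hx0
    exact ⟨s, hs, by rw [hull_singleton_eq_of_mem hsx (hS.ne_zero hs)]⟩
  · rintro ⟨s, hs, rfl⟩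
    exact ⟨s, ⟨hS.ne_zero hs, hS.isFaceOf_hull_singleton hC hs⟩, rfl⟩

lemma ncard_extremeRays_hull (hS : ConicIndependent ℝ S)
    (hC : (hull ℝ S : ConvexCone ℝ (Fin n → ℝ)).Salient) :
    (ExtremeRays (hull ℝ S : Set (Fin n → ℝ))).ncard = S.ncard := by
  rw [extremeRays_eq_image_s3 hS hC]
  exact InjOn.ncard_image fun s hs t ht h ↦
    hS.injOn_hull_singleton hs ht (SetLike.coe_injective h)

end ExtremeRays

section Interior

open scoped Pointwise

variable {E : Type*} [AddCommGroup E] [Module ℝ E] [TopologicalSpace E]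
  {C : PointedCone ℝ E} {c : ℝ} {x y : E}

lemma add_mem_interior [IsTopologicalAddGroup E] (hx : x ∈ interior (C : Set E)) (hy : y ∈ C) :
    x + y ∈ interior (C : Set E) := by
  have hsub : (C : Set E) + C ⊆ C := add_subset_iff.2 fun _ ha _ hb ↦ add_mem ha hb
  exact interior_mono hsub (subset_interior_add_left (add_mem_add hx hy))

lemma smul_mem_interior_iff [ContinuousConstSMul ℝ E] (hc : 0 < c) :
    c • x ∈ interior (C : Set E) ↔ x ∈ interior (C : Set E) := by
  have hC : c • (C : Set E) = C := by
    ext y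
    rw [mem_smul_set_iff_inv_smul_mem₀ hc.ne']
    exact C.smul_mem_iff (inv_pos.2 hc)
  conv_lhs => rw [← hC, interior_smul₀ hc.ne', smul_mem_smul_set_iff₀ hc.ne']

variable [IsTopologicalAddGroup E] [ContinuousSMul ℝ E]

lemma mem_interior_of_mem_generatedFace (hx : x ∈ interior (C : Set E)) (hy : y ∈ C)
    (hxy : x ∈ generatedFace C y) : y ∈ interior (C : Set E) := by
  obtain ⟨-, c, hc, hcx⟩ := hxy
  refine (smul_mem_interior_iff (add_pos_of_nonneg_of_pos hc one_pos)).1 ?_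
  rw [show (c + 1) • y = x + (c • y - x + y) by module]
  exact add_mem_interior hx (add_mem hcx hy)

lemma le_generatedFace_of_mem_interior (hy : y ∈ interior (C : Set E)) :
    C ≤ generatedFace C y := by
  intro x hx
  have hlim : Filter.Tendsto (fun ε : ℝ ↦ y - ε • x) (nhdsWithin 0 (Ioi 0)) (nhds y) :=
    Continuous.tendsto' (by fun_prop) 0 y (by simp) |>.mono_left nhdsWithin_le_nhds
  obtain ⟨ε, hεC, hε⟩ :=
    ((hlim.eventually (mem_interior_iff_mem_nhds.1 hy)).and self_mem_nhdsWithin).exists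
  refine ⟨hx, ε⁻¹, inv_nonneg.2 hε.le, ?_⟩
  have := PointedCone.smul_mem C (inv_nonneg.2 hε.le) hεC
  rwa [smul_sub, inv_smul_smul₀ hε.ne'] at this

lemma zero_notMem_interior (hC : (C : ConvexCone ℝ E).Salient) (hx : x ∈ C) (hx0 : x ≠ 0) :
    (0 : E) ∉ interior (C : Set E) := by
  intro h
  obtain ⟨-, c, -, hc⟩ := le_generatedFace_of_mem_interior h hx
  exact hC x hx hx0 (by simpa using hc)

end Interior

section Primitive

variable {E : Type*} [AddCommGroup E] [Module ℝ E] [TopologicalSpace E]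
  {C : PointedCone ℝ E} {T : Module.End ℝ E} {S : Set E} {x y : E}

/-- `T` maps the nonzero points of the cone `C` into its interior: the coordinate-free form of
`KPositive`. -/
def IsPositiveOn (C : PointedCone ℝ E) (T : Module.End ℝ E) : Prop :=
  ∀ x ∈ C, x ≠ 0 → T x ∈ interior (C : Set E)

/-- `T` preserves the cone `C` and some power of `T` is positive on `C`: the coordinate-free form
of `KPrimitive`. -/
structure IsPrimitiveOn (C : PointedCone ℝ E) (T : Module.End ℝ E) : Prop where
  mapsTo : MapsTo T C C
  exists_isPositiveOn_pow : ∃ k : ℕ, 0 < k ∧ IsPositiveOn C (T ^ k)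

variable [IsTopologicalAddGroup E] [ContinuousSMul ℝ E]

namespace IsPrimitiveOn

lemma map_ne_zero (hT : IsPrimitiveOn C T) (hC : (C : ConvexCone ℝ E).Salient) (hx : x ∈ C)
    (hx0 : x ≠ 0) : T x ≠ 0 := by
  obtain ⟨k, hk, hpos⟩ := hT.exists_isPositiveOn_pow
  intro hTx
  have hTk : (T ^ k) x = 0 := by
    rw [← Nat.succ_pred_eq_of_pos hk, pow_succ, Module.End.mul_apply, hTx, map_zero]
  exact zero_notMem_interior hC hx hx0 (hTk ▸ hpos x hx hx0)

lemma mapsTo_interior (hT : IsPrimitiveOn C T) :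
    MapsTo T (interior (C : Set E)) (interior (C : Set E)) := by
  intro y hy
  obtain rfl | hy0 := eq_or_ne y 0
  · rwa [map_zero]
  obtain ⟨k, hk, hpos⟩ := hT.exists_isPositiveOn_pow
  have hyC : y ∈ C := interior_subset hy
  have hTk := hpos y hyC hy0
  rw [← Nat.succ_pred_eq_of_pos hk, pow_succ', Module.End.mul_apply] at hTk
  have hmem : (T ^ k.pred) y ∈ generatedFace C y :=
    le_generatedFace_of_mem_interior hy (mapsTo_pow_s3 hT.mapsTo _ hyC)
  exact mem_interior_of_mem_generatedFace hTk (hT.mapsTo hyC)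
    (map_mem_generatedFace hT.mapsTo hmem)

lemma pow_mem_interior_mono (hT : IsPrimitiveOn C T) {i j : ℕ} (hij : i ≤ j)
    (hx : (T ^ i) x ∈ interior (C : Set E)) : (T ^ j) x ∈ interior (C : Set E) := by
  rw [← Nat.sub_add_cancel hij, pow_add, Module.End.mul_apply]
  exact mapsTo_pow_s3 hT.mapsTo_interior _ hx

lemma pow_mem_interior_of_mem_generatedFace (hT : IsPrimitiveOn C T) (hy : y ∈ C) {i j : ℕ}
    (hx : (T ^ i) x ∈ interior (C : Set E)) (hxy : x ∈ generatedFace C ((T ^ j) y)) :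
    (T ^ (i + j)) y ∈ interior (C : Set E) := by
  refine mem_interior_of_mem_generatedFace hx (mapsTo_pow_s3 hT.mapsTo _ hy) ?_
  rw [pow_add, Module.End.mul_apply]
  exact map_mem_generatedFace (mapsTo_pow_s3 hT.mapsTo i) hxy

lemma pow_mul_mem_interior (hT : IsPrimitiveOn C T) (hfin : S.Finite)
    (hS : PointedCone.hull ℝ S = C) {p : ℕ} (hp : 0 < p) (hx0 : x ≠ 0)
    (hx : x ∈ generatedFace C ((T ^ p) x)) :
    (T ^ (p * (S.ncard - 1))) x ∈ interior (C : Set E) := by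
  obtain ⟨k, -, hpos⟩ := hT.exists_isPositiveOn_pow
  have hTp : MapsTo (T ^ p) C C := mapsTo_pow_s3 hT.mapsTo p
  have hlarge : ((T ^ p) ^ max k (S.ncard - 1)) x ∈ interior (C : Set E) := by
    rw [← pow_mul]
    refine hT.pow_mem_interior_mono ?_ (hpos x hx.1 hx0)
    exact (le_max_left _ _).trans (Nat.le_mul_of_pos_left _ hp)
  rw [pow_mul]
  refine mem_interior_of_mem_generatedFace hlarge (mapsTo_pow_s3 hTp _ hx.1) ?_
  rw [← generatedFace_pow_eq hfin hS hTp hx hx0 (le_max_right k _)]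
  exact self_mem_generatedFace (mapsTo_pow_s3 hTp _ hx.1)

end IsPrimitiveOn

end Primitive

section Combinatorics

variable {V : Type*} [Finite V]

lemma existsUnique_of_forall_selection_injective {r : V → V → Prop} (hr : ∀ i, ∃ j, r i j)
    (hinj : ∀ f : V → V, (∀ i, r i (f i)) → Function.Injective f) (i : V) : ∃! j, r i j := by
  classical
  choose f hf using hr
  refine ⟨f i, hf i, fun l hl ↦ ?_⟩
  obtain ⟨i', hi'⟩ := Finite.surjective_of_injective (hinj f hf) l
  by_contra hne
  have hne' : i' ≠ i := by
    rintro rfl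
    exact hne hi'.symm
  have hupdate : ∀ v, r v (Function.update f i l v) := by
    intro v
    obtain rfl | hv := eq_or_ne v i
    · rwa [Function.update_self]
    · rw [Function.update_of_ne hv]
      exact hf v
  refine hne' (hinj _ hupdate ?_)
  rw [Function.update_of_ne hne', Function.update_self, hi']

/-- The first `Nat.card V` iterates lie in the range of `f`, which has fewer than `Nat.card V`
elements. -/
lemma exists_iterate_add_eq_of_not_injective {f : V → V} (hf : ¬ Function.Injective f) (i : V) :
    ∃ t p, 0 < p ∧ p + 1 ≤ Nat.card V ∧ p + t ≤ Nat.card V ∧ f^[p + t] i = f^[t] i := by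
  have hcard : (range f).ncard < (Finset.Icc 1 (Nat.card V)).card := by
    rw [Nat.card_Icc, Nat.add_sub_cancel, ← ncard_univ]
    exact ncard_lt_ncard (ssubset_univ_iff.2
      (range_eq_univ.not.2 (Finite.injective_iff_surjective.not.1 hf)))
  have hmaps : ∀ k ∈ Finset.Icc 1 (Nat.card V), f^[k] i ∈ (toFinite (range f)).toFinset := by
    intro k hk
    rw [Finite.mem_toFinset, ← Nat.succ_pred_eq_of_pos (Finset.mem_Icc.1 hk).1,
      Function.iterate_succ_apply']
    exact mem_range_self _
  rw [ncard_eq_toFinset_card _ (toFinite _)] at hcard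
  obtain ⟨a, ha, b, hb, hab, heq⟩ := Finset.exists_ne_map_eq_of_card_lt_of_maps_to hcard hmaps
  rw [Finset.mem_Icc] at ha hb
  wlog hlt : a < b generalizing a b
  · exact this b hb a ha hab.symm heq.symm (by lia)
  exact ⟨a, b - a, by lia, by lia, by lia, by rw [Nat.sub_add_cancel hlt.le, heq]⟩

end Combinatorics

section UpperBound

variable {E : Type*} [AddCommGroup E] [Module ℝ E] [TopologicalSpace E] [IsTopologicalAddGroup E]
  [ContinuousSMul ℝ E] {C : PointedCone ℝ E} {T : Module.End ℝ E} {S : Set E} {x s : E}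

open PointedCone

lemma ConicIndependent.subsingleton_of_mem_interior (hS : ConicIndependent ℝ S)
    (hC : (hull ℝ S : ConvexCone ℝ E).Salient) (hs : s ∈ S) (hx : x ∈ hull ℝ {s})
    (hxint : x ∈ interior (hull ℝ S : Set E)) : S.Subsingleton := by
  have hle : hull ℝ S ≤ hull ℝ {s} := (le_generatedFace_of_mem_interior hxint).trans
    (generatedFace_le (hS.isFaceOf_hull_singleton hC hs) hx)
  have heq : ∀ l ∈ S, l = s := by
    intro l hl
    refine hS.injOn_hull_singleton hl hs ?_
    exact hull_singleton_eq_of_mem (hle (subset_hull hl)) (hS.ne_zero hl)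
  exact fun a ha b hb ↦ (heq a ha).trans (heq b hb).symm

namespace IsPrimitiveOn

lemma exists_mem_generatedFace_map (hT : IsPrimitiveOn (hull ℝ S) T) (hS : ConicIndependent ℝ S)
    (hC : (hull ℝ S : ConvexCone ℝ E).Salient) (s : S) :
    ∃ l : S, (l : E) ∈ generatedFace (hull ℝ S) (T s) := by
  have hs : (s : E) ∈ hull ℝ S := subset_hull s.2
  obtain ⟨l, hl, hlT⟩ := exists_mem_of_isFaceOf_hull (generatedFace_isFaceOf (hull ℝ S) (T s))
    (self_mem_generatedFace (hT.mapsTo hs)) (hT.map_ne_zero hC hs (hS.ne_zero s.2))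
  exact ⟨⟨l, hl⟩, hlT⟩

lemma exists_selection_not_injective (hT : IsPrimitiveOn (hull ℝ S) T)
    (hS : ConicIndependent ℝ S) (hfin : S.Finite) (hC : (hull ℝ S : ConvexCone ℝ E).Salient)
    (hnt : S.Nontrivial) :
    ∃ f : S → S, (∀ s : S, (f s : E) ∈ generatedFace (hull ℝ S) (T s)) ∧
      ¬ Function.Injective f := by
  have := hfin.to_subtype
  by_contra! hinj
  have hunique := existsUnique_of_forall_selection_injective
    (hT.exists_mem_generatedFace_map hS hC) hinj
  choose f _ hfunique using hunique
  have hT_mem (s : S) : T s ∈ hull ℝ {(f s : E)} := by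
    have hself := self_mem_generatedFace (hT.mapsTo (subset_hull s.2))
    rw [eq_hull_inter_of_isFaceOf (generatedFace_isFaceOf (hull ℝ S) (T s))] at hself
    refine Submodule.span_mono ?_ hself
    rintro l ⟨hl, hlT⟩
    exact congrArg Subtype.val (hfunique s ⟨l, hl⟩ hlT)
  have hpow_mem (k : ℕ) (s : S) : (T ^ k) s ∈ hull ℝ {(f^[k] s : E)} := by
    induction k with
    | zero => exact Submodule.mem_span_singleton_self _
    | succ k ih =>
      obtain ⟨a, ha⟩ := Submodule.mem_span_singleton.1 ih
      rw [pow_succ', Module.End.mul_apply, ← ha, Function.iterate_succ_apply',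
        LinearMap.map_smul_of_tower]
      exact Submodule.smul_mem _ a (hT_mem _)
  obtain ⟨s, hs⟩ := hnt.nonempty
  obtain ⟨k, -, hpos⟩ := hT.exists_isPositiveOn_pow
  exact hnt.not_subsingleton (hS.subsingleton_of_mem_interior hC (f^[k] ⟨s, hs⟩).2
    (hpow_mem k ⟨s, hs⟩) (hpos s (subset_hull hs) (hS.ne_zero hs)))

lemma exists_closed_walk (hT : IsPrimitiveOn (hull ℝ S) T)
    (hS : ConicIndependent ℝ S) (hfin : S.Finite) (hC : (hull ℝ S : ConvexCone ℝ E).Salient)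
    (s : S) :
    ∃ (t p : ℕ) (v : S), (v : E) ∈ generatedFace (hull ℝ S) ((T ^ t) s) ∧
      (v : E) ∈ generatedFace (hull ℝ S) ((T ^ p) v) ∧ 0 < p ∧
      p * (S.ncard - 1) + t ≤ (S.ncard - 1) ^ 2 + 1 := by
  have := hfin.to_subtype
  obtain hsub | hnt := S.subsingleton_or_nontrivial
  · obtain ⟨l, hl⟩ := hT.exists_mem_generatedFace_map hS hC s
    have hls : (l : E) = s := hsub l.2 s.2
    have hcard : S.ncard - 1 = 0 :=
      Nat.sub_eq_zero_of_le (ncard_le_one_iff_subsingleton.2 hsub)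
    exact ⟨0, 1, s, self_mem_generatedFace (subset_hull s.2), by simpa only [pow_one, hls] using hl,
      one_pos, by simp [hcard]⟩
  obtain ⟨f, hf, hinj⟩ := hT.exists_selection_not_injective hS hfin hC hnt
  obtain ⟨t, p, hp, hpN, hptN, hfix⟩ := exists_iterate_add_eq_of_not_injective hinj s
  rw [Nat.card_coe_set_eq] at hpN hptN
  refine ⟨t, p, f^[t] s, iterate_mem_generatedFace subset_hull hT.mapsTo hf t s, ?_, hp, ?_⟩
  · rw [Function.iterate_add_apply] at hfix
    simpa only [hfix] using iterate_mem_generatedFace subset_hull hT.mapsTo hf p (f^[t] s)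
  · obtain ⟨N, hN⟩ : ∃ N, S.ncard = N + 2 := ⟨S.ncard - 2, by lia⟩
    rw [hN] at hpN hptN ⊢
    simp only [Nat.add_succ_sub_one]
    nlinarith

theorem pow_isPositiveOn (hT : IsPrimitiveOn (hull ℝ S) T) (hS : ConicIndependent ℝ S)
    (hfin : S.Finite) (hC : (hull ℝ S : ConvexCone ℝ E).Salient) :
    IsPositiveOn (hull ℝ S) (T ^ ((S.ncard - 1) ^ 2 + 1)) := by
  intro x hx hx0
  obtain ⟨s, hs, hsx⟩ := exists_mem_of_isFaceOf_hull (generatedFace_isFaceOf (hull ℝ S) x)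
    (self_mem_generatedFace hx) hx0
  obtain ⟨t, p, v, hvs, hvv, hp, hle⟩ := hT.exists_closed_walk hS hfin hC ⟨s, hs⟩
  have hv := hT.pow_mul_mem_interior hfin rfl hp (hS.ne_zero v.2) hvv
  have hvx := generatedFace_le (generatedFace_isFaceOf _ _)
    (map_mem_generatedFace (mapsTo_pow_s3 hT.mapsTo t) hsx) hvs
  exact hT.pow_mem_interior_mono hle (hT.pow_mem_interior_of_mem_generatedFace hx hv hvx)

end IsPrimitiveOn

end UpperBound

section PolyhedralCone

variable {n : ℕ} {C : PointedCone ℝ (Fin n → ℝ)} {K : Set (Fin n → ℝ)}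
  {A : Matrix (Fin n) (Fin n) ℝ}

open PointedCone

lemma coneGen_eq_hull_range {m : ℕ} (y : Fin m → Fin n → ℝ) :
    ConeGen y = (hull ℝ (range y) : Set (Fin n → ℝ)) := by
  ext x
  rw [SetLike.mem_coe, Submodule.mem_span_range_iff_exists_fun]
  constructor
  · rintro ⟨c, hc, rfl⟩
    exact ⟨fun j ↦ ⟨c j, hc j⟩, rfl⟩
  · rintro ⟨c, rfl⟩
    exact ⟨fun j ↦ c j, fun j ↦ (c j).2, rfl⟩

lemma salient_of_isProperCone (hC : IsProperCone (C : Set (Fin n → ℝ))) :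
    (C : ConvexCone ℝ (Fin n → ℝ)).Salient :=
  C.salient_iff_inter_neg_eq_singleton.2 hC.2.2.2.1

lemma exists_conicIndependent_hull_eq (hK : IsPolyhedralCone K) :
    ∃ S : Set (Fin n → ℝ), S.Finite ∧ ConicIndependent ℝ S ∧
      (hull ℝ S : Set (Fin n → ℝ)) = K := by
  obtain ⟨-, m, y, rfl⟩ := hK
  have hfg : (hull ℝ (range y)).FG := Submodule.fg_span (finite_range y)
  refine ⟨_, hfg.finite_generators, conicIndependent_generators hfg, ?_⟩
  exact (congrArg SetLike.coe (Submodule.span_generators _)).trans (coneGen_eq_hull_range y).symm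

lemma KPrimitive.isPrimitiveOn (hA : KPrimitive (C : Set (Fin n → ℝ)) A) :
    IsPrimitiveOn C (toLin' A) := by
  obtain ⟨hnonneg, k, hk, hpos⟩ := hA
  refine ⟨hnonneg, k, hk, ?_⟩
  rw [← toLin'_pow]
  exact hpos

theorem expnt_le (hK : IsPolyhedralCone K) (hA : KPrimitive K A) :
    expnt K A ≤ ((ExtremeRays K).ncard - 1) ^ 2 + 1 := by
  obtain ⟨S, hfin, hS, rfl⟩ := exists_conicIndependent_hull_eq hK
  have hsal := salient_of_isProperCone hK.1
  have hpos := hA.isPrimitiveOn.pow_isPositiveOn hS hfin hsal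
  rw [ncard_extremeRays_hull hS hsal]
  refine Nat.sInf_le ⟨Nat.succ_pos _, ?_⟩
  rw [← toLin'_pow] at hpos
  exact hpos

lemma lt_expnt {k : ℕ} (hA : KPrimitive (C : Set (Fin n → ℝ)) A)
    (hk : ¬ KPositive (C : Set (Fin n → ℝ)) (A ^ k)) : k < expnt (C : Set (Fin n → ℝ)) A := by
  refine lt_of_not_ge fun hle ↦ hk fun x hx hx0 ↦ ?_
  have hpow (j : ℕ) : (A ^ j) *ᵥ x = (toLin' A ^ j) x := by rw [← toLin'_pow, toLin'_apply]
  have hint := (Nat.sInf_mem hA.2).2 x hx hx0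
  rw [hpow] at hint ⊢
  exact hA.isPrimitiveOn.pow_mem_interior_mono hle hint

end PolyhedralCone

section Orthant

variable {n : ℕ} {A : Matrix (Fin n) (Fin n) ℝ}

lemma interior_Ici_zero {ι : Type*} [Finite ι] :
    interior (Ici (0 : ι → ℝ)) = {x | ∀ i, 0 < x i} := by
  rw [← pi_univ_Ici, interior_pi_set finite_univ]
  simp [Set.pi]

lemma hull_range_single :
    (PointedCone.hull ℝ (range fun i : Fin n ↦ Pi.single i (1 : ℝ)) : Set (Fin n → ℝ)) = Ici 0 := by
  rw [← coneGen_eq_hull_range]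
  ext x
  have hsum (c : Fin n → ℝ) : ∑ j, c j • Pi.single j (1 : ℝ) = c := by
    simpa using (pi_eq_sum_univ' c).symm
  simp only [ConeGen, hsum]
  constructor
  · rintro ⟨c, hc, rfl⟩
    exact hc
  · exact fun hx ↦ ⟨x, hx, rfl⟩

lemma isPolyhedralCone_Ici_zero : IsPolyhedralCone (Ici (0 : Fin n → ℝ)) := by
  refine ⟨⟨isClosed_Ici, fun x hx y hy ↦ add_nonneg (mem_Ici.1 hx) (mem_Ici.1 hy),
    fun c hc x hx ↦ smul_nonneg hc (mem_Ici.1 hx), ?_, ?_⟩, n, fun i ↦ Pi.single i 1, ?_⟩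
  · ext x
    simp [le_antisymm_iff, and_comm]
  · rw [interior_Ici_zero]
    exact ⟨1, fun _ ↦ one_pos⟩
  · rw [coneGen_eq_hull_range, hull_range_single]

lemma ncard_extremeRays_Ici_zero : (ExtremeRays (Ici (0 : Fin n → ℝ))).ncard = n := by
  have hli := (Pi.basisFun ℝ (Fin n)).linearIndependent
  have hrange : range (Pi.basisFun ℝ (Fin n)) = range fun i : Fin n ↦ Pi.single i (1 : ℝ) :=
    congrArg range (funext (Pi.basisFun_apply ℝ (Fin n)))
  have hproper := (isPolyhedralCone_Ici_zero (n := n)).1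
  rw [← hull_range_single, ← hrange] at hproper ⊢
  rw [ncard_extremeRays_hull (conicIndependent_of_linearIndepOn hli.linearIndepOn_id)
    (salient_of_isProperCone hproper), ncard_range_of_injective hli.injective, Nat.card_fin]

lemma kNonneg_Ici_zero_iff : KNonneg (Ici (0 : Fin n → ℝ)) A ↔ ∀ i j, 0 ≤ A i j := by
  constructor
  · intro h i j
    simpa using h (Pi.single j 1) (Pi.single_nonneg.2 zero_le_one) i
  · exact fun h x hx i ↦ dotProduct_nonneg_of_nonneg (h i) hx

lemma kPositive_Ici_zero_iff : KPositive (Ici (0 : Fin n → ℝ)) A ↔ ∀ i j, 0 < A i j := by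
  simp only [KPositive, interior_Ici_zero, mem_ofPred_eq]
  constructor
  · intro h i j
    simpa using h (Pi.single j 1) (Pi.single_nonneg.2 zero_le_one) (by simp) i
  · intro h x hx hx0 i
    obtain ⟨j, hj⟩ := Function.ne_iff.1 hx0
    refine Finset.sum_pos' (fun l _ ↦ mul_nonneg (h i l).le (hx l)) ⟨j, Finset.mem_univ j, ?_⟩
    exact mul_pos (h i j) ((hx j).lt_of_ne' hj)

lemma kPrimitive_Ici_zero_iff : KPrimitive (Ici (0 : Fin n → ℝ)) A ↔ A.IsPrimitive := by
  simp only [KPrimitive, kNonneg_Ici_zero_iff, kPositive_Ici_zero_iff, Matrix.isPrimitive_iff]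

end Orthant

section NonnegativeMatrix

variable {ι R : Type*} [Fintype ι] [DecidableEq ι] [Ring R] [LinearOrder R]
  [IsStrictOrderedRing R] {A : Matrix ι ι R} {a b : ℕ} {i j l : ι}

lemma pow_add_apply_pos (hA : ∀ i j, 0 ≤ A i j) (hil : 0 < (A ^ a) i l) (hlj : 0 < (A ^ b) l j) :
    0 < (A ^ (a + b)) i j := by
  rw [pow_add, mul_apply]
  exact Finset.sum_pos'
    (fun x _ ↦ mul_nonneg (pow_apply_nonneg hA a i x) (pow_apply_nonneg hA b x j))
    ⟨l, Finset.mem_univ l, mul_pos hil hlj⟩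

lemma pow_mul_apply_self_pos (hA : ∀ i j, 0 ≤ A i j) (hi : 0 < (A ^ a) i i) (k : ℕ) :
    0 < (A ^ (k * a)) i i := by
  induction k with
  | zero => simp
  | succ k ih =>
    rw [Nat.succ_mul]
    exact pow_add_apply_pos hA ih hi

lemma isPrimitive_of_coprime_closed_walks (hA : A.IsIrreducible) (hab : a.Coprime b)
    (ha : 0 < (A ^ a) l l) (hb : 0 < (A ^ b) l l) : A.IsPrimitive := by
  have hnonneg := hA.nonneg
  choose d _ hd using (isIrreducible_iff_exists_pow_pos hnonneg).1 hA
  let inDist := ∑ i, d i l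
  let outDist := ∑ j, d l j
  refine ⟨hnonneg, inDist + a.pred * b.pred + outDist + 1, Nat.succ_pos _, fun i j ↦ ?_⟩
  have hto : d i l ≤ inDist :=
    Finset.single_le_sum (f := (d · l)) (fun _ _ ↦ Nat.zero_le _) (Finset.mem_univ i)
  have hfrom : d l j ≤ outDist := Finset.single_le_sum (fun _ _ ↦ Nat.zero_le _) (Finset.mem_univ j)
  obtain ⟨u, v, huv⟩ := Nat.exists_add_mul_eq_of_gcd_dvd_of_mul_pred_le a b
    (inDist - d i l + a.pred * b.pred + (outDist - d l j) + 1) (by simp [hab.gcd_eq_one]) (by lia)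
  have hclosed : 0 < (A ^ (u * a + v * b)) l l :=
    pow_add_apply_pos hnonneg (pow_mul_apply_self_pos hnonneg ha u)
      (pow_mul_apply_self_pos hnonneg hb v)
  have hwalk := pow_add_apply_pos hnonneg (pow_add_apply_pos hnonneg (hd i l) hclosed) (hd l j)
  convert hwalk using 2
  lia

end NonnegativeMatrix

section Wielandt

variable {p : ℕ}

open Fin.CommRing

/-- Wielandt's matrix of order `p + 1`: column `j` is the indicator of the successors of `j` in the
digraph formed by the cycle `0 → 1 → ⋯ → p → 0`, with addition in `Fin (p + 1)` modulo `p + 1`,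
and the chord `p → 1`. -/
def wielandt (p : ℕ) : Matrix (Fin (p + 1)) (Fin (p + 1)) ℝ :=
  of fun i j ↦ if i = j + 1 ∨ (i = 1 ∧ j = Fin.last p) then 1 else 0

lemma wielandt_nonneg (i j : Fin (p + 1)) : 0 ≤ wielandt p i j := by
  simp only [wielandt, of_apply]
  split_ifs <;> norm_num

lemma wielandt_pow_add_natCast_pos (d : ℕ) (j : Fin (p + 1)) :
    0 < (wielandt p ^ d) (j + d) j := by
  induction d with
  | zero => simp
  | succ d ih =>
    rw [add_comm d 1]
    refine pow_add_apply_pos wielandt_nonneg (l := j + d) ?_ ih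
    simp [wielandt, add_assoc, add_comm (1 : Fin (p + 1))]

lemma isIrreducible_wielandt : (wielandt p).IsIrreducible := by
  refine (isIrreducible_iff_exists_pow_pos wielandt_nonneg).2 fun i j ↦
    ⟨(i - j).val + (p + 1), Nat.succ_pos _, ?_⟩
  have h := wielandt_pow_add_natCast_pos ((i - j).val + (p + 1)) j
  simpa using h

lemma wielandt_pow_last_last_pos : 0 < (wielandt p ^ p) (Fin.last p) (Fin.last p) := by
  cases p with
  | zero => simp
  | succ q =>
    have hcycle := wielandt_pow_add_natCast_pos q (1 : Fin (q + 2))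
    rw [show 1 + (q : Fin (q + 2)) = Fin.last (q + 1) by
      rw [← Fin.natCast_eq_last, Nat.cast_add_one, add_comm (1 : Fin (q + 2))]] at hcycle
    refine pow_add_apply_pos wielandt_nonneg hcycle ?_
    simp [wielandt]

lemma isPrimitive_wielandt : (wielandt p).IsPrimitive := by
  have hcycle := wielandt_pow_add_natCast_pos (p + 1) (Fin.last p)
  rw [show ((p + 1 : ℕ) : Fin (p + 1)) = 0 by simp, add_zero] at hcycle
  exact isPrimitive_of_coprime_closed_walks isIrreducible_wielandt (by simp) hcycle
    wielandt_pow_last_last_pos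

lemma exists_eq_of_wielandt_pow_apply_zero_ne_zero (hp : p ≠ 0) {k : ℕ} {i : Fin (p + 1)}
    (h : (wielandt p ^ k) i 0 ≠ 0) : ∃ a b, k = i + a * (p + 1) + b * p := by
  induction k generalizing i with
  | zero =>
    have hi : i = 0 := by simpa [one_apply] using h
    exact ⟨0, 0, by simp [hi]⟩
  | succ k ih =>
    rw [pow_succ', mul_apply] at h
    obtain ⟨l, -, hl⟩ := Finset.exists_ne_zero_of_sum_ne_zero h
    obtain ⟨a, b, hk⟩ := ih (right_ne_zero_of_mul hl)
    have harc : i = l + 1 ∨ (i = 1 ∧ l = Fin.last p) := by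
      simpa [wielandt, or_iff_not_imp_left] using left_ne_zero_of_mul hl
    obtain rfl | ⟨rfl, rfl⟩ := harc
    · obtain rfl | hlast := eq_or_ne l (Fin.last p)
      · refine ⟨a + 1, b, ?_⟩
        simp only [Fin.last_add_one, Fin.val_zero, Fin.val_last] at hk ⊢
        lia
      · refine ⟨a, b, ?_⟩
        rw [Fin.val_add_one_of_lt (Fin.lt_last_iff_ne_last.2 hlast)]
        lia
    · refine ⟨a, b + 1, ?_⟩
      rw [Fin.val_one', Nat.mod_eq_of_lt (by lia)]
      simp only [Fin.val_last] at hk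
      lia

lemma wielandt_pow_succ_zero_apply (k : ℕ) (j : Fin (p + 1)) :
    (wielandt p ^ (k + 1)) 0 j = (wielandt p ^ k) (Fin.last p) j := by
  rw [pow_succ', mul_apply, Finset.sum_eq_single (Fin.last p)]
  · simp [wielandt]
  · intro l _ hl
    have harc : ¬ ((0 : Fin (p + 1)) = l + 1 ∨ ((0 : Fin (p + 1)) = 1 ∧ l = Fin.last p)) := by
      rintro (h | ⟨-, h⟩)
      · refine hl (add_right_cancel (b := 1) ?_)
        rw [← h, Fin.last_add_one]
      · exact hl h
    simp only [wielandt, of_apply, if_neg harc, zero_mul]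
  · simp

lemma wielandt_pow_sq_zero_zero (hp : p ≠ 0) : (wielandt p ^ p ^ 2) 0 0 = 0 := by
  by_contra h
  have hsq : p ^ 2 = p ^ 2 - 1 + 1 := (Nat.sub_add_cancel (pow_pos (Nat.pos_of_ne_zero hp) 2)).symm
  rw [hsq, wielandt_pow_succ_zero_apply] at h
  obtain ⟨a, b, hab⟩ := exists_eq_of_wielandt_pow_apply_zero_ne_zero hp h
  have hcop : (p + 1).Coprime p := by simp
  refine hcop.mul_add_mul_ne_mul a.succ_ne_zero b.succ_ne_zero ?_
  simp only [Fin.val_last] at hab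
  nlinarith

lemma kPrimitive_wielandt : KPrimitive (Ici 0) (wielandt p) :=
  kPrimitive_Ici_zero_iff.2 isPrimitive_wielandt

lemma sq_lt_expnt_wielandt : p ^ 2 < expnt (Ici 0) (wielandt p) := by
  obtain rfl | hp := eq_or_ne p 0
  · exact (Nat.sInf_mem kPrimitive_wielandt.2).1
  have hW := kPrimitive_wielandt (p := p)
  rw [← hull_range_single] at hW ⊢
  refine lt_expnt hW fun hpos ↦ ?_
  rw [hull_range_single, kPositive_Ici_zero_iff] at hpos
  exact (hpos 0 0).ne' (wielandt_pow_sq_zero_zero hp)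

theorem expnt_wielandt : expnt (Ici 0) (wielandt p) = p ^ 2 + 1 := by
  refine le_antisymm ?_ sq_lt_expnt_wielandt
  simpa [ncard_extremeRays_Ici_zero] using
    expnt_le isPolyhedralCone_Ici_zero (kPrimitive_wielandt (p := p))

end Wielandt

theorem stmt_3_general (m : ℕ) (hm : 0 < m) :
    IsGreatest {γ | ∃ (n : ℕ) (K : Set (Fin n → ℝ)) (A : Matrix (Fin n) (Fin n) ℝ),
      IsPolyhedralCone K ∧ (ExtremeRays K).ncard = m ∧ KPrimitive K A ∧ expnt K A = γ}
      ((m - 1) ^ 2 + 1) := by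
  obtain ⟨p, rfl⟩ : ∃ p, m = p + 1 := ⟨m - 1, by lia⟩
  refine ⟨⟨p + 1, Ici 0, wielandt p, isPolyhedralCone_Ici_zero, ncard_extremeRays_Ici_zero,
    kPrimitive_wielandt, expnt_wielandt⟩, ?_⟩
  rintro _ ⟨n, K, A, hK, hcard, hA, rfl⟩
  exact hcard ▸ expnt_le hK hA

/-- For each `m ≥ 3`: (a) every `K`-primitive matrix on a polyhedral cone (of any dimension)
with exactly `m` extreme rays has exponent at most `m² - 2m + 2`; (b) this bound is attained.
Hence the maximum of `γ(K)` over all polyhedral cones with `m` extreme rays is `m² - 2m + 2`. -/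
theorem stmt_3 (m : ℕ) (hm : 3 ≤ m) :
    (∀ (n : ℕ) (K : Set (Fin n → ℝ)) (A : Matrix (Fin n) (Fin n) ℝ),
      IsPolyhedralCone K → (ExtremeRays K).ncard = m → KPrimitive K A →
      expnt K A ≤ m ^ 2 - 2 * m + 2) ∧
    (∃ (n : ℕ) (K : Set (Fin n → ℝ)) (A : Matrix (Fin n) (Fin n) ℝ),
      IsPolyhedralCone K ∧ (ExtremeRays K).ncard = m ∧ KPrimitive K A ∧
      expnt K A = m ^ 2 - 2 * m + 2) := by
  obtain ⟨hmax, hle⟩ := stmt_3_general m (by lia)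
  have hm2 : m ^ 2 - 2 * m + 2 = (m - 1) ^ 2 + 1 := by
    obtain ⟨p, rfl⟩ := Nat.exists_eq_add_of_le' hm
    lia
  exact hm2 ▸ ⟨fun n K A hK hcard hA ↦ hle ⟨n, K, A, hK, hcard, hA, rfl⟩, hmax⟩
end
end

section
/- Let n ≥ 3 be an integer. If n is odd, then every K ∈ P(n+1,n) and every K-primitive matrix A satisfy γ(A) ≤ n² − n + 1, and there exist K ∈ P(n+1,n) and a K-primitive matrix A with γ(A) = n² − n + 1. If n is even, then every K ∈ P(n+1,n) and every K-primitive matrix A satisfy γ(A) ≤ n² − n, and there exist K ∈ P(n+1,n) and a K-primitive matrix A with γ(A) = n² − n. In other words, the maximum of γ(K) over all n-dimensional minimal cones equals n² − n + 1 if n is odd and n² − n if n is even. -/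
open Matrix Set Real

noncomputable section

/-!
Write `u ⪰ v` when `c • u - v ∈ K` for some `c > 0`; a vector of `K` is interior exactly when it
dominates every generator. Extreme rays `x i`, with an edge `i → j` whenever `A x i ⪰ x j`, form a
digraph. If a walk of length `t` leads from `u` to a vector `v` on a closed walk of length `l`,
then `A ^ (t + l (n - 1)) u` is interior: by Cayley–Hamilton the vectors
`v, A ^ l v, …, A ^ (l (n - 1)) v` span all the later `A ^ (l k) v`, which are interior for large
`k`, and the last of them dominates the others. Primitivity forces some vertex to have two
successors, so one can choose a successor function on the `m` extreme rays that is not surjective,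
and following it gives such a walk with `t + l ≤ m` and `t ≥ 1`. Hence `γ(A) ≤ (n - 1) (m - 1) + 1`.

For `m = n + 1` an exponent above `n (n - 1)` leaves no freedom: the digraph is Wielandt's, and `K`
is generated by `y, A y, …, A ^ n y` with `A ^ (n + 1) y = p y + r A y`, `p, r > 0`. The only linear
relation between these generators is given by the characteristic polynomial `χ` of `A`, so
`(X - a) χ = X ^ (n + 1) - r X - p` for some `a`. All coefficients of `χ` would be positive if
`a > 0`; hence `a < 0`, and the coefficients of `χ` in degrees `n, …, 1` are `1, a, …, a ^ (n - 1)`.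
If `n` is even, both `y` and `A y` have negative coefficients. They are therefore dominated by
`A ^ (n (n - 1)) y`, which dominates `A ^ 2 y, …, A ^ n y` by the binomial theorem, a contradiction.

The bounds are attained for `a = -1`, `p = 2`, where the signs of `χ` show that a vector supported
on the right subset of the generators lies in the boundary of `K`.
-/

namespace IsProperCone

variable {n : ℕ} {K : Set (Fin n → ℝ)} {u v w : Fin n → ℝ}

theorem add_mem (hK : IsProperCone K) (hu : u ∈ K) (hv : v ∈ K) : u + v ∈ K :=
  hK.2.1 u hu v hv

theorem smul_mem (hK : IsProperCone K) {c : ℝ} (hc : 0 ≤ c) (hv : v ∈ K) : c • v ∈ K :=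
  hK.2.2.1 c hc v hv

theorem zero_mem (hK : IsProperCone K) : (0 : Fin n → ℝ) ∈ K :=
  (hK.2.2.2.1.ge (mem_singleton 0)).1

theorem eq_zero_of_neg_mem (hK : IsProperCone K) (hv : v ∈ K) (hv' : -v ∈ K) : v = 0 :=
  hK.2.2.2.1.le ⟨hv, hv'⟩

theorem nonempty_interior (hK : IsProperCone K) : (interior K).Nonempty := hK.2.2.2.2

theorem sum_mem (hK : IsProperCone K) {ι : Type*} {s : Finset ι} {f : ι → Fin n → ℝ}
    (hf : ∀ i ∈ s, f i ∈ K) : ∑ i ∈ s, f i ∈ K :=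
  Finset.sum_induction f (· ∈ K) (fun _ _ => hK.add_mem) hK.zero_mem hf

theorem add_mem_interior (hK : IsProperCone K) (hu : u ∈ interior K) (hv : v ∈ K) :
    u + v ∈ interior K :=
  interior_mono (add_subset_iff.2 fun _ ha _ hb => hK.add_mem ha hb)
    (subset_interior_add_left (add_mem_add hu hv))

open scoped Pointwise in
theorem smul_mem_interior (hK : IsProperCone K) {c : ℝ} (hc : 0 < c) (hv : v ∈ interior K) :
    c • v ∈ interior K := by
  have hsub : c • K ⊆ K := smul_set_subset_iff.2 fun _ hx => hK.smul_mem hc.le hx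
  exact interior_mono hsub (interior_smul₀ hc.ne' K ▸ smul_mem_smul_set hv)

end IsProperCone

/-- `u` dominates `v` with respect to the cone `K`: some positive multiple of `u` exceeds `v` in
the order of `K`. For `u, v ∈ K` this says that `v` lies in the face of `K` generated by `u`. -/
def Dominates {n : ℕ} (K : Set (Fin n → ℝ)) (u v : Fin n → ℝ) : Prop :=
  ∃ c : ℝ, 0 < c ∧ c • u - v ∈ K

section Dominates

variable {n : ℕ} {K : Set (Fin n → ℝ)} {u v w : Fin n → ℝ} {A : Matrix (Fin n) (Fin n) ℝ}

theorem dominates_of_sub_mem (h : u - v ∈ K) : Dominates K u v :=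
  ⟨1, one_pos, by rwa [one_smul]⟩

theorem Dominates.refl (hK : IsProperCone K) (v : Fin n → ℝ) : Dominates K v v :=
  dominates_of_sub_mem (by simpa only [sub_self] using hK.zero_mem)

theorem Dominates.trans (hK : IsProperCone K) (huv : Dominates K u v) (hvw : Dominates K v w) :
    Dominates K u w := by
  obtain ⟨a, ha, hau⟩ := huv
  obtain ⟨b, hb, hbv⟩ := hvw
  refine ⟨b * a, mul_pos hb ha, ?_⟩
  convert hK.add_mem (hK.smul_mem hb.le hau) hbv using 1
  module

theorem Dominates.add (hK : IsProperCone K) (hv : Dominates K u v) (hw : Dominates K u w) :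
    Dominates K u (v + w) := by
  obtain ⟨a, ha, hav⟩ := hv
  obtain ⟨b, hb, hbw⟩ := hw
  refine ⟨a + b, add_pos ha hb, ?_⟩
  convert hK.add_mem hav hbw using 1
  module

theorem Dominates.smul (hK : IsProperCone K) (h : Dominates K u v) (hv : v ∈ K) (p : ℝ) :
    Dominates K u (p • v) := by
  obtain ⟨c, hc, hcv⟩ := h
  refine ⟨(|p| + 1) * c, by positivity, ?_⟩
  have hp : 0 ≤ |p| + 1 - p := by linarith [le_abs_self p]
  convert hK.add_mem (hK.smul_mem (by positivity : 0 ≤ |p| + 1) hcv) (hK.smul_mem hp hv) using 1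
  module

theorem Dominates.smul_left (h : Dominates K u v) {c : ℝ} (hc : 0 < c) :
    Dominates K (c • u) v := by
  obtain ⟨a, ha, hav⟩ := h
  exact ⟨a / c, div_pos ha hc, by rwa [smul_smul, div_mul_cancel₀ a hc.ne']⟩

theorem Dominates.sum (hK : IsProperCone K) (hu : u ∈ K) {ι : Type*} {s : Finset ι}
    {f : ι → Fin n → ℝ} (hf : ∀ i ∈ s, Dominates K u (f i)) : Dominates K u (∑ i ∈ s, f i) :=
  Finset.sum_induction f (Dominates K u) (fun _ _ => Dominates.add hK)
    (dominates_of_sub_mem (by rwa [sub_zero])) hf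

theorem Dominates.mulVec (h : Dominates K u v) (hA : KNonneg K A) :
    Dominates K (A *ᵥ u) (A *ᵥ v) := by
  obtain ⟨c, hc, hcv⟩ := h
  exact ⟨c, hc, by simpa only [mulVec_sub, mulVec_smul] using hA _ hcv⟩

theorem Dominates.mem_interior (hK : IsProperCone K) (h : Dominates K u v)
    (hv : v ∈ interior K) : u ∈ interior K := by
  obtain ⟨c, hc, hcv⟩ := h
  have hcu : c • u ∈ interior K := by simpa only [add_sub_cancel] using hK.add_mem_interior hv hcv
  simpa only [inv_smul_smul₀ hc.ne'] using hK.smul_mem_interior (inv_pos.2 hc) hcu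

theorem dominates_of_mem_interior (hK : IsProperCone K) (hu : u ∈ interior K) (w : Fin n → ℝ) :
    Dominates K u w := by
  have hcont : Filter.Tendsto (fun t : ℝ => u - t • w) (nhdsWithin 0 (Ioi 0)) (nhds u) :=
    (Continuous.tendsto' (by fun_prop) 0 u (by simp)).mono_left nhdsWithin_le_nhds
  obtain ⟨t, htK, ht⟩ :=
    ((hcont.eventually (mem_interior_iff_mem_nhds.1 hu)).and self_mem_nhdsWithin).exists
  refine ⟨t⁻¹, inv_pos.2 ht, ?_⟩
  simpa only [smul_sub, inv_smul_smul₀ ht.ne'] using hK.smul_mem (inv_pos.2 ht).le htK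

theorem eq_zero_of_dominates_zero (hK : IsProperCone K) (hv : v ∈ K) (h : Dominates K 0 v) :
    v = 0 := by
  obtain ⟨c, -, hcv⟩ := h
  exact hK.eq_zero_of_neg_mem hv (by simpa only [smul_zero, zero_sub] using hcv)

end Dominates

section ConeGen

variable {n m : ℕ} {K : Set (Fin n → ℝ)} {x : Fin m → Fin n → ℝ} {u : Fin n → ℝ}

theorem coneGen_eq_span (x : Fin m → Fin n → ℝ) :
    ConeGen x = (Submodule.span NNReal (range x) : Set (Fin n → ℝ)) := by
  ext u
  simp only [ConeGen, mem_ofPred_eq, SetLike.mem_coe, Submodule.mem_span_range_iff_exists_fun]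
  constructor
  · rintro ⟨c, hc, rfl⟩
    exact ⟨fun j => ⟨c j, hc j⟩, rfl⟩
  · rintro ⟨c, rfl⟩
    exact ⟨fun j => c j, fun j => (c j).2, rfl⟩

theorem coneGen_congr {k : ℕ} {y : Fin k → Fin n → ℝ} (h : range x = range y) :
    ConeGen x = ConeGen y := by
  rw [coneGen_eq_span, coneGen_eq_span, h]

theorem mem_coneGen (x : Fin m → Fin n → ℝ) (j : Fin m) : x j ∈ ConeGen x :=
  (coneGen_eq_span x).ge (Submodule.subset_span (mem_range_self j))

theorem coneGen_smul (x : Fin m → Fin n → ℝ) {a : Fin m → ℝ} (ha : ∀ j, 0 < a j) :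
    ConeGen (fun j => a j • x j) = ConeGen x := by
  ext u
  constructor
  · rintro ⟨c, hc, rfl⟩
    exact ⟨fun j => c j * a j, fun j => mul_nonneg (hc j) (ha j).le, by simp only [smul_smul]⟩
  · rintro ⟨c, hc, rfl⟩
    refine ⟨fun j => c j / a j, fun j => div_nonneg (hc j) (ha j).le, ?_⟩
    simp only [smul_smul, div_mul_cancel₀ _ (ha _).ne']

theorem IsProperCone.sum_smul_mem (hK : IsProperCone K) (hx : ∀ j, x j ∈ K) {c : Fin m → ℝ}
    (hc : ∀ j, 0 ≤ c j) : ∑ j, c j • x j ∈ K :=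
  hK.sum_mem fun j _ => hK.smul_mem (hc j) (hx j)

theorem dominates_of_coeff_pos (hK : IsProperCone K) (hx : ∀ j, x j ∈ K) {c : Fin m → ℝ}
    (hc : ∀ j, 0 ≤ c j) {j : Fin m} (hj : 0 < c j) : Dominates K (∑ i, c i • x i) (x j) := by
  have hrest : ∑ i, c i • x i - c j • x j ∈ K := by
    rw [← Finset.add_sum_erase _ _ (Finset.mem_univ j), add_sub_cancel_left]
    exact hK.sum_mem fun i _ => hK.smul_mem (hc i) (hx i)
  have hself : Dominates K (c j • x j) (x j) := (Dominates.refl hK _).smul_left hj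
  exact (dominates_of_sub_mem hrest).trans hK hself

theorem mem_interior_of_dominates_generators (hK : IsProperCone (ConeGen x))
    (hu : u ∈ ConeGen x) (h : ∀ j, Dominates (ConeGen x) u (x j)) :
    u ∈ interior (ConeGen x) := by
  obtain ⟨v, hv⟩ := hK.nonempty_interior
  obtain ⟨c, -, rfl⟩ := interior_subset hv
  refine Dominates.mem_interior hK (Dominates.sum hK hu fun j _ => ?_) hv
  exact (h j).smul hK (mem_coneGen x j) (c j)

theorem sum_smul_mem_interior (hK : IsProperCone (ConeGen x)) {c : Fin m → ℝ}
    (hc : ∀ j, 0 < c j) : ∑ j, c j • x j ∈ interior (ConeGen x) :=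
  mem_interior_of_dominates_generators hK ⟨c, fun j => (hc j).le, rfl⟩ fun j =>
    dominates_of_coeff_pos hK (mem_coneGen x) (fun i => (hc i).le) (hc j)

theorem coneGen_subset_iUnion_succAbove {x : Fin (m + 1) → Fin n → ℝ}
    (hx : ¬ LinearIndependent ℝ x) : ConeGen x ⊆ ⋃ i : Fin (m + 1), ConeGen (x ∘ i.succAbove) := by
  rintro _ ⟨c, hc, rfl⟩
  obtain ⟨α, hα, hpos⟩ : ∃ α : Fin (m + 1) → ℝ, ∑ j, α j • x j = 0 ∧ ∃ i, 0 < α i := by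
    obtain ⟨α, hα, i, hi⟩ := Fintype.not_linearIndependent_iff.1 hx
    rcases hi.lt_or_gt with hi | hi
    · exact ⟨-α, by simp [hα], i, neg_pos.2 hi⟩
    · exact ⟨α, hα, i, hi⟩
  obtain ⟨i, hi, hmin⟩ := Finset.exists_min_image {i | 0 < α i} (fun i => c i / α i)
    (hpos.imp fun i hi => by simpa using hi)
  simp only [Finset.mem_filter_univ] at hi hmin
  set t := c i / α i
  refine mem_iUnion.2 ⟨i, fun j => c (i.succAbove j) - t * α (i.succAbove j), fun j => ?_, ?_⟩
  · rcases lt_or_ge 0 (α (i.succAbove j)) with hj | hj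
    · exact sub_nonneg.2 ((le_div_iff₀ hj).1 (hmin _ hj))
    · exact sub_nonneg.2 ((mul_nonpos_of_nonneg_of_nonpos (div_nonneg (hc i) hi.le) hj).trans
        (hc _))
  · calc ∑ j, c j • x j = ∑ j, (c j - t * α j) • x j := by
          simp only [sub_smul, mul_smul, Finset.sum_sub_distrib, ← Finset.smul_sum, hα, smul_zero,
            sub_zero]
      _ = _ := by
          have hti : c i - t * α i = 0 := by rw [div_mul_cancel₀ _ hi.ne', sub_self]
          rw [Fin.sum_univ_succAbove _ i, hti, zero_smul, zero_add]
          rfl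

theorem isClosed_coneGen_of_linearIndependent (hx : LinearIndependent ℝ x) :
    IsClosed (ConeGen x) := by
  have himage : ConeGen x = Fintype.linearCombination ℝ x '' Ici 0 := by
    ext u
    simp only [ConeGen, mem_ofPred_eq, mem_image, mem_Ici, Pi.le_def, Pi.zero_apply,
      Fintype.linearCombination_apply, eq_comm]
  have hker : LinearMap.ker (Fintype.linearCombination ℝ x) = ⊥ :=
    LinearMap.ker_eq_bot.2 hx.fintypeLinearCombination_injective
  rw [himage]
  exact (LinearMap.isClosedEmbedding_of_injective hker).isClosedMap _ isClosed_Ici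

theorem isClosed_coneGen (x : Fin m → Fin n → ℝ) : IsClosed (ConeGen x) := by
  induction m with
  | zero => exact isClosed_coneGen_of_linearIndependent linearIndependent_empty_type
  | succ m ih =>
    by_cases hx : LinearIndependent ℝ x
    · exact isClosed_coneGen_of_linearIndependent hx
    · have hunion : ConeGen x = ⋃ i : Fin (m + 1), ConeGen (x ∘ i.succAbove) := by
        refine (coneGen_subset_iUnion_succAbove hx).antisymm (iUnion_subset fun i => ?_)
        simp only [coneGen_eq_span]
        exact Submodule.span_mono (range_comp_subset_range _ _)
      rw [hunion]
      exact isClosed_iUnion_of_finite fun i => ih _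

end ConeGen

/-- A finite family is irredundant if no member lies in the cone generated by the others; the
irredundant families are the minimal generating families of finitely generated cones. -/
def Irredundant {n m : ℕ} (x : Fin m → Fin n → ℝ) : Prop :=
  ∀ j, x j ∉ Submodule.span NNReal (x '' {j}ᶜ)

/-- The ray spanned by `x`, in the form in which it occurs in `ExtremeRays`. -/
def rayOf {n : ℕ} (x : Fin n → ℝ) : Set (Fin n → ℝ) :=
  {y | ∃ c : ℝ, 0 ≤ c ∧ y = c • x}

section ExtremeRays

variable {n m : ℕ} {K : Set (Fin n → ℝ)} {x : Fin m → Fin n → ℝ} {u v w : Fin n → ℝ}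

theorem range_eq_insert_image_compl {α β : Type*} (f : α → β) (a : α) :
    range f = insert (f a) (f '' {a}ᶜ) := by
  rw [insert_eq, ← image_singleton, ← image_union, union_compl_self, image_univ]

theorem exists_irredundant_coneGen_eq (x : Fin m → Fin n → ℝ) :
    ∃ (k : ℕ) (y : Fin k → Fin n → ℝ), Irredundant y ∧ ConeGen y = ConeGen x := by
  induction m with
  | zero => exact ⟨0, x, fun j => j.elim0, rfl⟩
  | succ m ih =>
    by_cases hx : Irredundant x
    · exact ⟨m + 1, x, hx, rfl⟩
    · simp only [Irredundant, not_forall, not_not] at hx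
      obtain ⟨j, hj⟩ := hx
      have himage : x '' {j}ᶜ = range (x ∘ j.succAbove) := by
        rw [range_comp, Fin.range_succAbove]
      have hspan : Submodule.span NNReal (range x) = Submodule.span NNReal (x '' {j}ᶜ) := by
        rw [range_eq_insert_image_compl x j, Submodule.span_insert_eq_span hj]
      obtain ⟨k, y, hy, hyx⟩ := ih (x ∘ j.succAbove)
      exact ⟨k, y, hy, by rw [hyx, coneGen_eq_span, coneGen_eq_span, hspan, himage]⟩

theorem exists_eq_smul_add_of_mem_coneGen (hu : u ∈ ConeGen x) (j : Fin m) :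
    ∃ a : NNReal, ∃ u' ∈ Submodule.span NNReal (x '' {j}ᶜ), u = a • x j + u' := by
  rwa [coneGen_eq_span, range_eq_insert_image_compl x j, SetLike.mem_coe,
    Submodule.mem_span_insert] at hu

theorem Irredundant.exists_eq_smul_of_add_eq (hx : Irredundant x) (hK : IsProperCone (ConeGen x))
    {j : Fin m} (hu : u ∈ ConeGen x) (hv : v ∈ ConeGen x) (huv : x j = u + v) :
    ∃ a : ℝ, 0 ≤ a ∧ u = a • x j := by
  obtain ⟨a, u', hu', rfl⟩ := exists_eq_smul_add_of_mem_coneGen hu j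
  obtain ⟨b, v', hv', rfl⟩ := exists_eq_smul_add_of_mem_coneGen hv j
  have hspan : ∀ {y}, y ∈ Submodule.span NNReal (x '' {j}ᶜ) → y ∈ ConeGen x := fun hy =>
    (coneGen_eq_span x).ge (Submodule.span_mono (image_subset_range _ _) hy)
  have hrest : (1 - a - b : ℝ) • x j = u' + v' := by
    calc (1 - a - b : ℝ) • x j = x j - (a • x j + b • x j) := by
          simp only [NNReal.smul_def]; module
      _ = u' + v' := by nth_rw 1 [huv]; abel
  have hab : (1 - a - b : ℝ) ≤ 0 := by
    by_contra! hpos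
    refine hx j ?_
    have hxj : x j = (⟨(1 - a - b)⁻¹, (inv_pos.2 hpos).le⟩ : NNReal) • (u' + v') := by
      rw [← hrest]
      exact (inv_smul_smul₀ hpos.ne' _).symm
    rw [hxj]
    exact Submodule.smul_mem _ _ (add_mem hu' hv')
  have hu'0 : u' = 0 := by
    refine hK.eq_zero_of_neg_mem (hspan hu') ?_
    have hneg : -u' = v' + (-(1 - a - b) : ℝ) • x j := by rw [neg_smul, hrest]; abel
    rw [hneg]
    exact hK.add_mem (hspan hv') (hK.smul_mem (neg_nonneg.2 hab) (mem_coneGen x j))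
  exact ⟨a, a.2, by rw [hu'0, add_zero]; rfl⟩

theorem Irredundant.ne_zero (hx : Irredundant x) (j : Fin m) : x j ≠ 0 := fun h =>
  hx j (h ▸ Submodule.zero_mem _)

theorem Irredundant.isExtremeVec (hx : Irredundant x) (hK : IsProperCone (ConeGen x))
    (j : Fin m) : IsExtremeVec (ConeGen x) (x j) :=
  ⟨mem_coneGen x j, hx.ne_zero j, fun _ hu _ hv huv =>
    ⟨hx.exists_eq_smul_of_add_eq hK hu hv huv,
      hx.exists_eq_smul_of_add_eq hK hv hu (huv.trans (add_comm _ _))⟩⟩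

theorem IsExtremeVec.exists_eq_smul_of_dominates (hK : IsProperCone K) (hw : IsExtremeVec K w)
    (hv : v ∈ K) (h : Dominates K w v) : ∃ a : ℝ, 0 ≤ a ∧ v = a • w := by
  obtain ⟨c, hc, hcv⟩ := h
  have hsplit : w = c⁻¹ • v + c⁻¹ • (c • w - v) := by
    rw [← smul_add, add_sub_cancel, inv_smul_smul₀ hc.ne']
  obtain ⟨⟨a, ha, hav⟩, -⟩ := hw.2.2 _ (hK.smul_mem (inv_pos.2 hc).le hv) _
    (hK.smul_mem (inv_pos.2 hc).le hcv) hsplit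
  exact ⟨c * a, by positivity, by rw [mul_smul, ← hav, smul_inv_smul₀ hc.ne']⟩

theorem IsExtremeVec.notMem_interior (hn : 2 ≤ n) (hK : IsProperCone K) (hw : IsExtremeVec K w) :
    w ∉ interior K := by
  intro hint
  have hmul : ∀ v : Fin n → ℝ, ∃ c : ℝ, c • w = v := by
    intro v
    obtain ⟨c, -, hcv⟩ := dominates_of_mem_interior hK hint v
    obtain ⟨a, -, ha⟩ := hw.exists_eq_smul_of_dominates hK hcv
      (dominates_of_mem_interior hK hint _)
    exact ⟨c - a, by rw [sub_smul, ← ha, sub_sub_cancel]⟩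
  have hrank := finrank_le_one w hmul
  rw [Module.finrank_fin_fun] at hrank
  omega

theorem IsExtremeVec.exists_generator (hK : IsProperCone (ConeGen x))
    (hw : IsExtremeVec (ConeGen x) w) : ∃ j, ∃ a : ℝ, 0 < a ∧ x j = a • w := by
  obtain ⟨c, hc, hwc⟩ := hw.1
  obtain ⟨j, -, hj⟩ := Finset.exists_ne_zero_of_sum_ne_zero (hwc ▸ hw.2.1)
  rw [smul_ne_zero_iff] at hj
  have hdom : Dominates (ConeGen x) w (x j) :=
    hwc ▸ dominates_of_coeff_pos hK (mem_coneGen x) hc ((hc j).lt_of_ne' hj.1)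
  obtain ⟨a, ha, hxj⟩ := hw.exists_eq_smul_of_dominates hK (mem_coneGen x j) hdom
  exact ⟨j, a, ha.lt_of_ne' fun h0 => hj.2 (by rw [hxj, h0, zero_smul]), hxj⟩

theorem rayOf_smul {a : ℝ} (ha : 0 < a) (w : Fin n → ℝ) : rayOf (a • w) = rayOf w := by
  ext y
  constructor
  · rintro ⟨c, hc, rfl⟩
    exact ⟨c * a, by positivity, smul_smul ..⟩
  · rintro ⟨c, hc, rfl⟩
    exact ⟨c / a, by positivity, by rw [smul_smul, div_mul_cancel₀ _ ha.ne']⟩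

theorem self_mem_rayOf (w : Fin n → ℝ) : w ∈ rayOf w := ⟨1, zero_le_one, (one_smul ℝ w).symm⟩

theorem Irredundant.extremeRays_eq_range (hx : Irredundant x) (hK : IsProperCone (ConeGen x)) :
    ExtremeRays (ConeGen x) = range fun j => rayOf (x j) := by
  ext R
  constructor
  · rintro ⟨w, hw, rfl⟩
    obtain ⟨j, a, ha, hxj⟩ := hw.exists_generator hK
    exact ⟨j, (congrArg rayOf hxj).trans (rayOf_smul ha w)⟩
  · rintro ⟨j, rfl⟩
    exact ⟨x j, hx.isExtremeVec hK j, rfl⟩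

theorem Irredundant.rayOf_injective (hx : Irredundant x) :
    Function.Injective fun j => rayOf (x j) := by
  intro i j hij
  by_contra hne
  obtain ⟨c, hc, hij⟩ : x i ∈ rayOf (x j) :=
    hij.subset (self_mem_rayOf (x i))
  have hj : x j ∈ Submodule.span NNReal (x '' {i}ᶜ) :=
    Submodule.subset_span (mem_image_of_mem x (Ne.symm hne))
  exact hx i (hij ▸ Submodule.smul_mem _ (⟨c, hc⟩ : NNReal) hj)

theorem Irredundant.memP (hx : Irredundant x) (hK : IsProperCone (ConeGen x)) :
    MemP m (ConeGen x) := by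
  refine ⟨⟨hK, m, x, rfl⟩, ?_⟩
  rw [hx.extremeRays_eq_range hK, ← image_univ, ncard_image_of_injective _ hx.rayOf_injective,
    ncard_univ, Nat.card_fin]

theorem MemP.exists_irredundant (hK : MemP m K) :
    ∃ x : Fin m → Fin n → ℝ, Irredundant x ∧ K = ConeGen x := by
  obtain ⟨⟨hproper, k, y, rfl⟩, hcard⟩ := hK
  obtain ⟨l, x, hx, hxy⟩ := exists_irredundant_coneGen_eq y
  rw [← hxy] at hproper hcard ⊢
  obtain rfl : l = m := (hx.memP hproper).2.symm.trans hcard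
  exact ⟨x, hx, rfl⟩

end ExtremeRays

section Primitive

variable {n m : ℕ} {K : Set (Fin n → ℝ)} {A : Matrix (Fin n) (Fin n) ℝ}
  {x : Fin m → Fin n → ℝ} {u v w : Fin n → ℝ}

theorem KNonneg.pow (hA : KNonneg K A) (k : ℕ) : KNonneg K (A ^ k) := by
  induction k with
  | zero => exact fun u hu => by rwa [pow_zero, one_mulVec]
  | succ k ih => exact fun u hu => by rw [pow_succ, ← mulVec_mulVec]; exact ih _ (hA _ hu)

theorem kNonneg_coneGen (hK : IsProperCone (ConeGen x)) (hx : ∀ j, A *ᵥ x j ∈ ConeGen x) :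
    KNonneg (ConeGen x) A := by
  rintro _ ⟨c, hc, rfl⟩
  simpa only [mulVec_sum, mulVec_smul] using hK.sum_smul_mem hx hc

theorem kPositive_coneGen (hK : IsProperCone (ConeGen x)) (hA : KNonneg (ConeGen x) A)
    (h : ∀ j, A *ᵥ x j ∈ interior (ConeGen x)) : KPositive (ConeGen x) A := by
  rintro _ ⟨c, hc, rfl⟩ hne
  obtain ⟨j, -, hj⟩ := Finset.exists_ne_zero_of_sum_ne_zero hne
  have hdom := dominates_of_coeff_pos hK (mem_coneGen x) hc
    ((hc j).lt_of_ne' (left_ne_zero_of_smul hj))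
  exact (hdom.mulVec hA).mem_interior hK (h j)

theorem KPrimitive.mulVec_mem_interior (hK : IsProperCone K) (hA : KPrimitive K A)
    (hu : u ∈ interior K) : A *ᵥ u ∈ interior K := by
  rcases eq_or_ne u 0 with rfl | hu0
  · rwa [mulVec_zero]
  · obtain ⟨k, hk, hpos⟩ := hA.2
    have hpow : A *ᵥ (A ^ (k - 1) *ᵥ u) = A ^ k *ᵥ u := by
      rw [mulVec_mulVec, mul_pow_sub_one hk.ne']
    refine ((dominates_of_mem_interior hK hu (A ^ (k - 1) *ᵥ u)).mulVec hA.1).mem_interior hK ?_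
    exact hpow ▸ hpos u (interior_subset hu) hu0

theorem KPrimitive.pow_mulVec_mem_interior_of_le (hK : IsProperCone K) (hA : KPrimitive K A)
    {k l : ℕ} (hkl : k ≤ l) (hu : A ^ k *ᵥ u ∈ interior K) : A ^ l *ᵥ u ∈ interior K := by
  induction l, hkl using Nat.le_induction with
  | base => exact hu
  | succ l _ ih => simpa only [pow_succ', ← mulVec_mulVec] using hA.mulVec_mem_interior hK ih

theorem KPrimitive.expnt_eq (hK : IsProperCone K) (hA : KPrimitive K A) {M : ℕ} (hM : 0 < M)
    (hpos : KPositive K (A ^ M)) (hu : u ∈ K) (hu0 : u ≠ 0)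
    (hnot : A ^ (M - 1) *ᵥ u ∉ interior K) : expnt K A = M := by
  refine le_antisymm (Nat.sInf_le ⟨hM, hpos⟩) (le_csInf ⟨M, hM, hpos⟩ fun k hk => ?_)
  by_contra! hlt
  exact hnot (hA.pow_mulVec_mem_interior_of_le hK (Nat.le_sub_one_of_lt hlt) (hk.2 u hu hu0))

/-- No family of extreme vectors is mapped into itself up to scalars: its members would never
reach the interior. -/
theorem KPrimitive.eq_empty_of_forall_exists_eq_smul (hn : 2 ≤ n) (hK : IsProperCone K)
    (hA : KPrimitive K A) {ι : Type*} {z : ι → Fin n → ℝ} (hz : ∀ i, IsExtremeVec K (z i))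
    {I : Set ι} (hI : ∀ i ∈ I, ∃ j ∈ I, ∃ c : ℝ, A *ᵥ z i = c • z j) : I = ∅ := by
  by_contra! hne
  obtain ⟨i, hi⟩ := hne
  have hpow : ∀ k : ℕ, ∃ j ∈ I, ∃ c : ℝ, A ^ k *ᵥ z i = c • z j := by
    intro k
    induction k with
    | zero => exact ⟨i, hi, 1, by rw [pow_zero, one_mulVec, one_smul]⟩
    | succ k ih =>
      obtain ⟨j, hj, c, hc⟩ := ih
      obtain ⟨l, hl, d, hd⟩ := hI j hj
      exact ⟨l, hl, c * d, by rw [pow_succ', ← mulVec_mulVec, hc, mulVec_smul, hd, smul_smul]⟩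
  obtain ⟨k, -, hpos⟩ := hA.2
  obtain ⟨j, -, c, hc⟩ := hpow k
  have hint : c • z j ∈ interior K := hc ▸ hpos _ (hz i).1 (hz i).2.1
  have hdom : Dominates K (z j) (c • z j) := (Dominates.refl hK _).smul hK (hz j).1 c
  exact (hz j).notMem_interior hn hK (hdom.mem_interior hK hint)

/-- `A` leads from `u` to `v` in `t` steps. For extreme vectors `u, v` of a polyhedral cone this
says that the digraph of `A` on the extreme rays has a walk of length `t` from `u` to `v`. -/
def Reaches (K : Set (Fin n → ℝ)) (A : Matrix (Fin n) (Fin n) ℝ) (t : ℕ) (u v : Fin n → ℝ) :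
    Prop :=
  Dominates K (A ^ t *ᵥ u) v

theorem Reaches.refl (hK : IsProperCone K) (A : Matrix (Fin n) (Fin n) ℝ) (u : Fin n → ℝ) :
    Reaches K A 0 u u := by
  rw [Reaches, pow_zero, one_mulVec]
  exact Dominates.refl hK u

theorem Reaches.trans (hK : IsProperCone K) (hA : KNonneg K A) {s t : ℕ}
    (huv : Reaches K A s u v) (hvw : Reaches K A t v w) : Reaches K A (s + t) u w := by
  rw [Reaches, add_comm, pow_add, ← mulVec_mulVec]
  exact (huv.mulVec (hA.pow t)).trans hK hvw

theorem Reaches.iterate (hK : IsProperCone K) (hA : KNonneg K A) {ι : Type*}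
    {z : ι → Fin n → ℝ} {f : ι → ι} (hf : ∀ i, Reaches K A 1 (z i) (z (f i))) (t : ℕ) (i : ι) :
    Reaches K A t (z i) (z (f^[t] i)) := by
  induction t with
  | zero => exact Reaches.refl hK A _
  | succ t ih =>
    rw [Function.iterate_succ_apply']
    exact ih.trans hK hA (hf _)

theorem Reaches.mul (hK : IsProperCone K) (hA : KNonneg K A) {l : ℕ}
    (h : Reaches K A l v v) (k : ℕ) : Reaches K A (l * k) v v := by
  induction k with
  | zero => exact Reaches.refl hK A _
  | succ k ih => exact ih.trans hK hA h

theorem exists_pow_eq_sum_range_card {ι R : Type*} [Fintype ι] [DecidableEq ι] [CommRing R]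
    (A : Matrix ι ι R) (k : ℕ) :
    ∃ p : ℕ → R, A ^ k = ∑ j ∈ Finset.range (Fintype.card ι), p j • A ^ j := by
  nontriviality R
  cases isEmpty_or_nonempty ι
  · exact ⟨0, Subsingleton.elim _ _⟩
  · refine ⟨fun j => (Polynomial.X ^ k %ₘ A.charpoly).coeff j, ?_⟩
    have hne : A.charpoly ≠ 1 := fun h =>
      Fintype.card_ne_zero (by rw [← A.charpoly_natDegree_eq_dim, h, Polynomial.natDegree_one])
    rw [A.pow_eq_aeval_mod_charpoly, ← A.charpoly_natDegree_eq_dim]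
    exact Polynomial.aeval_eq_sum_range'
      (Polynomial.natDegree_modByMonic_lt _ A.charpoly_monic hne) A

/-- The faces generated by `y, A ^ l y, A ^ (2 * l) y, …` increase, and by Cayley–Hamilton the
first `n` of these vectors already span all of them. -/
theorem KPrimitive.pow_mulVec_mem_interior_of_closed (hK : IsProperCone K) (hA : KPrimitive K A)
    (hv : v ∈ K) (hv0 : v ≠ 0) {l : ℕ} (hl : 0 < l) (h : Reaches K A l v v) :
    A ^ (l * (n - 1)) *ᵥ v ∈ interior K := by
  obtain ⟨k, -, hpos⟩ := hA.2
  have hint : A ^ (l * k) *ᵥ v ∈ interior K :=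
    hA.pow_mulVec_mem_interior_of_le hK (Nat.le_mul_of_pos_left k hl) (hpos v hv hv0)
  obtain ⟨p, hp⟩ := exists_pow_eq_sum_range_card (A ^ l) k
  rw [Fintype.card_fin] at hp
  have hdom : ∀ j ∈ Finset.range n,
      Dominates K (A ^ (l * (n - 1)) *ᵥ v) (p j • (A ^ l) ^ j *ᵥ v) := by
    intro j hj
    have hj : j ≤ n - 1 := Nat.le_sub_one_of_lt (Finset.mem_range.1 hj)
    have hreach := (h.mul hK hA.1 (n - 1 - j)).mulVec (hA.1.pow (l * j))
    rw [mulVec_mulVec, ← pow_add, ← mul_add, Nat.add_sub_cancel' hj, pow_mul A l j] at hreach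
    exact hreach.smul hK ((hA.1.pow l).pow j v hv) (p j)
  refine (Dominates.sum hK (hA.1.pow _ v hv) hdom).mem_interior hK ?_
  simpa only [pow_mul A l k, hp, sum_mulVec, smul_mulVec] using hint

theorem KPrimitive.pow_mulVec_mem_interior_of_lasso (hK : IsProperCone K) (hA : KPrimitive K A)
    (hv : v ∈ K) (hv0 : v ≠ 0) {t l N : ℕ} (hl : 0 < l) (huv : Reaches K A t u v)
    (hvv : Reaches K A l v v) (hN : t + l * (n - 1) ≤ N) : A ^ N *ᵥ u ∈ interior K := by
  refine hA.pow_mulVec_mem_interior_of_le hK hN ?_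
  rw [add_comm, pow_add, ← mulVec_mulVec]
  exact (huv.mulVec (hA.1.pow _)).mem_interior hK
    (hA.pow_mulVec_mem_interior_of_closed hK hv hv0 hl hvv)

end Primitive

section Selection

variable {ι : Type*}

theorem exists_selection_not_surjective [Finite ι] {E : ι → ι → Prop} (hout : ∀ i, ∃ j, E i j)
    (hbranch : ∀ f : ι → ι, ∃ i j, E i j ∧ j ≠ f i) :
    ∃ f : ι → ι, (∀ i, E i (f i)) ∧ ¬ Function.Surjective f := by
  classical
  choose f hf using hout
  by_cases hsurj : Function.Surjective f
  · obtain ⟨i, j, hij, hne⟩ := hbranch f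
    refine ⟨Function.update f i j, fun k => ?_, fun hsurj' => ?_⟩
    · rcases eq_or_ne k i with rfl | hk
      · rwa [Function.update_self]
      · rw [Function.update_of_ne hk]
        exact hf k
    · obtain ⟨k, rfl⟩ := hsurj j
      have hki : k ≠ i := fun h => hne (h ▸ rfl)
      refine hki (Finite.injective_iff_surjective.2 hsurj' ?_)
      rw [Function.update_self, Function.update_of_ne hki]
  · exact ⟨f, hf, hsurj⟩

theorem exists_iterate_eq_of_not_surjective [Fintype ι] {f : ι → ι}
    (hf : ¬ Function.Surjective f) (i : ι) :
    ∃ t l, 1 ≤ t ∧ 1 ≤ l ∧ t + l ≤ Fintype.card ι ∧ f^[t + l] i = f^[t] i := by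
  classical
  obtain ⟨b, hb⟩ := not_forall.1 hf
  have hcard : (Finset.univ.erase b).card < (Finset.Icc 1 (Fintype.card ι)).card := by
    rw [Finset.card_erase_of_mem (Finset.mem_univ b), Nat.card_Icc, Nat.add_sub_cancel]
    exact Nat.sub_one_lt (Fintype.card_pos_iff.2 ⟨b⟩).ne'
  have hmaps : ∀ t ∈ Finset.Icc 1 (Fintype.card ι), f^[t] i ∈ Finset.univ.erase b := by
    intro t ht
    obtain ⟨s, rfl⟩ := Nat.exists_eq_add_of_le' (Finset.mem_Icc.1 ht).1
    refine Finset.mem_erase.2 ⟨fun h => hb ⟨f^[s] i, ?_⟩, Finset.mem_univ _⟩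
    rw [← Function.iterate_succ_apply' f, h]
  obtain ⟨s, hs, t, ht, hne, heq⟩ := Finset.exists_ne_map_eq_of_card_lt_of_maps_to hcard hmaps
  wlog hst : s < t generalizing s t
  · exact this t ht s hs hne.symm heq.symm (by omega)
  simp only [Finset.mem_Icc] at hs ht
  exact ⟨s, t - s, hs.1, by omega, by omega, by rw [Nat.add_sub_cancel' hst.le, heq]⟩

end Selection

section UpperBound

variable {n m : ℕ} {K : Set (Fin n → ℝ)} {A : Matrix (Fin n) (Fin n) ℝ}
  {x : Fin m → Fin n → ℝ} {u : Fin n → ℝ}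

theorem exists_eq_sum_of_dominates_imp_mem (hK : IsProperCone (ConeGen x)) (hu : u ∈ ConeGen x)
    {s : Finset (Fin m)} (h : ∀ j, Dominates (ConeGen x) u (x j) → j ∈ s) :
    ∃ c : Fin m → ℝ, (∀ j, 0 ≤ c j) ∧ u = ∑ j ∈ s, c j • x j := by
  obtain ⟨c, hc, rfl⟩ := hu
  refine ⟨c, hc, (Finset.sum_subset (Finset.subset_univ s) fun j _ hj => ?_).symm⟩
  have hcj : c j = 0 := by
    by_contra hne
    exact hj (h j (dominates_of_coeff_pos hK (mem_coneGen x) hc ((hc j).lt_of_ne' hne)))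
  rw [hcj, zero_smul]

theorem exists_eq_smul_of_dominates_imp_eq (hK : IsProperCone (ConeGen x)) (hu : u ∈ ConeGen x)
    {j : Fin m} (h : ∀ k, Dominates (ConeGen x) u (x k) → k = j) :
    ∃ c : ℝ, 0 ≤ c ∧ u = c • x j := by
  obtain ⟨c, hc0, hc⟩ := exists_eq_sum_of_dominates_imp_mem hK hu (s := {j}) (by simpa using h)
  exact ⟨c j, hc0 j, by rw [hc, Finset.sum_singleton]⟩

theorem KPrimitive.exists_reaches_not_surjective (hn : 2 ≤ n) (hK : IsProperCone (ConeGen x))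
    (hA : KPrimitive (ConeGen x) A) (hx : ∀ j, IsExtremeVec (ConeGen x) (x j)) (i₀ : Fin m) :
    ∃ f : Fin m → Fin m, (∀ i, Reaches (ConeGen x) A 1 (x i) (x (f i))) ∧
      ¬ Function.Surjective f := by
  have hsingle : ∀ i j, (∀ k, Reaches (ConeGen x) A 1 (x i) (x k) → k = j) →
      ∃ c : ℝ, A *ᵥ x i = c • x j := fun i j h =>
    (exists_eq_smul_of_dominates_imp_eq hK (hA.1 _ (hx i).1)
      (by simpa only [Reaches, pow_one] using h)).imp fun _ => And.right
  refine exists_selection_not_surjective (E := fun i j => Reaches (ConeGen x) A 1 (x i) (x j))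
    (fun i => ?_) (fun f => ?_)
  · by_contra! hnone
    have hempty := hA.eq_empty_of_forall_exists_eq_smul hn hK hx (I := {i}) fun k hk =>
      ⟨i, rfl, hsingle k i fun j hj => absurd (mem_singleton_iff.1 hk ▸ hj) (hnone j)⟩
    exact singleton_ne_empty i hempty
  · by_contra! hgraph
    have hempty := hA.eq_empty_of_forall_exists_eq_smul hn hK hx (I := univ) fun i _ =>
      ⟨f i, mem_univ _, hsingle i (f i) (hgraph i)⟩
    exact hempty.le (mem_univ i₀)

theorem KPrimitive.kPositive_of_memP (hn : 2 ≤ n) (hK : MemP m K) (hA : KPrimitive K A) :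
    KPositive K (A ^ ((n - 1) * (m - 1) + 1)) := by
  obtain ⟨x, hx, rfl⟩ := hK.exists_irredundant
  have hproper := hK.1.1
  have hext := hx.isExtremeVec hproper
  refine kPositive_coneGen hproper (hA.1.pow _) fun i => ?_
  obtain ⟨f, hf, hsurj⟩ := hA.exists_reaches_not_surjective hn hproper hext i
  obtain ⟨t, l, ht, hl, htl, heq⟩ := exists_iterate_eq_of_not_surjective hsurj i
  have htail : Reaches (ConeGen x) A t (x i) (x (f^[t] i)) := .iterate hproper hA.1 hf t i
  have hcycle : Reaches (ConeGen x) A l (x (f^[t] i)) (x (f^[t] i)) := by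
    have h := Reaches.iterate hproper hA.1 hf l (f^[t] i)
    rwa [← Function.iterate_add_apply, add_comm l t, heq] at h
  refine hA.pow_mulVec_mem_interior_of_lasso hproper (hext _).1 (hext _).2.1 hl htail hcycle ?_
  rw [Fintype.card_fin] at htl
  obtain ⟨n, rfl⟩ := Nat.exists_eq_add_of_le' hn
  obtain ⟨m, rfl⟩ : ∃ k, m = k + 1 := ⟨m - 1, by omega⟩
  simp only [Nat.add_sub_cancel, show n + 2 - 1 = n + 1 by omega]
  nlinarith [Nat.mul_le_mul_left n (show l ≤ m by omega)]

end UpperBound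

section SlowWalk

variable {n : ℕ} {K : Set (Fin n → ℝ)} {A : Matrix (Fin n) (Fin n) ℝ}

/-- A walk `z 0 → z 1 → ⋯ → z n → z 1 → ⋯` through all the extreme rays of a minimal cone whose
starting vector is not yet in the interior after `n * (n - 1)` steps. -/
structure IsSlowWalk (K : Set (Fin n → ℝ)) (A : Matrix (Fin n) (Fin n) ℝ)
    (z : ℕ → Fin n → ℝ) : Prop where
  eq_coneGen : K = ConeGen fun k : Fin (n + 1) => z k
  isExtremeVec : ∀ k, IsExtremeVec K (z k)
  reaches_succ : ∀ k, Reaches K A 1 (z k) (z (k + 1))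
  periodic : z (n + 1) = z 1
  notMem_interior : A ^ (n * (n - 1)) *ᵥ z 0 ∉ interior K

theorem add_mul_pred_le_mul_pred (hn : 3 ≤ n) {t l : ℕ} (htl : t + l ≤ n + 1) (hl : l < n) :
    t + l * (n - 1) ≤ n * (n - 1) := by
  obtain ⟨k, rfl⟩ := Nat.exists_eq_add_of_le' hn
  simp only [show k + 3 - 1 = k + 2 by omega]
  nlinarith

theorem iterate_injective_of_forall_lasso_long (hn : 3 ≤ n) {f : Fin (n + 1) → Fin (n + 1)}
    (hf : ¬ Function.Surjective f) {i : Fin (n + 1)}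
    (hlasso : ∀ t l, 0 < l → f^[t + l] i = f^[t] i → n * (n - 1) < t + l * (n - 1)) :
    f^[n + 1] i = f i ∧ Function.Injective fun k : Fin (n + 1) => f^[k] i := by
  constructor
  · obtain ⟨t, l, ht, hl, htl, heq⟩ := exists_iterate_eq_of_not_surjective hf i
    rw [Fintype.card_fin] at htl
    have hln : ¬ l < n := fun h =>
      (hlasso t l hl heq).not_ge (add_mul_pred_le_mul_pred hn htl h)
    obtain ⟨rfl, rfl⟩ : t = 1 ∧ l = n := by omega
    rwa [add_comm 1 l] at heq
  · intro a b hab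
    wlog hlt : a < b generalizing a b
    · exact (lt_or_eq_of_le (not_lt.1 hlt)).elim (fun h => (this hab.symm h).symm) Eq.symm
    refine absurd (hlasso a (b - a) (by omega) ?_) (not_lt.2 ?_)
    · rw [Nat.add_sub_cancel' (by omega)]
      exact hab.symm
    · rcases Nat.eq_zero_or_pos a with ha | ha
      · rw [ha, zero_add]
        exact Nat.mul_le_mul_right _ (by omega)
      · exact add_mul_pred_le_mul_pred hn (by omega) (by omega)

theorem KPrimitive.exists_isSlowWalk (hn : 3 ≤ n) {x : Fin (n + 1) → Fin n → ℝ}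
    (hK : IsProperCone (ConeGen x)) (hA : KPrimitive (ConeGen x) A)
    (hx : ∀ j, IsExtremeVec (ConeGen x) (x j)) {i : Fin (n + 1)}
    (hnot : A ^ (n * (n - 1)) *ᵥ x i ∉ interior (ConeGen x)) :
    ∃ z, IsSlowWalk (ConeGen x) A z := by
  obtain ⟨f, hf, hsurj⟩ := hA.exists_reaches_not_surjective (by omega) hK hx i
  obtain ⟨hperiodic, hinj⟩ := iterate_injective_of_forall_lasso_long hn hsurj (i := i) (by
    intro t l hl heq
    by_contra! hle
    have hcycle := Reaches.iterate hK hA.1 hf l (f^[t] i)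
    rw [← Function.iterate_add_apply, add_comm l t, heq] at hcycle
    exact hnot (hA.pow_mulVec_mem_interior_of_lasso hK (hx _).1 (hx _).2.1 hl
      (.iterate hK hA.1 hf t i) hcycle hle))
  refine ⟨fun k => x (f^[k] i), ?_, fun k => hx _, fun k => ?_, congrArg x hperiodic, hnot⟩
  · exact coneGen_congr ((Finite.injective_iff_surjective.1 hinj).range_comp x).symm
  · rw [Function.iterate_succ_apply']
    exact hf _

namespace IsSlowWalk

variable {z : ℕ → Fin n → ℝ} {s r : ℕ}

theorem reaches_add (hz : IsSlowWalk K A z) (hK : IsProperCone K) (hA : KNonneg K A) (a d : ℕ) :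
    Reaches K A d (z a) (z (a + d)) := by
  have h := Reaches.iterate hK hA hz.reaches_succ d a
  rwa [Nat.succ_iterate] at h

theorem reaches_of_le (hz : IsSlowWalk K A z) (hK : IsProperCone K) (hA : KNonneg K A) {a b : ℕ}
    (hab : a ≤ b) : Reaches K A (b - a) (z a) (z b) := by
  simpa only [Nat.add_sub_cancel' hab] using hz.reaches_add hK hA a (b - a)

theorem lt_of_reaches_self (hz : IsSlowWalk K A z) (hK : IsProperCone K) (hA : KPrimitive K A)
    {t l : ℕ} (hl : 0 < l) (h : Reaches K A l (z t) (z t)) : n * (n - 1) < t + l * (n - 1) := by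
  by_contra! hle
  exact hz.notMem_interior (hA.pow_mulVec_mem_interior_of_lasso hK (hz.isExtremeVec t).1
    (hz.isExtremeVec t).2.1 hl (hz.reaches_of_le hK hA.1 t.zero_le) h hle)

theorem lt_of_reaches_zero (hz : IsSlowWalk K A z) (hK : IsProperCone K) (hA : KPrimitive K A)
    {l : ℕ} (hl : 0 < l) (h : Reaches K A l (z 0) (z 0)) : n < l := by
  have hlt := hz.lt_of_reaches_self hK hA hl h
  rw [zero_add] at hlt
  exact lt_of_mul_lt_mul_right hlt (Nat.zero_le _)

theorem le_of_reaches_self (hz : IsSlowWalk K A z) (hn : 3 ≤ n) (hK : IsProperCone K)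
    (hA : KPrimitive K A) {t l : ℕ} (hl : 0 < l) (h : Reaches K A l (z t) (z t))
    (htl : t + l ≤ n + 1) : n ≤ l := by
  by_contra! hln
  exact (hz.lt_of_reaches_self hK hA hl h).not_ge (add_mul_pred_le_mul_pred hn htl hln)

theorem eq_of_reaches_of_le (hz : IsSlowWalk K A z) (hn : 3 ≤ n) (hK : IsProperCone K)
    (hA : KPrimitive K A) (hs : s ≤ n) (hrs : r ≤ s) (h : Reaches K A 1 (z s) (z r)) :
    s = n ∧ r ≤ 1 := by
  have hclosed := (hz.reaches_of_le hK hA.1 hrs).trans hK hA.1 h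
  rcases Nat.eq_zero_or_pos r with rfl | hr
  · have := hz.lt_of_reaches_zero hK hA (Nat.succ_pos _) hclosed
    omega
  · have := hz.le_of_reaches_self hn hK hA (Nat.succ_pos _) hclosed (by omega)
    omega

theorem eq_succ_of_reaches (hz : IsSlowWalk K A z) (hn : 3 ≤ n) (hK : IsProperCone K)
    (hA : KPrimitive K A) (hs : 1 ≤ s) (hsn : s < n) (hr : r ≤ n)
    (h : Reaches K A 1 (z s) (z r)) : r = s + 1 := by
  rcases Nat.lt_or_ge s r with hsr | hrs
  · have hlast : Reaches K A (n + 1 - r) (z r) (z 1) :=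
      hz.periodic ▸ hz.reaches_of_le hK hA.1 (by omega)
    have hclosed := ((hz.reaches_of_le hK hA.1 hs).trans hK hA.1 h).trans hK hA.1 hlast
    have := hz.le_of_reaches_self hn hK hA (by omega) hclosed (by omega)
    omega
  · have := hz.eq_of_reaches_of_le hn hK hA hsn.le hrs h
    omega

theorem eq_one_of_reaches_zero (hz : IsSlowWalk K A z) (hK : IsProperCone K)
    (hA : KPrimitive K A) (hback : Reaches K A 1 (z n) (z 0)) (hn : 0 < n) (hr : r ≤ n)
    (h : Reaches K A 1 (z 0) (z r)) : r = 1 := by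
  have hclosed := (h.trans hK hA.1 (hz.reaches_of_le hK hA.1 hr)).trans hK hA.1 hback
  rcases Nat.eq_zero_or_pos r with rfl | hr
  · have := hz.lt_of_reaches_zero hK hA one_pos h
    omega
  · have := hz.lt_of_reaches_zero hK hA (by omega) hclosed
    omega

theorem exists_mulVec_eq_smul (hz : IsSlowWalk K A z) (hK : IsProperCone K) (hA : KNonneg K A)
    (hs : s < n) (h : ∀ r ≤ n, Reaches K A 1 (z s) (z r) → r = s + 1) :
    ∃ c : ℝ, 0 < c ∧ A *ᵥ z s = c • z (s + 1) := by
  obtain ⟨c, hc, hcz⟩ : ∃ c : ℝ, 0 ≤ c ∧ A *ᵥ z s = c • z (s + 1) := by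
    have hmem := hA _ (hz.isExtremeVec s).1
    obtain rfl := hz.eq_coneGen
    refine exists_eq_smul_of_dominates_imp_eq hK hmem (j := ⟨s + 1, by omega⟩) fun k hk => ?_
    exact Fin.ext (h k (by omega) (by simpa only [Reaches, pow_one] using hk))
  refine ⟨c, hc.lt_of_ne' ?_, hcz⟩
  rintro rfl
  have hreach := hz.reaches_succ s
  rw [Reaches, pow_one, hcz, zero_smul] at hreach
  exact (hz.isExtremeVec (s + 1)).2.1
    (eq_zero_of_dominates_zero hK (hz.isExtremeVec (s + 1)).1 hreach)

theorem exists_mulVec_last (hz : IsSlowWalk K A z) (hn : 3 ≤ n) (hK : IsProperCone K)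
    (hA : KPrimitive K A) : ∃ p r : ℝ, 0 ≤ p ∧ 0 ≤ r ∧ A *ᵥ z n = p • z 0 + r • z 1 := by
  have hmem := hA.1 _ (hz.isExtremeVec n).1
  have hle : ∀ r ≤ n, Reaches K A 1 (z n) (z r) → r ≤ 1 := fun r hr h =>
    (hz.eq_of_reaches_of_le hn hK hA le_rfl hr h).2
  have hKz := hz.eq_coneGen
  clear hz
  subst hKz
  obtain ⟨n, rfl⟩ := Nat.exists_eq_add_of_le' hn
  obtain ⟨c, hc, hcz⟩ := exists_eq_sum_of_dominates_imp_mem hK hmem (s := {0, 1}) fun k hk => by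
    have := hle k (by omega) (by simpa only [Reaches, pow_one] using hk)
    simp only [Finset.mem_insert, Finset.mem_singleton, Fin.ext_iff, Fin.val_zero, Fin.val_one]
    omega
  refine ⟨c 0, c 1, hc 0, hc 1, ?_⟩
  rwa [Finset.sum_pair (by simp)] at hcz

end IsSlowWalk

end SlowWalk

/-- `K` is a minimal cone generated by `y, A y, …, A ^ n y`, and `A ^ (n + 1) y` is a positive
combination of `y` and `A y`: the digraph of `A` on the extreme rays of `K` is that of Wielandt's
matrix of order `n + 1`. -/
structure IsWielandtOrbit {n : ℕ} (K : Set (Fin n → ℝ)) (A : Matrix (Fin n) (Fin n) ℝ)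
    (y : Fin n → ℝ) (p r : ℝ) : Prop where
  eq_coneGen : K = ConeGen fun k : Fin (n + 1) => A ^ (k : ℕ) *ᵥ y
  p_pos : 0 < p
  r_pos : 0 < r
  pow_succ_mulVec : A ^ (n + 1) *ᵥ y = p • y + r • A *ᵥ y

section SlowWalkOrbit

variable {n : ℕ} {K : Set (Fin n → ℝ)} {A : Matrix (Fin n) (Fin n) ℝ} {z : ℕ → Fin n → ℝ}

namespace IsSlowWalk

theorem exists_mulVec_last_pos (hz : IsSlowWalk K A z) (hn : 3 ≤ n) (hK : IsProperCone K)
    (hA : KPrimitive K A) :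
    ∃ p r : ℝ, 0 < p ∧ 0 ≤ r ∧ A *ᵥ z n = p • z 0 + r • z 1 := by
  obtain ⟨p, r, hp, hr, hlast⟩ := hz.exists_mulVec_last hn hK hA
  refine ⟨p, r, hp.lt_of_ne' ?_, hr, hlast⟩
  rintro rfl
  rw [zero_smul, zero_add] at hlast
  have hempty := hA.eq_empty_of_forall_exists_eq_smul (by omega) hK hz.isExtremeVec
    (I := Set.Icc 1 n) (by
      rintro s ⟨hs, hsn⟩
      rcases hsn.lt_or_eq with hsn | rfl
      · obtain ⟨c, -, hc⟩ := hz.exists_mulVec_eq_smul hK hA.1 hsn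
          fun _ => hz.eq_succ_of_reaches hn hK hA hs hsn
        exact ⟨s + 1, ⟨by omega, hsn⟩, c, hc⟩
      · exact ⟨1, ⟨le_rfl, hs⟩, r, hlast⟩)
  exact hempty.le ⟨le_rfl, by omega⟩

theorem exists_mulVec_eq_smul_succ (hz : IsSlowWalk K A z) (hn : 3 ≤ n) (hK : IsProperCone K)
    (hA : KPrimitive K A) {s : ℕ} (hs : s < n) :
    ∃ c : ℝ, 0 < c ∧ A *ᵥ z s = c • z (s + 1) := by
  refine hz.exists_mulVec_eq_smul hK hA.1 hs fun r hr h => ?_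
  rcases Nat.eq_zero_or_pos s with rfl | hs0
  · obtain ⟨p, q, hp, hq, hlast⟩ := hz.exists_mulVec_last_pos hn hK hA
    have hback : Reaches K A 1 (z n) (z 0) := by
      rw [Reaches, pow_one, hlast]
      refine Dominates.trans hK (dominates_of_sub_mem (v := p • z 0) ?_)
        ((Dominates.refl hK _).smul_left hp)
      rw [add_sub_cancel_left]
      exact hK.smul_mem hq (hz.isExtremeVec 1).1
    exact hz.eq_one_of_reaches_zero hK hA hback hs hr h
  · exact hz.eq_succ_of_reaches hn hK hA hs0 hs hr h

theorem exists_mulVec_last_pos_pos (hz : IsSlowWalk K A z) (hn : 3 ≤ n) (hK : IsProperCone K)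
    (hA : KPrimitive K A) :
    ∃ p r : ℝ, 0 < p ∧ 0 < r ∧ A *ᵥ z n = p • z 0 + r • z 1 := by
  obtain ⟨p, r, hp, hr, hlast⟩ := hz.exists_mulVec_last_pos hn hK hA
  refine ⟨p, r, hp, hr.lt_of_ne' ?_, hlast⟩
  rintro rfl
  rw [zero_smul, add_zero] at hlast
  have hempty := hA.eq_empty_of_forall_exists_eq_smul (by omega) hK hz.isExtremeVec
    (I := Set.Iic n) (by
      intro s hs
      rcases (mem_Iic.1 hs).lt_or_eq with hsn | rfl
      · obtain ⟨c, -, hc⟩ := hz.exists_mulVec_eq_smul_succ hn hK hA hsn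
        exact ⟨s + 1, hsn, c, hc⟩
      · exact ⟨0, Nat.zero_le _, p, hlast⟩)
  exact hempty.le (mem_Iic.2 le_rfl)

theorem exists_pow_mulVec_eq_smul (hz : IsSlowWalk K A z) (hn : 3 ≤ n) (hK : IsProperCone K)
    (hA : KPrimitive K A) {k : ℕ} (hk : k ≤ n) :
    ∃ c : ℝ, 0 < c ∧ A ^ k *ᵥ z 0 = c • z k := by
  induction k with
  | zero => exact ⟨1, one_pos, by rw [pow_zero, one_mulVec, one_smul]⟩
  | succ k ih =>
    obtain ⟨c, hc, hck⟩ := ih (by omega)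
    obtain ⟨d, hd, hdk⟩ := hz.exists_mulVec_eq_smul_succ hn hK hA hk
    refine ⟨c * d, mul_pos hc hd, ?_⟩
    rw [pow_succ', ← mulVec_mulVec, hck, mulVec_smul, hdk, smul_smul]

theorem exists_isWielandtOrbit (hz : IsSlowWalk K A z) (hn : 3 ≤ n) (hK : IsProperCone K)
    (hA : KPrimitive K A) : ∃ p r : ℝ, IsWielandtOrbit K A (z 0) p r := by
  obtain ⟨p, r, hp, hr, hlast⟩ := hz.exists_mulVec_last_pos_pos hn hK hA
  have horbit : ∀ k : Fin (n + 1), ∃ c : ℝ, 0 < c ∧ A ^ (k : ℕ) *ᵥ z 0 = c • z k := fun k =>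
    hz.exists_pow_mulVec_eq_smul hn hK hA (by omega)
  choose c hc hcz using horbit
  obtain ⟨d, hd, hdz⟩ := hz.exists_mulVec_eq_smul_succ hn hK hA (s := 0) (by omega)
  rw [zero_add] at hdz
  have hcn : A ^ n *ᵥ z 0 = c (Fin.last n) • z n := hcz (Fin.last n)
  refine ⟨c (Fin.last n) * p, c (Fin.last n) * r / d, ?_, mul_pos (hc _) hp,
    div_pos (mul_pos (hc _) hr) hd, ?_⟩
  · simp only [hcz]
    rw [coneGen_smul _ hc]
    exact hz.eq_coneGen
  · rw [pow_succ', ← mulVec_mulVec, hcn, mulVec_smul, hlast, hdz, smul_smul,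
      div_mul_cancel₀ _ hd.ne', smul_add, smul_smul, smul_smul]

end IsSlowWalk

end SlowWalkOrbit

section Relations

variable {n m : ℕ} {K : Set (Fin n → ℝ)} {x : Fin m → Fin n → ℝ} {u : Fin n → ℝ}

theorem exists_eq_smul_of_sum_smul_eq_zero {𝕜 V ι : Type*} [Field 𝕜] [AddCommGroup V]
    [Module 𝕜 V] [Module.Finite 𝕜 V] [Fintype ι]
    (hcard : Fintype.card ι = Module.finrank 𝕜 V + 1) {z : ι → V}
    (hz : Submodule.span 𝕜 (range z) = ⊤) {α β : ι → 𝕜} (hα0 : α ≠ 0)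
    (hα : ∑ i, α i • z i = 0) (hβ : ∑ i, β i • z i = 0) : ∃ c : 𝕜, β = c • α := by
  set L := Fintype.linearCombination 𝕜 z
  have hrank := L.finrank_range_add_finrank_ker
  rw [Fintype.range_linearCombination, hz, finrank_top, Module.finrank_fintype_fun_eq_card,
    hcard, add_right_inj] at hrank
  have hne : (⟨α, hα⟩ : LinearMap.ker L) ≠ 0 := fun h => hα0 (congrArg Subtype.val h)
  obtain ⟨c, hc⟩ := (finrank_eq_one_iff_of_nonzero' _ hne).1 hrank ⟨β, hβ⟩
  exact ⟨c, (congrArg Subtype.val hc).symm⟩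

theorem IsProperCone.span_range_eq_top (hK : IsProperCone (ConeGen x)) :
    Submodule.span ℝ (range x) = ⊤ := by
  refine Submodule.eq_top_of_nonempty_interior' _ (hK.nonempty_interior.mono (interior_mono ?_))
  rintro _ ⟨c, -, rfl⟩
  exact Submodule.sum_mem _ fun j _ =>
    Submodule.smul_mem _ _ (Submodule.subset_span (mem_range_self j))

theorem IsProperCone.zero_notMem_interior (hn : 0 < n) (hK : IsProperCone K) :
    (0 : Fin n → ℝ) ∉ interior K := by
  intro h0
  have hzero : ∀ v : Fin n → ℝ, v ∈ K → v = 0 := fun v hv =>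
    eq_zero_of_dominates_zero hK hv (dominates_of_mem_interior hK h0 v)
  obtain ⟨c, -, hc⟩ := dominates_of_mem_interior hK h0 1
  have h1 := congrFun (hzero _ hc) ⟨0, hn⟩
  simp at h1

/-- A linear relation rewrites the generators with negative coefficients in terms of the others. -/
theorem Dominates.of_relation (hK : IsProperCone K) (hx : ∀ j, x j ∈ K) {α : Fin m → ℝ}
    (hα : ∑ j, α j • x j = 0) (hu : u ∈ K) (h : ∀ j, 0 ≤ α j → Dominates K u (x j)) (j : Fin m) :
    Dominates K u (x j) := by
  rcases le_or_gt 0 (α j) with hj | hj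
  · exact h j hj
  · have hbalance : ∑ k, max (α k) 0 • x k = ∑ k, max (-α k) 0 • x k := by
      rw [← sub_eq_zero, ← Finset.sum_sub_distrib, ← hα]
      exact Finset.sum_congr rfl fun k _ => by rw [← sub_smul, max_zero_sub_max_neg_zero_eq_self]
    have hpos : Dominates K u (∑ k, max (α k) 0 • x k) := by
      refine Dominates.sum hK hu fun k _ => ?_
      rcases le_total 0 (α k) with hk | hk
      · exact (h k hk).smul hK (hx k) _
      · rw [max_eq_right hk, zero_smul]
        exact dominates_of_sub_mem (by rwa [sub_zero])
    rw [hbalance] at hpos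
    exact hpos.trans hK (dominates_of_coeff_pos hK hx (fun k => le_max_right _ _)
      (lt_max_of_lt_left (neg_pos.2 hj)))

end Relations

theorem pow_mul_add_mulVec {ι R : Type*} [Fintype ι] [DecidableEq ι] [CommRing R]
    {A : Matrix ι ι R} {y : ι → R} {N : ℕ} {p r : R} (h : A ^ N *ᵥ y = p • y + r • A *ᵥ y)
    (k j : ℕ) : A ^ (N * k + j) *ᵥ y =
      ∑ i ∈ Finset.range (k + 1), (r ^ i * p ^ (k - i) * k.choose i) • A ^ (j + i) *ᵥ y := by
  set B : Matrix ι ι R := r • A + p • 1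
  have hBy : A ^ N *ᵥ y = B *ᵥ y := by
    rw [h, add_mulVec, smul_mulVec, smul_mulVec, one_mulVec, add_comm]
  have hcomm : ∀ l, Commute (A ^ l) B := fun l =>
    ((Commute.refl A).pow_left l |>.smul_right r).add_right ((Commute.one_right _).smul_right p)
  have hpow : A ^ (N * k) *ᵥ y = B ^ k *ᵥ y := by
    induction k with
    | zero => simp only [mul_zero, pow_zero]
    | succ k ih =>
      rw [mul_add_one, pow_add, ← mulVec_mulVec, hBy, mulVec_mulVec, (hcomm _).eq,
        ← mulVec_mulVec, ih, mulVec_mulVec, pow_succ']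
  have hbinomial : B ^ k =
      ∑ i ∈ Finset.range (k + 1), (r ^ i * p ^ (k - i) * k.choose i) • A ^ i := by
    rw [((Commute.one_right (r • A)).smul_right p).add_pow]
    refine Finset.sum_congr rfl fun i _ => ?_
    rw [smul_pow, smul_pow, one_pow, smul_mul_smul_comm, mul_one, ← nsmul_eq_mul',
      ← Nat.cast_smul_eq_nsmul R, smul_smul, mul_comm (k.choose i : R)]
  rw [add_comm, pow_add, ← mulVec_mulVec, hpow, hbinomial, sum_mulVec, mulVec_sum]
  simp only [smul_mulVec, mulVec_smul, mulVec_mulVec, pow_add]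

theorem sum_charpoly_coeff_smul_pow_mulVec {n : ℕ} {R : Type*} [CommRing R]
    (A : Matrix (Fin n) (Fin n) R) (y : Fin n → R) :
    ∑ k ∈ Finset.range (n + 1), A.charpoly.coeff k • A ^ k *ᵥ y = 0 := by
  nontriviality R
  have hdeg : A.charpoly.natDegree < n + 1 := by
    rw [A.charpoly_natDegree_eq_dim, Fintype.card_fin]
    exact Nat.lt_succ_self n
  have haeval := A.aeval_self_charpoly
  rw [Polynomial.aeval_eq_sum_range' hdeg] at haeval
  simpa only [sum_mulVec, smul_mulVec, zero_mulVec] using congrArg (· *ᵥ y) haeval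

theorem charpoly_coeff_self {n : ℕ} {R : Type*} [CommRing R] (A : Matrix (Fin n) (Fin n) R) :
    A.charpoly.coeff n = 1 := by
  nontriviality R
  have hmonic := A.charpoly_monic.coeff_natDegree
  rwa [A.charpoly_natDegree_eq_dim, Fintype.card_fin] at hmonic

namespace IsWielandtOrbit

variable {n : ℕ} {K : Set (Fin n → ℝ)} {A : Matrix (Fin n) (Fin n) ℝ} {y : Fin n → ℝ} {p r : ℝ}

theorem pow_mulVec_mem_of_le (h : IsWielandtOrbit K A y p r) {k : ℕ} (hk : k ≤ n) :
    A ^ k *ᵥ y ∈ K := by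
  rw [h.eq_coneGen]
  exact mem_coneGen (fun k : Fin (n + 1) => A ^ (k : ℕ) *ᵥ y) ⟨k, by omega⟩

theorem dominates_of_le (h : IsWielandtOrbit K A y p r) (hK : IsProperCone K) {k j i : ℕ}
    (hjk : j + k ≤ n) (hi : i ≤ k) :
    Dominates K (A ^ ((n + 1) * k + j) *ᵥ y) (A ^ (j + i) *ᵥ y) := by
  have hp := h.p_pos
  have hr := h.r_pos
  have hpos : ∀ i : Fin (k + 1), 0 < r ^ (i : ℕ) * p ^ (k - i) * k.choose i := fun i => by
    have := Nat.choose_pos (Nat.le_of_lt_succ i.2)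
    positivity
  rw [pow_mul_add_mulVec h.pow_succ_mulVec, Finset.sum_range]
  exact dominates_of_coeff_pos hK (x := fun i : Fin (k + 1) => A ^ (j + i) *ᵥ y)
    (fun i => h.pow_mulVec_mem_of_le (by omega)) (fun i => (hpos i).le)
    (hpos ⟨i, Nat.lt_succ_of_le hi⟩)

theorem exists_relation (h : IsWielandtOrbit K A y p r) (hn : 0 < n) (hK : IsProperCone K) :
    ∃ (α : ℕ → ℝ) (a : ℝ), ∑ k ∈ Finset.range (n + 1), α k • A ^ k *ᵥ y = 0 ∧ α n = 1 ∧
      p = a * α 0 ∧ ∀ k, 1 ≤ k → k < n → α k = a * α (k + 1) := by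
  set α : ℕ → ℝ := A.charpoly.coeff
  have hα := sum_charpoly_coeff_smul_pow_mulVec A y
  have hαn : α n = 1 := charpoly_coeff_self A
  let β : ℕ → ℝ := fun k => k.casesOn p fun k => α k + if k = 0 then r else 0
  have hβ : ∑ k ∈ Finset.range (n + 1), β k • A ^ k *ᵥ y = 0 := by
    have hshift := congrArg (A *ᵥ ·) hα
    simp only [mulVec_sum, mulVec_smul, mulVec_mulVec, ← pow_succ', mulVec_zero] at hshift
    rw [Finset.sum_range_succ, charpoly_coeff_self, one_smul, h.pow_succ_mulVec] at hshift
    rw [Finset.sum_range_succ', ← hshift]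
    simp only [β, add_smul, ite_smul, zero_smul, Finset.sum_add_distrib, pow_zero, one_mulVec,
      Finset.sum_ite_eq', Finset.mem_range, hn, if_true, zero_add, pow_one]
    module
  have hspan : Submodule.span ℝ (range fun k : Fin (n + 1) => A ^ (k : ℕ) *ᵥ y) = ⊤ := by
    apply IsProperCone.span_range_eq_top
    rwa [← h.eq_coneGen]
  rw [Finset.sum_range] at hα hβ
  have hα0 : (fun k : Fin (n + 1) => α k) ≠ 0 := fun h0 =>
    one_ne_zero (hαn.symm.trans (congrFun h0 (Fin.last n)))
  obtain ⟨a, ha⟩ := exists_eq_smul_of_sum_smul_eq_zero (by simp) hspan hα0 hα hβ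
  have hβα : ∀ k ≤ n, β k = a * α k := fun k hk => congrFun ha ⟨k, by omega⟩
  refine ⟨α, a, (Finset.sum_range _).trans hα, hαn, hβα 0 n.zero_le, fun k hk hkn => ?_⟩
  simpa only [β, Nat.one_le_iff_ne_zero.1 hk, if_false, add_zero] using hβα (k + 1) hkn

end IsWielandtOrbit

theorem mul_pred_eq_succ_mul_add_two {n : ℕ} (hn : 2 ≤ n) :
    n * (n - 1) = (n + 1) * (n - 2) + 2 := by
  obtain ⟨k, rfl⟩ := Nat.exists_eq_add_of_le' hn
  simp only [show k + 2 - 1 = k + 1 by omega, Nat.add_sub_cancel]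
  ring

namespace IsWielandtOrbit

variable {n : ℕ} {K : Set (Fin n → ℝ)} {A : Matrix (Fin n) (Fin n) ℝ} {y : Fin n → ℝ} {p r : ℝ}

theorem exists_relation_neg (h : IsWielandtOrbit K A y p r) (hn : 0 < n) (hK : IsProperCone K) :
    ∃ α : ℕ → ℝ, ∑ k ∈ Finset.range (n + 1), α k • A ^ k *ᵥ y = 0 ∧ α 0 < 0 ∧
      (Even n → α 1 < 0) := by
  obtain ⟨α, a, hα, hαn, hp, hstep⟩ := h.exists_relation hn hK
  have hpow : ∀ d < n, α (n - d) = a ^ d := fun d hd => by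
    induction d with
    | zero => rw [Nat.sub_zero, hαn, pow_zero]
    | succ d ih =>
      rw [hstep (n - (d + 1)) (by omega) (by omega), show n - (d + 1) + 1 = n - d by omega,
        ih (by omega), pow_succ']
  have hp_pos := h.p_pos
  have ha0 : a ≠ 0 := by
    rintro rfl
    rw [zero_mul] at hp
    exact hp_pos.ne' hp
  have ha : a < 0 := by
    by_contra! hnonneg
    have ha_pos := hnonneg.lt_of_ne' ha0
    have hα_pos : ∀ k : Fin (n + 1), 0 < α k := by
      intro k
      rcases Nat.eq_zero_or_pos k with hk | hk
      · rw [hk]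
        exact pos_of_mul_pos_right (hp ▸ hp_pos) ha_pos.le
      · rw [← Nat.sub_sub_self (show (k : ℕ) ≤ n by omega), hpow _ (by omega)]
        exact pow_pos ha_pos _
    have hK' := h.eq_coneGen ▸ hK
    have hzero := sum_smul_mem_interior hK' hα_pos
    rw [← Finset.sum_range fun k => α k • A ^ k *ᵥ y, hα] at hzero
    exact hK'.zero_notMem_interior hn hzero
  refine ⟨α, hα, neg_of_mul_pos_right (hp ▸ hp_pos) ha.le, fun heven => ?_⟩
  rw [← Nat.sub_sub_self (show 1 ≤ n from hn), hpow _ (by omega)]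
  exact (Nat.Even.sub_odd hn heven odd_one).pow_neg ha

theorem kNonneg (h : IsWielandtOrbit K A y p r) (hn : 0 < n) (hK : IsProperCone K) :
    KNonneg K A := by
  have hmem : ∀ k : Fin (n + 1), A *ᵥ A ^ (k : ℕ) *ᵥ y ∈ K := by
    intro k
    rw [mulVec_mulVec, ← pow_succ']
    rcases (Nat.le_of_lt_succ k.2).lt_or_eq with hk | hk
    · exact h.pow_mulVec_mem_of_le hk
    · rw [hk, h.pow_succ_mulVec]
      refine hK.add_mem (hK.smul_mem h.p_pos.le ?_) (hK.smul_mem h.r_pos.le ?_)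
      · simpa only [pow_zero, one_mulVec] using h.pow_mulVec_mem_of_le n.zero_le
      · simpa only [pow_one] using h.pow_mulVec_mem_of_le hn
  rw [h.eq_coneGen] at hK hmem ⊢
  exact kNonneg_coneGen hK hmem

theorem pow_mulVec_mem (h : IsWielandtOrbit K A y p r) (hn : 0 < n) (hK : IsProperCone K) (k : ℕ) :
    A ^ k *ᵥ y ∈ K :=
  (h.kNonneg hn hK).pow k y <| by
    simpa only [pow_zero, one_mulVec] using h.pow_mulVec_mem_of_le n.zero_le

theorem pow_mulVec_mem_interior_of_dominates (h : IsWielandtOrbit K A y p r) (hn : 0 < n)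
    (hK : IsProperCone K) {M : ℕ}
    (hdom : ∀ k : Fin (n + 1), Dominates K (A ^ M *ᵥ y) (A ^ (k : ℕ) *ᵥ y)) :
    A ^ M *ᵥ y ∈ interior K := by
  have hmem := h.pow_mulVec_mem hn hK M
  rw [h.eq_coneGen] at hK hmem hdom ⊢
  exact mem_interior_of_dominates_generators hK hmem hdom

theorem dominates_of_mul_le (h : IsWielandtOrbit K A y p r) (hn : 0 < n) (hK : IsProperCone K)
    {M : ℕ} (hM : (n + 1) * n ≤ M) {j : ℕ} (hj : j ≤ n) :
    Dominates K (A ^ M *ᵥ y) (A ^ j *ᵥ y) := by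
  induction M, hM using Nat.le_induction generalizing j with
  | base => simpa only [zero_add, add_zero] using h.dominates_of_le hK (zero_add n).le hj
  | succ M _ ih =>
    have hstep : ∀ i ≤ n, Dominates K (A ^ (M + 1) *ᵥ y) (A ^ (i + 1) *ᵥ y) := fun i hi => by
      simpa only [mulVec_mulVec, ← pow_succ'] using (ih hi).mulVec (h.kNonneg hn hK)
    rcases j with _ | j
    · refine (hstep n le_rfl).trans hK ?_
      simpa only [mul_one, add_zero] using
        h.dominates_of_le hK (k := 1) (j := 0) (by omega) zero_le_one
    · exact hstep j (by omega)

theorem kPrimitive (h : IsWielandtOrbit K A y p r) (hn : 0 < n) (hK : IsProperCone K) :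
    KPrimitive K A := by
  have hA := h.kNonneg hn hK
  have hint : ∀ k : Fin (n + 1), A ^ ((n + 1) * n) *ᵥ A ^ (k : ℕ) *ᵥ y ∈ interior K := fun k => by
    rw [mulVec_mulVec, ← pow_add]
    exact h.pow_mulVec_mem_interior_of_dominates hn hK fun j =>
      h.dominates_of_mul_le hn hK (Nat.le_add_right _ _) (by omega)
  refine ⟨hA, (n + 1) * n, by positivity, ?_⟩
  rw [h.eq_coneGen] at hK hA hint ⊢
  exact kPositive_coneGen hK (hA.pow _) hint

theorem pow_mulVec_mem_interior_of_even (h : IsWielandtOrbit K A y p r) (hn : 3 ≤ n)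
    (heven : Even n) (hK : IsProperCone K) : A ^ (n * (n - 1)) *ᵥ y ∈ interior K := by
  obtain ⟨α, hα, hα0, hα1⟩ := h.exists_relation_neg (by omega) hK
  have hu := h.pow_mulVec_mem (by omega) hK (n * (n - 1))
  have hdom : ∀ k : Fin (n + 1), 0 ≤ α k →
      Dominates K (A ^ (n * (n - 1)) *ᵥ y) (A ^ (k : ℕ) *ᵥ y) := by
    intro k hk
    have hk0 : (k : ℕ) ≠ 0 := fun h0 => hα0.not_ge (h0 ▸ hk)
    have hk1 : (k : ℕ) ≠ 1 := fun h1 => (hα1 heven).not_ge (h1 ▸ hk)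
    rw [mul_pred_eq_succ_mul_add_two (by omega), ← Nat.add_sub_of_le (show 2 ≤ (k : ℕ) by omega)]
    exact h.dominates_of_le hK (by omega) (by omega)
  rw [Finset.sum_range] at hα
  exact h.pow_mulVec_mem_interior_of_dominates (by omega) hK
    (Dominates.of_relation hK (fun k => h.pow_mulVec_mem_of_le (by omega)) hα hu hdom)

end IsWielandtOrbit

theorem KPrimitive.kPositive_of_memP_of_even {n : ℕ} {K : Set (Fin n → ℝ)}
    {A : Matrix (Fin n) (Fin n) ℝ} (hn : 3 ≤ n) (heven : Even n) (hK : MemP (n + 1) K)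
    (hA : KPrimitive K A) : KPositive K (A ^ (n * (n - 1))) := by
  obtain ⟨x, hx, rfl⟩ := hK.exists_irredundant
  have hproper := hK.1.1
  refine kPositive_coneGen hproper (hA.1.pow _) fun i => ?_
  by_contra hnot
  obtain ⟨z, hz⟩ := hA.exists_isSlowWalk hn hproper (hx.isExtremeVec hproper) hnot
  obtain ⟨p, r, horbit⟩ := hz.exists_isWielandtOrbit hn hproper hA
  exact hz.notMem_interior (horbit.pow_mulVec_mem_interior_of_even hn heven hproper)

section BalancedRelation

theorem exists_sum_smul_eq_of_mem_span_image {ι R M : Type*} [Fintype ι] [Semiring R]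
    [AddCommMonoid M] [Module R M] {x : ι → M} {s : Set ι} {u : M}
    (hu : u ∈ Submodule.span R (x '' s)) :
    ∃ c : ι → R, (∀ i ∉ s, c i = 0) ∧ ∑ i, c i • x i = u := by
  obtain ⟨l, hl, rfl⟩ := (Finsupp.mem_span_image_iff_linearCombination R).1 hu
  exact ⟨l, fun i hi => Finsupp.notMem_support_iff.1 fun h => hi (hl h),
    by rw [Finsupp.linearCombination_apply, Finsupp.sum_fintype _ _ fun i => zero_smul R (x i)]⟩

theorem nonempty_interior_coneGen {n m : ℕ} {x : Fin m → Fin n → ℝ}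
    (hx : Submodule.span ℝ (range x) = ⊤) : (interior (ConeGen x)).Nonempty := by
  set L := Fintype.linearCombination ℝ x
  have hopen : IsOpen (L '' univ.pi fun _ => Ioi 0) :=
    L.isOpenMap_of_finiteDimensional
      (LinearMap.range_eq_top.1 ((Fintype.range_linearCombination ℝ x).trans hx)) _
      (isOpen_set_pi finite_univ fun _ _ => isOpen_Ioi)
  refine ⟨L 1, interior_maximal ?_ hopen ⟨1, fun _ _ => mem_Ioi.2 one_pos, rfl⟩⟩
  rintro _ ⟨c, hc, rfl⟩
  exact ⟨c, fun j => (hc j trivial).le, rfl⟩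

theorem isProperCone_coneGen {n m : ℕ} {x : Fin m → Fin n → ℝ}
    (hx : Submodule.span ℝ (range x) = ⊤)
    (hpointed : ∀ c : Fin m → ℝ, (∀ j, 0 ≤ c j) → ∑ j, c j • x j = 0 → c = 0) :
    IsProperCone (ConeGen x) := by
  have hspan := coneGen_eq_span x
  refine ⟨isClosed_coneGen x, ?_, ?_, subset_antisymm ?_ ?_, nonempty_interior_coneGen hx⟩
  · rw [hspan]
    exact fun u hu v hv => add_mem hu hv
  · rw [hspan]
    exact fun c hc u hu => Submodule.smul_mem _ ⟨c, hc⟩ hu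
  · rintro u ⟨⟨c, hc, rfl⟩, d, hd, hneg⟩
    have hsum : ∑ j, (c + d) j • x j = 0 := by
      simp only [Pi.add_apply, add_smul, Finset.sum_add_distrib, ← hneg, add_neg_cancel]
    have hcd := hpointed _ (fun j => add_nonneg (hc j) (hd j)) hsum
    have hc0 : ∀ j, c j = 0 := fun j =>
      ((add_eq_zero_iff_of_nonneg (hc j) (hd j)).1 (congrFun hcd j)).1
    simp only [hc0, zero_smul, Finset.sum_const_zero, mem_singleton_iff]
  · rintro u rfl
    rw [hspan]
    exact ⟨zero_mem _, by rw [Set.mem_neg, neg_zero]; exact zero_mem _⟩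

/-- `α` is, up to scaling, the only linear relation between the `n + 1` vectors `x j` of `ℝ ^ n`,
and it has at least two positive and at least two negative coefficients. Such vectors span the
extreme rays of a minimal cone. -/
structure IsBalancedRelation {n : ℕ} (x : Fin (n + 1) → Fin n → ℝ) (α : Fin (n + 1) → ℝ) :
    Prop where
  span_eq_top : Submodule.span ℝ (range x) = ⊤
  sum_eq_zero : ∑ j, α j • x j = 0
  exists_neg : ∀ j, ∃ i ≠ j, α i < 0
  exists_pos : ∀ j, ∃ i ≠ j, 0 < α i

namespace IsBalancedRelation

variable {n : ℕ} {x : Fin (n + 1) → Fin n → ℝ} {α : Fin (n + 1) → ℝ}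

theorem exists_eq_smul (h : IsBalancedRelation x α) {β : Fin (n + 1) → ℝ}
    (hβ : ∑ j, β j • x j = 0) : ∃ c : ℝ, β = c • α := by
  obtain ⟨i, -, hi⟩ := h.exists_neg 0
  exact exists_eq_smul_of_sum_smul_eq_zero (by simp) h.span_eq_top
    (fun h0 => hi.ne (congrFun h0 i)) h.sum_eq_zero hβ

theorem eq_zero_of_nonneg_of_ne (h : IsBalancedRelation x α) {β : Fin (n + 1) → ℝ}
    (hβ : ∑ j, β j • x j = 0) {j : Fin (n + 1)} (hnonneg : ∀ i ≠ j, 0 ≤ β i) : β = 0 := by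
  obtain ⟨c, rfl⟩ := h.exists_eq_smul hβ
  obtain ⟨i, hij, hi⟩ := h.exists_neg j
  obtain ⟨k, hkj, hk⟩ := h.exists_pos j
  have hc : c = 0 := le_antisymm (nonpos_of_mul_nonneg_left (hnonneg i hij) hi)
    (nonneg_of_mul_nonneg_left (hnonneg k hkj) hk)
  rw [hc, zero_smul]

theorem isProperCone (h : IsBalancedRelation x α) : IsProperCone (ConeGen x) :=
  isProperCone_coneGen h.span_eq_top fun _ hc hsum =>
    h.eq_zero_of_nonneg_of_ne hsum (j := 0) fun i _ => hc i

theorem irredundant (h : IsBalancedRelation x α) : Irredundant x := by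
  intro j hj
  set L := Fintype.linearCombination ℝ x
  obtain ⟨c, hcj, hcx⟩ := exists_sum_smul_eq_of_mem_span_image hj
  have hsum : L (fun i => (c i : ℝ)) = x j := hcx
  have hrel : L ((fun i => (c i : ℝ)) - Pi.single j 1) = 0 := by
    rw [map_sub, hsum, Fintype.linearCombination_apply_single, one_smul, sub_self]
  have hzero := congrFun (h.eq_zero_of_nonneg_of_ne hrel (j := j) fun i hi => by
    rw [Pi.sub_apply, Pi.single_eq_of_ne hi, sub_zero]
    exact (c i).2) j
  simp [hcj] at hzero

theorem memP (h : IsBalancedRelation x α) : MemP (n + 1) (ConeGen x) :=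
  h.irredundant.memP h.isProperCone

theorem notMem_interior_of_mem_span (h : IsBalancedRelation x α) {i j : Fin (n + 1)}
    (hi : α i < 0) (hj : 0 < α j) {u : Fin n → ℝ} (hu : u ∈ Submodule.span ℝ (x '' {i, j}ᶜ)) :
    u ∉ interior (ConeGen x) := by
  obtain ⟨c, hc, rfl⟩ := exists_sum_smul_eq_of_mem_span_image hu
  have hci : c i = 0 := hc i (by simp)
  have hcj : c j = 0 := hc j (by simp)
  intro hint
  set L := Fintype.linearCombination ℝ x
  obtain ⟨t, -, d, hd, hsub⟩ := dominates_of_mem_interior h.isProperCone hint (x i + x j)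
  have hrel : L (t • c - (Pi.single i 1 + Pi.single j 1) - d) = 0 := by
    rw [map_sub, map_sub, map_add, map_smul, Fintype.linearCombination_apply_single,
      Fintype.linearCombination_apply_single, one_smul, one_smul, sub_eq_zero]
    exact hsub
  obtain ⟨e, he⟩ := h.exists_eq_smul hrel
  have hij : i ≠ j := by
    rintro rfl
    exact hi.not_gt hj
  have hei : -1 - d i = e * α i := by simpa [hci, hij] using congrFun he i
  have hej : -1 - d j = e * α j := by simpa [hcj, hij.symm] using congrFun he j
  rcases le_total 0 e with he0 | he0
  · linarith [hd j, mul_nonneg he0 hj.le]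
  · linarith [hd i, mul_nonneg_of_nonpos_of_nonpos he0 hi.le]

end IsBalancedRelation

end BalancedRelation

/-- The companion matrix whose last column is `a`: it maps each standard basis vector to the next
one, and the last one to `a`. -/
def companionMatrix {n : ℕ} {R : Type*} [Zero R] [One R] (a : Fin n → R) :
    Matrix (Fin n) (Fin n) R :=
  Matrix.of fun i j => if (j : ℕ) + 1 = n then a i else if (i : ℕ) = j + 1 then 1 else 0

section Companion

variable {n : ℕ} {R : Type*} [CommRing R]

theorem companionMatrix_pow_mulVec_single (a : Fin n → R) (hn : 0 < n) {k : ℕ} (hk : k < n) :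
    companionMatrix a ^ k *ᵥ Pi.single ⟨0, hn⟩ 1 = Pi.single ⟨k, hk⟩ 1 := by
  induction k with
  | zero => rw [pow_zero, one_mulVec]
  | succ k ih =>
    rw [pow_succ', ← mulVec_mulVec, ih (by omega), mulVec_single_one]
    ext i
    simp [companionMatrix, Pi.single_apply, Fin.ext_iff, hk.ne]

theorem companionMatrix_pow_self_mulVec_single (a : Fin n → R) (hn : 0 < n) :
    companionMatrix a ^ n *ᵥ Pi.single ⟨0, hn⟩ 1 = a := by
  have hsucc : n - 1 + 1 = n := Nat.sub_add_cancel hn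
  have hpow : companionMatrix a ^ n = companionMatrix a * companionMatrix a ^ (n - 1) := by
    rw [← pow_succ', hsucc]
  rw [hpow, ← mulVec_mulVec, companionMatrix_pow_mulVec_single a hn (Nat.sub_lt hn one_pos),
    mulVec_single_one]
  ext i
  simp [companionMatrix, hsucc]

theorem exists_spanning_pow_mulVec_relation (hn : 0 < n) {α : ℕ → R} (hα : α n = 1) :
    ∃ (A : Matrix (Fin n) (Fin n) R) (y : Fin n → R),
      Submodule.span R (range fun k : Fin (n + 1) => A ^ (k : ℕ) *ᵥ y) = ⊤ ∧
        ∑ k ∈ Finset.range (n + 1), α k • A ^ k *ᵥ y = 0 := by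
  set a : Fin n → R := fun k => -α k
  have hpow : ∀ k : Fin n, companionMatrix a ^ (k : ℕ) *ᵥ Pi.single ⟨0, hn⟩ 1 = Pi.single k 1 :=
    fun k => companionMatrix_pow_mulVec_single a hn k.2
  refine ⟨companionMatrix a, Pi.single ⟨0, hn⟩ 1, ?_, ?_⟩
  · rw [eq_top_iff, ← (Pi.basisFun R (Fin n)).span_eq]
    refine Submodule.span_mono ?_
    rintro _ ⟨k, rfl⟩
    exact ⟨k.castSucc, (hpow k).trans (Pi.basisFun_apply R (Fin n) k).symm⟩
  · rw [Finset.sum_range_succ, hα, one_smul, companionMatrix_pow_self_mulVec_single,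
      Finset.sum_range]
    simp only [hpow]
    ext k
    simp [a, Pi.single_apply]

theorem pow_succ_mulVec_eq_of_relation {ι : Type*} [Fintype ι] [DecidableEq ι]
    {A : Matrix ι ι R} {y : ι → R} {α : ℕ → R} (hn : 0 < n) (hαn : α n = 1)
    (hα : ∑ k ∈ Finset.range (n + 1), α k • A ^ k *ᵥ y = 0)
    (hcancel : ∀ k, 1 ≤ k → k < n → α k + α (k + 1) = 0) :
    A ^ (n + 1) *ᵥ y = -α 0 • y + -(α 0 + α 1) • A *ᵥ y := by
  obtain ⟨m, rfl⟩ := Nat.exists_eq_add_of_le' hn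
  have hshift := congrArg (A *ᵥ ·) hα
  simp only [mulVec_sum, mulVec_smul, mulVec_mulVec, ← pow_succ', mulVec_zero] at hshift
  have hmiddle : ∑ k ∈ Finset.range m, α (k + 1) • A ^ (k + 1 + 1) *ᵥ y +
      ∑ k ∈ Finset.range m, α (k + 1 + 1) • A ^ (k + 1 + 1) *ᵥ y = 0 := by
    rw [← Finset.sum_add_distrib]
    refine Finset.sum_eq_zero fun k hk => ?_
    have hkm := Finset.mem_range.1 hk
    rw [← add_smul, hcancel (k + 1) (by omega) (by omega), zero_smul]
  rw [Finset.sum_range_succ, Finset.sum_range_succ', hαn, one_smul] at hshift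
  rw [Finset.sum_range_succ', Finset.sum_range_succ'] at hα
  simp only [zero_add, pow_zero, pow_one, one_mulVec] at hshift hα
  linear_combination (norm := module) hshift + hα - hmiddle

end Companion

/-- The coefficients of the monic polynomial `(X ^ (n + 1) - r X - 2) / (X + 1)` of degree `n`, with
`r = 2 + (-1) ^ n`, the value for which the division is exact. -/
def extremalCoeff (n k : ℕ) : ℝ :=
  if k = 0 then -2 else (-1) ^ (n + k)

section Extremal

variable {n : ℕ}

theorem extremalCoeff_zero (n : ℕ) : extremalCoeff n 0 = -2 := if_pos rfl

theorem extremalCoeff_of_pos {k : ℕ} (hk : 0 < k) : extremalCoeff n k = (-1) ^ (n + k) :=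
  if_neg hk.ne'

theorem extremalCoeff_pos_of_even {k : ℕ} (hk : 0 < k) (h : Even (n + k)) :
    0 < extremalCoeff n k := by
  rw [extremalCoeff_of_pos hk, h.neg_one_pow]
  exact one_pos

theorem extremalCoeff_neg_of_odd {k : ℕ} (hk : 0 < k) (h : Odd (n + k)) :
    extremalCoeff n k < 0 := by
  rw [extremalCoeff_of_pos hk, h.neg_one_pow]
  exact neg_one_lt_zero

theorem extremalCoeff_zero_neg (n : ℕ) : extremalCoeff n 0 < 0 := by
  rw [extremalCoeff_zero]
  norm_num

theorem extremalCoeff_self (hn : 0 < n) : extremalCoeff n n = 1 := by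
  rw [extremalCoeff_of_pos hn, (Even.add_self n).neg_one_pow]

theorem isBalancedRelation_extremalCoeff (hn : 3 ≤ n) {x : Fin (n + 1) → Fin n → ℝ}
    (hx : Submodule.span ℝ (range x) = ⊤) (h : ∑ k : Fin (n + 1), extremalCoeff n k • x k = 0) :
    IsBalancedRelation x fun k => extremalCoeff n k where
  span_eq_top := hx
  sum_eq_zero := h
  exists_neg j := by
    have hpred : extremalCoeff n (n - 1) < 0 :=
      extremalCoeff_neg_of_odd (by omega) ⟨n - 1, by omega⟩
    rcases eq_or_ne j 0 with rfl | hj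
    · exact ⟨⟨n - 1, by omega⟩, Fin.ne_of_val_ne (show n - 1 ≠ 0 by omega), hpred⟩
    · exact ⟨0, hj.symm, extremalCoeff_zero_neg n⟩
  exists_pos j := by
    have hpred : 0 < extremalCoeff n (n - 2) :=
      extremalCoeff_pos_of_even (by omega) ⟨n - 1, by omega⟩
    rcases eq_or_ne j (Fin.last n) with rfl | hj
    · exact ⟨⟨n - 2, by omega⟩, Fin.ne_of_val_ne (show n - 2 ≠ n by omega), hpred⟩
    · exact ⟨Fin.last n, hj.symm, extremalCoeff_pos_of_even (k := n) (by omega) (Even.add_self n)⟩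

theorem exists_isWielandtOrbit_isBalancedRelation (hn : 3 ≤ n) :
    ∃ (A : Matrix (Fin n) (Fin n) ℝ) (y : Fin n → ℝ) (r : ℝ),
      IsWielandtOrbit (ConeGen fun k : Fin (n + 1) => A ^ (k : ℕ) *ᵥ y) A y 2 r ∧
      IsBalancedRelation (fun k : Fin (n + 1) => A ^ (k : ℕ) *ᵥ y) fun k => extremalCoeff n k := by
  have hn0 : 0 < n := by omega
  obtain ⟨A, y, hspan, hrel⟩ :=
    exists_spanning_pow_mulVec_relation hn0 (extremalCoeff_self hn0)
  have hpow := pow_succ_mulVec_eq_of_relation hn0 (extremalCoeff_self hn0) hrel fun k hk _ => by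
    rw [extremalCoeff_of_pos hk, extremalCoeff_of_pos k.add_one_pos, ← add_assoc, pow_succ]
    ring
  rw [extremalCoeff_zero, neg_neg] at hpow
  refine ⟨A, y, _, ⟨rfl, two_pos, ?_, hpow⟩,
    isBalancedRelation_extremalCoeff hn hspan ((Finset.sum_range _).symm.trans hrel)⟩
  rw [extremalCoeff_of_pos one_pos]
  rcases neg_one_pow_eq_or ℝ (n + 1) with h | h <;> rw [h] <;> norm_num

theorem IsWielandtOrbit.notMem_interior_of_isBalancedRelation {A : Matrix (Fin n) (Fin n) ℝ}
    {y : Fin n → ℝ} {p r : ℝ} {K : Set (Fin n → ℝ)} (h : IsWielandtOrbit K A y p r)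
    {α : Fin (n + 1) → ℝ} (hα : IsBalancedRelation (fun k : Fin (n + 1) => A ^ (k : ℕ) *ᵥ y) α)
    {k j : ℕ} (hjk : j + k ≤ n) {s t : Fin (n + 1)} (hs : α s < 0) (ht : 0 < α t)
    (hs' : (s : ℕ) ∉ Icc j (j + k)) (ht' : (t : ℕ) ∉ Icc j (j + k)) :
    A ^ ((n + 1) * k + j) *ᵥ y ∉ interior K := by
  rw [h.eq_coneGen]
  refine hα.notMem_interior_of_mem_span hs ht ?_
  rw [pow_mul_add_mulVec h.pow_succ_mulVec]
  refine Submodule.sum_mem _ fun i hi => Submodule.smul_mem _ _ (Submodule.subset_span ?_)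
  have hik := Finset.mem_range.1 hi
  refine ⟨⟨j + i, by omega⟩, ?_, rfl⟩
  rintro (heq | heq)
  · exact hs' (heq ▸ ⟨Nat.le_add_right j i, by dsimp only; omega⟩)
  · exact ht' (heq ▸ ⟨Nat.le_add_right j i, by dsimp only; omega⟩)

theorem exists_expnt_eq_of_odd (hn : 3 ≤ n) (hodd : Odd n) :
    ∃ (K : Set (Fin n → ℝ)) (A : Matrix (Fin n) (Fin n) ℝ),
      MemP (n + 1) K ∧ KPrimitive K A ∧ expnt K A = n * (n - 1) + 1 := by
  obtain ⟨A, y, r, horbit, hrel⟩ := exists_isWielandtOrbit_isBalancedRelation hn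
  have hn0 : 0 < n := by omega
  have hA := horbit.kPrimitive hn0 hrel.isProperCone
  have hpos := hA.kPositive_of_memP (by omega) hrel.memP
  have hnot := horbit.notMem_interior_of_isBalancedRelation hrel (k := n - 2) (j := 2) (by omega)
    (s := 0) (t := ⟨1, by omega⟩) (extremalCoeff_zero_neg n)
    (extremalCoeff_pos_of_even one_pos hodd.add_one) (by simp) (by simp)
  refine ⟨_, A, hrel.memP, hA, hA.expnt_eq hrel.isProperCone (Nat.succ_pos _) ?_
    (hrel.irredundant.isExtremeVec hrel.isProperCone 0).1 (hrel.irredundant.ne_zero 0) ?_⟩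
  · rwa [add_tsub_cancel_right, mul_comm] at hpos
  · rw [mul_pred_eq_succ_mul_add_two (by omega), Nat.add_sub_cancel, Fin.val_zero, pow_zero,
      one_mulVec]
    exact hnot

theorem exists_expnt_eq_of_even (hn : 3 ≤ n) (heven : Even n) :
    ∃ (K : Set (Fin n → ℝ)) (A : Matrix (Fin n) (Fin n) ℝ),
      MemP (n + 1) K ∧ KPrimitive K A ∧ expnt K A = n * (n - 1) := by
  obtain ⟨A, y, r, horbit, hrel⟩ := exists_isWielandtOrbit_isBalancedRelation hn
  have hn0 : 0 < n := by omega
  have hA := horbit.kPrimitive hn0 hrel.isProperCone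
  have hpos := hA.kPositive_of_memP_of_even hn heven hrel.memP
  have hnot := horbit.notMem_interior_of_isBalancedRelation hrel (k := n - 2) (j := 1) (by omega)
    (s := 0) (t := Fin.last n) (extremalCoeff_zero_neg n)
    (extremalCoeff_pos_of_even hn0 (Even.add_self n)) (by simp)
    fun h => absurd (show n ≤ 1 + (n - 2) from h.2) (by omega)
  refine ⟨_, A, hrel.memP, hA, hA.expnt_eq hrel.isProperCone
    (Nat.mul_pos hn0 (Nat.sub_pos_of_lt (by omega))) hpos
    (hrel.irredundant.isExtremeVec hrel.isProperCone 0).1 (hrel.irredundant.ne_zero 0) ?_⟩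
  rw [mul_pred_eq_succ_mul_add_two (by omega), Fin.val_zero, pow_zero, one_mulVec]
  exact hnot

end Extremal

/-- The maximum of `γ(K)` over all `n`-dimensional minimal cones (`K ∈ P(n+1,n)`)
is `n² - n + 1` if `n` is odd and `n² - n` if `n` is even. -/
theorem stmt_4 (n : ℕ) (hn : 3 ≤ n) :
    (Odd n →
      (∀ (K : Set (Fin n → ℝ)) (A : Matrix (Fin n) (Fin n) ℝ),
        MemP (n + 1) K → KPrimitive K A → expnt K A ≤ n ^ 2 - n + 1) ∧
      (∃ (K : Set (Fin n → ℝ)) (A : Matrix (Fin n) (Fin n) ℝ),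
        MemP (n + 1) K ∧ KPrimitive K A ∧ expnt K A = n ^ 2 - n + 1)) ∧
    (Even n →
      (∀ (K : Set (Fin n → ℝ)) (A : Matrix (Fin n) (Fin n) ℝ),
        MemP (n + 1) K → KPrimitive K A → expnt K A ≤ n ^ 2 - n) ∧
      (∃ (K : Set (Fin n → ℝ)) (A : Matrix (Fin n) (Fin n) ℝ),
        MemP (n + 1) K ∧ KPrimitive K A ∧ expnt K A = n ^ 2 - n)) := by
  have hsq : n ^ 2 - n = n * (n - 1) := by rw [Nat.mul_sub, mul_one, pow_two]
  rw [hsq]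
  refine ⟨fun hodd => ⟨fun K A hK hA => ?_, exists_expnt_eq_of_odd hn hodd⟩,
    fun heven => ⟨fun K A hK hA => ?_, exists_expnt_eq_of_even hn heven⟩⟩
  · refine Nat.sInf_le ⟨Nat.succ_pos _, ?_⟩
    simpa only [add_tsub_cancel_right, mul_comm] using hA.kPositive_of_memP (by omega) hK
  · exact Nat.sInf_le ⟨Nat.mul_pos (by omega) (by omega), hA.kPositive_of_memP_of_even hn heven hK⟩
end
end
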